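/- arXiv:0710.4324 — 10 statements merged into one kernel-verified Lean document; each statement's English description precedes it below -/
import Mathlib

section
/- Let n > 1 be a real number and let β be any real number with β < ((n−1)/n)^{n−1}. Then the supremum, over all nonnegative u ∈ C¹([0,∞)) with u(0) = 0 and ∫₀^∞ |u'(r)|ⁿ dr < ∞, of the quantity ln(∫₀^∞ e^{n(u(r)−r)} dr) − β · ∫₀^∞ |u'(r)|ⁿ dr is +∞. In other words, for no constant C does the inequality ln(∫₀^∞ e^{n(u−r)} dr) ≤ β ∫₀^∞ |u'|ⁿ dr + C hold for all such u; hence the coefficient ((n−1)/n)^{n−1} is optimal. -/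
open MeasureTheory Real Set

/-- **Optimality of the coefficient `((n-1)/n)^{n-1}`** (Li–Zhu, Theorem 1, sharpness).
For real `n > 1` and any `β < ((n-1)/n)^{n-1}`, no constant `C` makes the inequality
`ln ∫₀^∞ e^{n(u-r)} dr ≤ β ∫₀^∞ |u'|ⁿ dr + C` hold over all nonnegative `C¹`
functions `u` on `[0,∞)` with `u 0 = 0` and `∫₀^∞ |u'|ⁿ < ∞`: the supremum of
`ln ∫₀^∞ e^{n(u-r)} dr - β ∫₀^∞ |u'|ⁿ dr` over this class is `+∞`. -/
theorem coefficient_optimal (n β : ℝ) (hn : 1 < n)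
    (hβ : β < ((n - 1) / n) ^ (n - 1)) (C : ℝ) :
    ∃ u u' : ℝ → ℝ,
      (∀ r ∈ Set.Ici (0 : ℝ), HasDerivWithinAt u (u' r) (Set.Ici 0) r) ∧
      ContinuousOn u' (Set.Ici 0) ∧
      (∀ r ∈ Set.Ici (0 : ℝ), 0 ≤ u r) ∧
      u 0 = 0 ∧
      IntegrableOn (fun r => |u' r| ^ n) (Set.Ioi 0) ∧
      IntegrableOn (fun r => Real.exp (n * (u r - r))) (Set.Ioi 0) ∧
      C < Real.log (∫ r in Set.Ioi (0 : ℝ), Real.exp (n * (u r - r))) -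
            β * ∫ r in Set.Ioi (0 : ℝ), |u' r| ^ n := by
  have hn0 : 0 < n := by linarith
  have hn1 : 0 < n - 1 := by linarith
  obtain ⟨p, hp⟩ : ∃ p, p = n / (n - 1) := ⟨_, rfl⟩
  have hp0 : 0 < p := by rw [hp]; positivity
  have hpn : (n - 1) * p = n := by rw [hp]; field_simp
  have hpp : ((n - 1) / n) ^ (n - 1) * p ^ (n - 1) = 1 := by
    rw [← Real.mul_rpow (by positivity) hp0.le, hp]
    have : (n - 1) / n * (n / (n - 1)) = 1 := by field_simp
    rw [this, Real.one_rpow]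
  have hq : 0 < p ^ (n - 1) := Real.rpow_pos_of_pos hp0 _
  obtain ⟨b, hb⟩ : ∃ b, b = max β 0 := ⟨_, rfl⟩
  have hb0 : 0 ≤ b := hb ▸ le_max_right _ _
  have hbβ : β ≤ b := hb ▸ le_max_left _ _
  have hbl : b < ((n - 1) / n) ^ (n - 1) := by
    rw [hb]; exact max_lt hβ (by positivity)
  have hδ : 0 < 1 - b * p ^ (n - 1) := by
    have := mul_lt_mul_of_pos_right hbl hq
    linarith
  obtain ⟨δ, hδe⟩ : ∃ δ, δ = 1 - b * p ^ (n - 1) := ⟨_, rfl⟩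
  rw [← hδe] at hδ
  obtain ⟨l, hl⟩ : ∃ l, l = Real.exp (-((C + Real.log n) / δ)) := ⟨_, rfl⟩
  have hl0 : 0 < l := hl ▸ Real.exp_pos _
  obtain ⟨L, hL⟩ : ∃ L, L = Real.log (1 + l) - Real.log l := ⟨_, rfl⟩
  have hLM : (C + Real.log n) / δ < L := by
    have h1 : Real.log l = -((C + Real.log n) / δ) := by rw [hl, Real.log_exp]
    have h2 : 0 < Real.log (1 + l) := Real.log_pos (by linarith)
    linarith
  have hD : ∀ r : ℝ, 0 < l + Real.exp (-p * r) := fun r => by positivity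
  obtain ⟨u, hu⟩ : ∃ u : ℝ → ℝ, u = fun r => Real.log (1 + l) - Real.log (l + Real.exp (-p * r)) :=
    ⟨_, rfl⟩
  obtain ⟨w, hw⟩ : ∃ w : ℝ → ℝ, w = fun r => Real.exp (-p * r) / (l + Real.exp (-p * r)) :=
    ⟨_, rfl⟩
  have hw0 : ∀ r, 0 ≤ w r := fun r => by rw [hw]; have := hD r; positivity
  have hw1 : ∀ r, w r ≤ 1 := fun r => by
    rw [hw]; exact (div_le_one (hD r)).2 (by linarith)
  have hder : ∀ r, HasDerivAt u (p * w r) r := by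
    intro r
    have h1 : HasDerivAt (fun r : ℝ => -p * r) (-p) r := by
      simpa using (hasDerivAt_id r).const_mul (-p)
    have h2 := ((h1.exp.const_add l).log (hD r).ne').const_sub (Real.log (1 + l))
    rw [hu, hw]
    refine HasDerivAt.congr_deriv h2 ?_
    ring
  have hwc : Continuous w := by
    rw [hw]
    exact Continuous.div (by fun_prop) (by fun_prop) (fun r => (hD r).ne')
  have hu0 : u 0 = 0 := by simp [hu, add_comm]
  have hlim : Filter.Tendsto u Filter.atTop (nhds L) := by
    have h1 : Filter.Tendsto (fun r : ℝ => Real.exp (-p * r)) Filter.atTop (nhds 0) :=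
      Real.tendsto_exp_atBot.comp
        (Filter.tendsto_id.const_mul_atTop_of_neg (by linarith : -p < 0))
    have h2 : Filter.Tendsto (fun r : ℝ => l + Real.exp (-p * r)) Filter.atTop (nhds l) := by
      simpa using h1.const_add l
    rw [hu, hL]
    exact (h2.log hl0.ne').const_sub _
  have hpw : ∀ r, 0 ≤ p * w r := fun r => mul_nonneg hp0.le (hw0 r)
  have hI1 : IntegrableOn (fun r => p * w r) (Set.Ioi 0) :=
    integrableOn_Ioi_deriv_of_nonneg' (fun r _ => hder r) (fun r _ => hpw r) hlim
  have hI1v : ∫ r in Set.Ioi (0 : ℝ), p * w r = L := by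
    rw [integral_Ioi_of_hasDerivAt_of_nonneg' (fun r _ => hder r) (fun r _ => hpw r) hlim, hu0,
      sub_zero]
  have hbd : ∀ r, |p * w r| ^ n ≤ p ^ (n - 1) * (p * w r) := by
    intro r
    rw [abs_of_nonneg (hpw r), Real.mul_rpow hp0.le (hw0 r)]
    have h1 : w r ^ n ≤ w r := by
      simpa using Real.rpow_le_rpow_of_exponent_ge' (hw0 r) (hw1 r) zero_le_one hn.le
    have h2 : p ^ n = p ^ (n - 1) * p := by
      rw [← Real.rpow_add_one hp0.ne']; ring_nf
    rw [h2, mul_assoc]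
    gcongr
  have hE : IntegrableOn (fun r => |p * w r| ^ n) (Set.Ioi 0) := by
    refine Integrable.mono' (hI1.const_mul (p ^ (n - 1))) ?_ ?_
    · refine Continuous.aestronglyMeasurable ?_
      exact ((continuous_const.mul hwc).abs).rpow_const (fun _ => Or.inr hn0.le)
    · refine Filter.Eventually.of_forall fun r => ?_
      rw [Real.norm_of_nonneg (by positivity)]
      exact hbd r
  have hEv : ∫ r in Set.Ioi (0 : ℝ), |p * w r| ^ n ≤ p ^ (n - 1) * L := by
    rw [← hI1v, ← integral_const_mul]
    exact integral_mono hE (hI1.const_mul _) hbd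
  have hE0 : 0 ≤ ∫ r in Set.Ioi (0 : ℝ), |p * w r| ^ n :=
    integral_nonneg fun r => by positivity
  have hF : ∀ r, HasDerivAt
      (fun r => -((l + 1) / (n * l)) * Real.exp ((n - 1) * u r - n * r))
      (Real.exp (n * (u r - r))) r := by
    intro r
    have h1 : HasDerivAt (fun r => (n - 1) * u r - n * r) ((n - 1) * (p * w r) - n) r := by
      have h0 : HasDerivAt (fun r : ℝ => n * r) n r := by
        simpa using (hasDerivAt_id r).const_mul n
      exact ((hder r).const_mul (n - 1)).sub h0
    have h2 := h1.exp.const_mul (-((l + 1) / (n * l)))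
    refine HasDerivAt.congr_deriv h2 ?_
    symm
    have h3 : n * (u r - r) = ((n - 1) * u r - n * r) + u r := by ring
    have h4 : Real.exp (u r) = (1 + l) / (l + Real.exp (-p * r)) := by
      rw [hu]; simp only
      rw [Real.exp_sub, Real.exp_log (by linarith), Real.exp_log (hD r)]
    have h5 : (n - 1) * (p * w r) - n = n * (w r - 1) := by
      rw [← mul_assoc, hpn]; ring
    have h6 : w r - 1 = -l / (l + Real.exp (-p * r)) := by
      have := (hD r).ne'
      rw [hw]; field_simp; ring
    rw [h3, Real.exp_add, h4, h5, h6]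
    have := (hD r).ne'
    field_simp
    ring
  have hFl : Filter.Tendsto
      (fun r => -((l + 1) / (n * l)) * Real.exp ((n - 1) * u r - n * r)) Filter.atTop (nhds 0) := by
    have h1 : Filter.Tendsto (fun r : ℝ => (n - 1) * u r + (-n) * r) Filter.atTop Filter.atBot :=
      (hlim.const_mul (n - 1)).add_atBot
        (Filter.tendsto_id.const_mul_atTop_of_neg (by linarith : -n < 0))
    have h2 := (Real.tendsto_exp_atBot.comp h1).const_mul (-((l + 1) / (n * l)))
    rw [mul_zero] at h2
    refine h2.congr fun r => ?_
    simp only [Function.comp]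
    ring_nf
  have hJ : IntegrableOn (fun r => Real.exp (n * (u r - r))) (Set.Ioi 0) :=
    integrableOn_Ioi_deriv_of_nonneg' (fun r _ => hF r) (fun r _ => (Real.exp_pos _).le) hFl
  have hJv : ∫ r in Set.Ioi (0 : ℝ), Real.exp (n * (u r - r)) = (l + 1) / (n * l) := by
    rw [integral_Ioi_of_hasDerivAt_of_nonneg' (fun r _ => hF r)
      (fun r _ => (Real.exp_pos _).le) hFl, hu0]
    simp
  refine ⟨u, fun r => p * w r, fun r _ => (hder r).hasDerivWithinAt,
    (continuous_const.mul hwc).continuousOn, ?_, hu0, hE, hJ, ?_⟩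
  · intro r hr
    have hr : 0 ≤ r := hr
    have : Real.exp (-p * r) ≤ 1 := Real.exp_le_one_iff.2 (by nlinarith)
    rw [hu]
    exact sub_nonneg.2 (Real.log_le_log (hD r) (by linarith))
  · have hlog : Real.log ((l + 1) / (n * l)) = L - Real.log n := by
      rw [Real.log_div (by positivity) (by positivity), Real.log_mul hn0.ne' hl0.ne', hL,
        add_comm l 1]
      ring
    rw [hJv, hlog]
    have h1 := mul_le_mul_of_nonneg_right hbβ hE0
    have h2 := mul_le_mul_of_nonneg_left hEv hb0
    have h3 : C + Real.log n < L * δ := (div_lt_iff₀ hδ).1 hLM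
    rw [hδe] at h3
    simp only
    nlinarith
end

section
/- Let n > 1 be a real number and let β₀ > ((n−1)/n)^{(n−1)/n}. Then there is a constant c₁(β₀) (depending only on n and β₀) such that for every u ∈ C¹([0,∞)) with u(0) = 0 and ∫₀^∞ |u'(r)|ⁿ dr < ∞, one has ln(∫₀^∞ e^{n(u(r)−r)} dr) ≤ β₀ⁿ · ∫₀^∞ |u'(r)|ⁿ dr + c₁(β₀). In fact one may take c₁(β₀) = ln(1/(n − (n−1)β₀^{−n/(n−1)})). -/
open MeasureTheory Real Set

/-- **Rough inequality** (Li–Zhu, Proposition 1, part 1).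
For real `n > 1` and `β₀ > ((n-1)/n)^{(n-1)/n}`, with
`c₁(β₀) = ln (1/(n - (n-1) β₀^{-n/(n-1)}))`, every `C¹` function `u` on `[0,∞)`
with `u 0 = 0` and `∫₀^∞ |u'|ⁿ < ∞` satisfies
`ln ∫₀^∞ e^{n(u-r)} dr ≤ β₀ⁿ ∫₀^∞ |u'|ⁿ dr + c₁(β₀)`. -/
theorem rough_exponential_hardy_inequality (n β₀ : ℝ) (hn : 1 < n)
    (hβ₀ : ((n - 1) / n) ^ ((n - 1) / n) < β₀)
    (u u' : ℝ → ℝ)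
    (hderiv : ∀ r ∈ Set.Ici (0 : ℝ), HasDerivWithinAt u (u' r) (Set.Ici 0) r)
    (hcont : ContinuousOn u' (Set.Ici 0))
    (hu0 : u 0 = 0)
    (hint : IntegrableOn (fun r => |u' r| ^ n) (Set.Ioi 0)) :
    IntegrableOn (fun r => Real.exp (n * (u r - r))) (Set.Ioi 0) ∧
    Real.log (∫ r in Set.Ioi (0 : ℝ), Real.exp (n * (u r - r))) ≤
      β₀ ^ n * (∫ r in Set.Ioi (0 : ℝ), |u' r| ^ n) +
        Real.log (1 / (n - (n - 1) * β₀ ^ (-(n / (n - 1))))) := by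
  have hn1 : 0 < n - 1 := by linarith
  have hn0 : 0 < n := by linarith
  have hbase : 0 < (n - 1) / n := div_pos hn1 hn0
  have hβ : 0 < β₀ := lt_trans (rpow_pos_of_pos hbase _) hβ₀
  set B : ℝ := β₀ ^ (-(n / (n - 1))) with hB
  have hBpos : 0 < B := rpow_pos_of_pos hβ _
  have hD : 0 < n - (n - 1) * B := by
    have h1 : B < (((n - 1) / n) ^ ((n - 1) / n)) ^ (-(n / (n - 1))) :=
      Real.rpow_lt_rpow_of_neg (rpow_pos_of_pos hbase _) hβ₀ (by
        have : 0 < n / (n - 1) := div_pos hn0 hn1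
        linarith)
    rw [← Real.rpow_mul hbase.le] at h1
    have h2 : (n - 1) / n * (-(n / (n - 1))) = -1 := by field_simp
    rw [h2, Real.rpow_neg_one, inv_div, lt_div_iff₀ hn1] at h1
    linarith
  set D : ℝ := n - (n - 1) * B with hDdef
  have hyoung : ∀ a : ℝ, n * a ≤ β₀ ^ n * |a| ^ n + (n - 1) * B := by
    intro a
    have hb := one_add_mul_self_le_rpow_one_add (s := |a| / B - 1)
      (by have : 0 ≤ |a| / B := by positivity
          linarith) hn.le
    rw [add_sub_cancel, Real.div_rpow (abs_nonneg a) hBpos.le] at hb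
    have hBn : B / B ^ n = β₀ ^ n := by
      have e1 : B / B ^ n = B ^ (1 - n) := by
        rw [Real.rpow_sub hBpos, Real.rpow_one]
      rw [e1, hB, ← Real.rpow_mul hβ.le]
      congr 1
      field_simp
      ring
    have hm := mul_le_mul_of_nonneg_left hb hBpos.le
    have e2 : B * (|a| ^ n / B ^ n) = β₀ ^ n * |a| ^ n := by
      rw [← hBn]; ring
    have e3 : B * (1 + n * (|a| / B - 1)) = B + n * |a| - n * B := by
      field_simp
      ring
    rw [e2, e3] at hm
    have := mul_le_mul_of_nonneg_left (le_abs_self a) hn0.le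
    linarith
  set I : ℝ := ∫ r in Set.Ioi (0 : ℝ), |u' r| ^ n with hI
  have hucont : ContinuousOn u (Set.Ici 0) := fun r hr => (hderiv r hr).continuousWithinAt
  have hub : ∀ r ∈ Set.Ioi (0 : ℝ), n * u r ≤ β₀ ^ n * I + (n - 1) * B * r := by
    intro r hr
    have hr0 : (0 : ℝ) ≤ r := le_of_lt hr
    have hsub : Set.Icc 0 r ⊆ Set.Ici (0 : ℝ) := fun x hx => hx.1
    have hii : IntervalIntegrable u' volume 0 r :=
      (hcont.mono hsub).intervalIntegrable_of_Icc hr0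
    have hftc : ∫ x in (0 : ℝ)..r, u' x = u r - u 0 :=
      intervalIntegral.integral_eq_sub_of_hasDerivAt_of_le hr0 (hucont.mono hsub)
        (fun x hx => (hderiv x hx.1.le).hasDerivAt (Ici_mem_nhds hx.1)) hii
    have hpi : IntervalIntegrable (fun x => |u' x| ^ n) volume 0 r := by
      rw [intervalIntegrable_iff_integrableOn_Ioc_of_le hr0]
      exact hint.mono_set Ioc_subset_Ioi_self
    have hle : ∫ x in (0 : ℝ)..r, n * u' x ≤
        ∫ x in (0 : ℝ)..r, (β₀ ^ n * |u' x| ^ n + (n - 1) * B) :=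
      intervalIntegral.integral_mono_on hr0 (hii.const_mul n)
        ((hpi.const_mul _).add intervalIntegrable_const) (fun x _ => hyoung (u' x))
    rw [intervalIntegral.integral_const_mul, hftc, intervalIntegral.integral_add
      (hpi.const_mul _) intervalIntegrable_const, intervalIntegral.integral_const_mul,
      intervalIntegral.integral_const, hu0] at hle
    have hIle : ∫ x in (0 : ℝ)..r, |u' x| ^ n ≤ I := by
      rw [intervalIntegral.integral_of_le hr0]
      exact setIntegral_mono_set hint (ae_of_all _ fun x => by positivity)
        (Ioc_subset_Ioi_self.eventuallyLE)
    have := mul_le_mul_of_nonneg_left hIle (rpow_pos_of_pos hβ n).le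
    simp only [smul_eq_mul, sub_zero] at hle
    linarith
  have hpt : ∀ r ∈ Set.Ioi (0 : ℝ),
      Real.exp (n * (u r - r)) ≤ Real.exp (β₀ ^ n * I) * Real.exp (-D * r) := by
    intro r hr
    rw [← Real.exp_add]
    apply Real.exp_le_exp.mpr
    have := hub r hr
    rw [hDdef]
    linarith
  have hgi : IntegrableOn (fun r => Real.exp (β₀ ^ n * I) * Real.exp (-D * r)) (Set.Ioi 0) :=
    (exp_neg_integrableOn_Ioi 0 hD).const_mul _
  have hfi : IntegrableOn (fun r => Real.exp (n * (u r - r))) (Set.Ioi 0) := by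
    refine Integrable.mono' hgi ?_ ?_
    · refine ContinuousOn.aestronglyMeasurable ?_ measurableSet_Ioi
      have := hucont.mono Ioi_subset_Ici_self
      fun_prop
    · filter_upwards [ae_restrict_mem measurableSet_Ioi] with r hr
      rw [Real.norm_of_nonneg (Real.exp_pos _).le]
      exact hpt r hr
  refine ⟨hfi, ?_⟩
  have hpos : 0 < ∫ r in Set.Ioi (0 : ℝ), Real.exp (n * (u r - r)) := by
    have : NeZero (volume.restrict (Set.Ioi (0 : ℝ))) := ⟨by simp⟩
    exact integral_exp_pos hfi
  have hval : ∫ r in Set.Ioi (0 : ℝ), Real.exp (β₀ ^ n * I) * Real.exp (-D * r)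
      = Real.exp (β₀ ^ n * I) * (1 / D) := by
    rw [integral_const_mul, integral_exp_mul_Ioi (by linarith) 0]
    simp [neg_div_neg_eq]
  calc Real.log (∫ r in Set.Ioi (0 : ℝ), Real.exp (n * (u r - r)))
      ≤ Real.log (Real.exp (β₀ ^ n * I) * (1 / D)) := by
        apply Real.log_le_log hpos
        rw [← hval]
        exact setIntegral_mono_on hfi hgi measurableSet_Ioi hpt
    _ = β₀ ^ n * I + Real.log (1 / D) := by
        rw [Real.log_mul (Real.exp_pos _).ne' (by positivity), Real.log_exp]
end

section
/- Let n > 1 be a real number, let β₀ > ((n−1)/n)^{(n−1)/n}, and set c = n − (n−1)β₀^{−n/(n−1)} > 0. Then for every u ∈ C¹([0,∞)) with u(0) = 0 and ∫₀^∞ |u'(r)|ⁿ dr < ∞, and every R ≥ 0, ∫_R^∞ e^{n(u(r)−r)} dr ≤ exp(β₀ⁿ · ∫₀^∞ |u'(r)|ⁿ dr) · e^{−cR}/c. -/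
open MeasureTheory Real Set

/-- **Tail estimate** (Li–Zhu, Remark 1, inequality (2.4)).
For real `n > 1`, `β₀ > ((n-1)/n)^{(n-1)/n}` and `c = n - (n-1) β₀^{-n/(n-1)} > 0`,
every `C¹` function `u` on `[0,∞)` with `u 0 = 0` and `∫₀^∞ |u'|ⁿ < ∞` satisfies,
for every `R ≥ 0`,
`∫_R^∞ e^{n(u-r)} dr ≤ exp (β₀ⁿ ∫₀^∞ |u'|ⁿ dr) · e^{-cR}/c`. -/
theorem tail_estimate (n β₀ : ℝ) (hn : 1 < n)
    (hβ₀ : ((n - 1) / n) ^ ((n - 1) / n) < β₀)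
    (u u' : ℝ → ℝ)
    (hderiv : ∀ r ∈ Set.Ici (0 : ℝ), HasDerivWithinAt u (u' r) (Set.Ici 0) r)
    (hcont : ContinuousOn u' (Set.Ici 0))
    (hu0 : u 0 = 0)
    (hint : IntegrableOn (fun r => |u' r| ^ n) (Set.Ioi 0))
    (R : ℝ) (hR : 0 ≤ R) :
    ∫⁻ r in Set.Ioi R, ENNReal.ofReal (Real.exp (n * (u r - r))) ≤
      ENNReal.ofReal
        (Real.exp (β₀ ^ n * ∫ r in Set.Ioi (0 : ℝ), |u' r| ^ n) *
          Real.exp (-((n - (n - 1) * β₀ ^ (-(n / (n - 1)))) * R)) /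
            (n - (n - 1) * β₀ ^ (-(n / (n - 1))))) := by
  have hn0 : 0 < n - 1 := by linarith
  have hnp : 0 < n := by linarith
  have hx : 0 < (n - 1) / n := by positivity
  have hβ : 0 < β₀ := lt_trans (rpow_pos_of_pos hx _) hβ₀
  set K := β₀ ^ (-(n / (n - 1))) with hK
  have hc : 0 < n - (n - 1) * K := by
    have h1 : K < (((n - 1) / n) ^ ((n - 1) / n)) ^ (-(n / (n - 1))) :=
      Real.rpow_lt_rpow_of_neg (rpow_pos_of_pos hx _) hβ₀ (by
        have : 0 < n / (n - 1) := by positivity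
        linarith)
    rw [← Real.rpow_mul hx.le] at h1
    have h2 : (n - 1) / n * -(n / (n - 1)) = -1 := by
      field_simp
    rw [h2, Real.rpow_neg_one, inv_div] at h1
    have h3 := (lt_div_iff₀ hn0).1 h1
    linarith
  set c := n - (n - 1) * K with hcdef
  set I := ∫ r in Set.Ioi (0 : ℝ), |u' r| ^ n with hI
  have young : ∀ x : ℝ, n * x ≤ β₀ ^ n * |x| ^ n + (n - 1) * K := by
    intro x
    have hpq : n.HolderConjugate (n / (n - 1)) := Real.HolderConjugate.conjExponent hn
    have h := Real.young_inequality_of_nonneg (a := β₀ * |x|) (b := β₀⁻¹)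
      (by positivity) (by positivity) hpq
    rw [Real.mul_rpow hβ.le (abs_nonneg x), Real.inv_rpow hβ.le, ← Real.rpow_neg hβ.le, ← hK] at h
    have e : β₀ * |x| * β₀⁻¹ = |x| := by field_simp
    rw [e] at h
    have h' := mul_le_mul_of_nonneg_left h hnp.le
    have e2 : n * (β₀ ^ n * |x| ^ n / n + K / (n / (n - 1)))
        = β₀ ^ n * |x| ^ n + (n - 1) * K := by field_simp
    rw [e2] at h'
    exact le_trans (mul_le_mul_of_nonneg_left (le_abs_self x) hnp.le) h'
  have key : ∀ r, 0 ≤ r → n * (u r - r) ≤ β₀ ^ n * I + -c * r := by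
    intro r hr
    have hsub : Set.Icc 0 r ⊆ Set.Ici (0:ℝ) := fun x hx => hx.1
    have hu'i : IntervalIntegrable u' volume 0 r :=
      ContinuousOn.intervalIntegrable_of_Icc hr (hcont.mono hsub)
    have hftc : ∫ s in (0:ℝ)..r, u' s = u r - u 0 :=
      intervalIntegral.integral_eq_sub_of_hasDerivAt_of_le hr
        (fun x hx => ((hderiv x (hsub hx)).continuousWithinAt).mono hsub)
        (fun x hx => (hderiv x hx.1.le).hasDerivAt (Ici_mem_nhds hx.1)) hu'i
    have hpi : IntervalIntegrable (fun s => |u' s| ^ n) volume 0 r :=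
      (intervalIntegrable_iff_integrableOn_Ioc_of_le hr).2
        (hint.mono_set (fun x hx => hx.1))
    have hm : ∫ s in (0:ℝ)..r, n * u' s
        ≤ ∫ s in (0:ℝ)..r, (β₀ ^ n * |u' s| ^ n + (n - 1) * K) :=
      intervalIntegral.integral_mono_on hr (hu'i.const_mul n)
        ((hpi.const_mul _).add intervalIntegrable_const) (fun s _ => young (u' s))
    rw [intervalIntegral.integral_const_mul, hftc,
      intervalIntegral.integral_add (hpi.const_mul _) intervalIntegrable_const,
      intervalIntegral.integral_const_mul, intervalIntegral.integral_const, hu0] at hm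
    have hle : ∫ s in (0:ℝ)..r, |u' s| ^ n ≤ I := by
      rw [intervalIntegral.integral_of_le hr]
      exact setIntegral_mono_set hint
        (Filter.Eventually.of_forall (fun x => Real.rpow_nonneg (abs_nonneg _) _))
        (HasSubset.Subset.eventuallyLE (fun x hx => hx.1))
    have hb : 0 ≤ β₀ ^ n := by positivity
    have := mul_le_mul_of_nonneg_left hle hb
    simp only [smul_eq_mul] at hm
    rw [hcdef]
    nlinarith
  have hnc : -c < 0 := by linarith
  calc ∫⁻ r in Set.Ioi R, ENNReal.ofReal (Real.exp (n * (u r - r)))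
      ≤ ∫⁻ r in Set.Ioi R, ENNReal.ofReal (Real.exp (β₀ ^ n * I) * Real.exp (-c * r)) := by
        refine setLIntegral_mono' measurableSet_Ioi (fun r hr => ENNReal.ofReal_le_ofReal ?_)
        rw [← Real.exp_add]
        exact Real.exp_le_exp.2 (key r (hR.trans (le_of_lt hr)))
    _ = ENNReal.ofReal (∫ r in Set.Ioi R, Real.exp (β₀ ^ n * I) * Real.exp (-c * r)) := by
        rw [ofReal_integral_eq_lintegral_ofReal]
        · exact (integrableOn_exp_mul_Ioi hnc R).const_mul _
        · exact Filter.Eventually.of_forall (fun x => by positivity)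
    _ ≤ _ := by
        rw [integral_const_mul, integral_exp_mul_Ioi hnc]
        apply le_of_eq
        congr 1
        rw [neg_div_neg_eq, neg_mul, mul_div_assoc]
end

section
/- Let n > 1 be a real number, let a > 0, and let β < n·a^{−1/(n−1)}. Then there exists a constant C (depending only on n, β and a) such that for every nonnegative u ∈ C¹([0,∞)) with u(0) = 0 and ∫₀^∞ |u'(r)|ⁿ dr ≤ a, one has ∫₀^∞ e^{β·u(r)^{n/(n−1)} − nr} dr ≤ C. -/
open MeasureTheory Real Set

lemma moser_pointwise (n a : ℝ) (hn : 1 < n) (ha : 0 < a) (u u' : ℝ → ℝ)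
    (hd : ∀ r ∈ Set.Ici (0 : ℝ), HasDerivWithinAt u (u' r) (Set.Ici 0) r)
    (hc : ContinuousOn u' (Set.Ici 0))
    (hpos : ∀ r ∈ Set.Ici (0 : ℝ), 0 ≤ u r) (h0 : u 0 = 0)
    (hi : IntegrableOn (fun r => |u' r| ^ n) (Set.Ioi 0))
    (hle : (∫ r in Set.Ioi (0 : ℝ), |u' r| ^ n) ≤ a) (r : ℝ) (hr : 0 < r) :
    u r ^ (n / (n - 1)) ≤ a ^ (1 / (n - 1)) * r := by
  have hn0 : 0 < n := by linarith
  have hn1 : 0 < n - 1 := by linarith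
  set q := n / (n - 1) with hq
  have hq0 : 0 < q := by positivity
  have hpq : n.HolderConjugate q := Real.HolderConjugate.conjExponent hn
  have hc' : ContinuousOn u' (Icc 0 r) := hc.mono Icc_subset_Ici_self
  have hftc : ∫ x in (0:ℝ)..r, u' x = u r - u 0 := by
    apply intervalIntegral.integral_eq_sub_of_hasDerivAt_of_le hr.le
    · intro x hx
      exact ((hd x hx.1).continuousWithinAt).mono Icc_subset_Ici_self
    · intro x hx
      exact (hd x hx.1.le).hasDerivAt (Ici_mem_nhds hx.1)
    · apply ContinuousOn.intervalIntegrable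
      rwa [uIcc_of_le hr.le]
  have h1 : u r ≤ ∫ x in Ioc 0 r, |u' x| * 1 := by
    have := intervalIntegral.abs_integral_le_integral_abs (f := u') (μ := volume) hr.le
    rw [hftc, h0, sub_zero, intervalIntegral.integral_of_le hr.le] at this
    simpa using (le_abs_self _).trans this
  have hm : MemLp (fun x => |u' x|) (ENNReal.ofReal n) (volume.restrict (Ioc 0 r)) := by
    have hms : AEStronglyMeasurable (fun x => |u' x|) (volume.restrict (Ioc 0 r)) :=
      ((hc'.mono Ioc_subset_Icc_self).abs).aestronglyMeasurable measurableSet_Ioc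
    rw [← integrable_norm_rpow_iff hms (by simpa using hn0) (by simp),
      ENNReal.toReal_ofReal hn0.le]
    simpa [IntegrableOn] using hi.mono_set (s := Ioc 0 r) Ioc_subset_Ioi_self
  have h2 := integral_mul_le_Lp_mul_Lq_of_nonneg (μ := volume.restrict (Ioc 0 r)) hpq
    (f := fun x => |u' x|) (g := fun _ => (1:ℝ)) (by filter_upwards with x; simp)
    (by filter_upwards with x; simp) hm (memLp_const 1)
  have h3 : ∫ x in Ioc 0 r, |u' x| ^ n ≤ a := by
    refine le_trans ?_ hle
    apply setIntegral_mono_set hi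
    · filter_upwards with x
      simp only [Pi.zero_apply]
      positivity
    · exact Ioc_subset_Ioi_self.eventuallyLE
  have h4 : ∫ x in Ioc 0 r, (1:ℝ) ^ q = r := by simp [hr.le]
  rw [h4] at h2
  have h5 : u r ≤ a ^ (1 / n) * r ^ (1 / q) := by
    refine (h1.trans h2).trans ?_
    gcongr
  calc u r ^ q ≤ (a ^ (1 / n) * r ^ (1 / q)) ^ q := by
        apply Real.rpow_le_rpow (hpos r hr.le) h5 hq0.le
    _ = a ^ (1 / (n - 1)) * r := by
        rw [Real.mul_rpow (by positivity) (by positivity), ← Real.rpow_mul ha.le,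
          ← Real.rpow_mul hr.le, one_div_mul_cancel hq0.ne', Real.rpow_one]
        congr 2
        rw [hq]
        field_simp

/-- **One-dimensional Moser-type inequality** (Li–Zhu, Lemma 1).
For real `n > 1`, `a > 0` and `β < n a^{-1/(n-1)}`, there is a constant `C`
(depending only on `n`, `β`, `a`) such that every nonnegative `C¹` function `u`
on `[0,∞)` with `u 0 = 0` and `∫₀^∞ |u'|ⁿ dr ≤ a` satisfies
`∫₀^∞ e^{β u^{n/(n-1)} - nr} dr ≤ C`. -/
theorem one_dimensional_moser (n a β : ℝ) (hn : 1 < n) (ha : 0 < a)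
    (hβ : β < n * a ^ (-(1 / (n - 1)))) :
    ∃ C : ℝ, ∀ u u' : ℝ → ℝ,
      (∀ r ∈ Set.Ici (0 : ℝ), HasDerivWithinAt u (u' r) (Set.Ici 0) r) →
      ContinuousOn u' (Set.Ici 0) →
      (∀ r ∈ Set.Ici (0 : ℝ), 0 ≤ u r) →
      u 0 = 0 →
      IntegrableOn (fun r => |u' r| ^ n) (Set.Ioi 0) →
      (∫ r in Set.Ioi (0 : ℝ), |u' r| ^ n) ≤ a →
      ∫⁻ r in Set.Ioi (0 : ℝ),
          ENNReal.ofReal (Real.exp (β * u r ^ (n / (n - 1)) - n * r)) ≤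
        ENNReal.ofReal C := by
  set A := a ^ (1 / (n - 1)) with hA
  have hA0 : 0 < A := by positivity
  have hβ' : β * A < n := by
    rw [Real.rpow_neg ha.le, ← hA] at hβ
    rwa [← div_eq_mul_inv, lt_div_iff₀ hA0] at hβ
  set c := n - max β 0 * A with hcdef
  have hc : 0 < c := by
    rcases max_cases β 0 with ⟨h, _⟩ | ⟨h, _⟩ <;> rw [hcdef, h] <;> linarith
  refine ⟨∫ r in Set.Ioi (0:ℝ), Real.exp (-c * r), ?_⟩
  intro u u' hd hcont hpos h0 hi hle
  rw [ofReal_integral_eq_lintegral_ofReal (integrableOn_exp_mul_Ioi (by linarith) 0)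
    (by filter_upwards with x; exact (Real.exp_pos _).le)]
  apply setLIntegral_mono' measurableSet_Ioi
  intro r hr
  apply ENNReal.ofReal_le_ofReal
  apply Real.exp_le_exp.mpr
  have hb := moser_pointwise n a hn ha u u' hd hcont hpos h0 hi hle r hr
  have hu : 0 ≤ u r ^ (n / (n - 1)) := Real.rpow_nonneg (hpos r (Ioi_subset_Ici_self hr)) _
  have e1 : β * u r ^ (n / (n - 1)) ≤ max β 0 * u r ^ (n / (n - 1)) :=
    mul_le_mul_of_nonneg_right (le_max_left _ _) hu
  have e2 : max β 0 * u r ^ (n / (n - 1)) ≤ max β 0 * (A * r) :=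
    mul_le_mul_of_nonneg_left hb (le_max_right _ _)
  rw [hcdef]
  linarith
end

section
/- Let n ≥ 2 be an integer, let Ω ⊂ ℝⁿ be a bounded open set, and let β < n·ω_{n−1}^{1/(n−1)}. Then there exists a constant C(Ω, β), depending only on the Lebesgue measure of Ω and on β, such that for every u ∈ C¹_c(Ω) (continuously differentiable with compact support in Ω) with ∫_Ω |∇u(x)|ⁿ dx ≤ 1, one has ∫_Ω e^{β·|u(x)|^{n/(n−1)}} dx ≤ C(Ω, β). -/
open MeasureTheory Real Set Metric
open scoped ENNReal



theorem moser_polar (n : ℕ) (hn : 2 ≤ n) (g : (EuclideanSpace ℝ (Fin n)) → ℝ≥0∞) (hg : Measurable g) :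
    ∫⁻ z, g z = ∫⁻ θ, (∫⁻ r in Ioi (0:ℝ), ENNReal.ofReal r ^ (n-1) * g (r • (θ : (EuclideanSpace ℝ (Fin n)))))
      ∂(volume : Measure (EuclideanSpace ℝ (Fin n))).toSphere := by
  have : Nontrivial (EuclideanSpace ℝ (Fin n)) := by
    apply Module.nontrivial_of_finrank_pos (R := ℝ); simp; omega
  calc ∫⁻ z, g z = ∫⁻ x : ({(0)}ᶜ : Set (EuclideanSpace ℝ (Fin n))), g x ∂(Measure.comap Subtype.val volume) := by
        rw [lintegral_subtype_comap (measurableSet_singleton _).compl g,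
          restrict_compl_singleton]
    _ = ∫⁻ p, g (p.2.1 • (p.1 : (EuclideanSpace ℝ (Fin n)))) ∂(volume : Measure (EuclideanSpace ℝ (Fin n))).toSphere.prod
          (.volumeIoiPow (Module.finrank ℝ (EuclideanSpace ℝ (Fin n)) - 1)) := by
      rw [← (volume : Measure (EuclideanSpace ℝ (Fin n))).measurePreserving_homeomorphUnitSphereProd.lintegral_comp_emb
        (Homeomorph.measurableEmbedding _)]
      congr 1
      ext x
      congr 1
      rw [← homeomorphUnitSphereProd_symm_apply_coe, Homeomorph.symm_apply_apply]
    _ = _ := by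
      rw [lintegral_prod _ (by fun_prop)]
      congr 1
      ext θ
      simp only [finrank_euclideanSpace, Fintype.card_fin, Measure.volumeIoiPow]
      rw [lintegral_withDensity_eq_lintegral_mul _ (by fun_prop) (by fun_prop)]
      rw [← lintegral_subtype_comap measurableSet_Ioi]
      congr 1
      ext r
      simp [ENNReal.ofReal_pow r.2.out.le]

theorem moser_omega_eq (n : ℕ) : (volume : Measure (EuclideanSpace ℝ (Fin n))).toSphere univ =
    ENNReal.ofReal ((n : ℝ) * (volume (ball (0 : EuclideanSpace ℝ (Fin n)) 1)).toReal) := by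
  rw [Measure.toSphere_apply_univ, ENNReal.ofReal_mul (by positivity), ENNReal.ofReal_toReal
    measure_ball_lt_top.ne]
  simp

/-- integrals of radial kernels -/
theorem moser_radial (n : ℕ) (hn : 2 ≤ n) (g : ℝ → ℝ≥0∞) (hg : Measurable g) :
    ∫⁻ z : (EuclideanSpace ℝ (Fin n)), g ‖z‖ = (volume : Measure (EuclideanSpace ℝ (Fin n))).toSphere univ *
      ∫⁻ r in Ioi (0:ℝ), ENNReal.ofReal r ^ (n-1) * g r := by
  rw [moser_polar n hn _ (by fun_prop), mul_comm, ← lintegral_const]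
  congr 1
  ext θ
  refine setLIntegral_congr_fun measurableSet_Ioi fun r hr => ?_
  have : ‖(θ : (EuclideanSpace ℝ (Fin n)))‖ = 1 := by simp
  simp [norm_smul, this, abs_of_pos hr.out]

theorem moser_repr (n : ℕ) (hn : 2 ≤ n) (u : (EuclideanSpace ℝ (Fin n)) → ℝ) (hu : ContDiff ℝ 1 u) (hc : HasCompactSupport u)
    (x : (EuclideanSpace ℝ (Fin n))) : (volume : Measure (EuclideanSpace ℝ (Fin n))).toSphere univ * ‖u x‖ₑ ≤
      ∫⁻ z, ‖fderiv ℝ u (x + z)‖ₑ * (ENNReal.ofReal ‖z‖ ^ (n-1))⁻¹ := by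
  have hm : Measurable fun z => ‖fderiv ℝ u z‖ₑ := (hu.continuous_fderiv (by simp)).enorm.measurable
  rw [moser_polar n hn _ (by fun_prop), mul_comm, ← lintegral_const]
  refine lintegral_mono fun θ => ?_
  have hθ : ‖(θ : (EuclideanSpace ℝ (Fin n)))‖ = 1 := by simp
  have e1 : ∀ r ∈ Ioi (0:ℝ), ENNReal.ofReal r ^ (n-1) * (‖fderiv ℝ u (x + r • (θ : (EuclideanSpace ℝ (Fin n))))‖ₑ *
      (ENNReal.ofReal ‖r • (θ : (EuclideanSpace ℝ (Fin n)))‖ ^ (n-1))⁻¹) = ‖fderiv ℝ u (x + r • (θ : (EuclideanSpace ℝ (Fin n))))‖ₑ := by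
    intro r hr
    simp only [norm_smul, hθ, Real.norm_eq_abs, abs_of_pos hr.out, mul_one]
    rw [mul_left_comm, ENNReal.mul_inv_cancel, mul_one]
    · exact pow_ne_zero _ (by simpa using hr)
    · simp
  rw [setLIntegral_congr_fun measurableSet_Ioi e1]
  set h : ℝ → ℝ := fun t => u (x - t • (θ : (EuclideanSpace ℝ (Fin n)))) with hh
  have hθ0 : (θ : (EuclideanSpace ℝ (Fin n))) ≠ 0 := by intro h; simp [h] at hθ
  have hd : ∀ t, HasDerivAt h (-(fderiv ℝ u (x - t • (θ : (EuclideanSpace ℝ (Fin n)))) θ)) t := by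
    intro t
    have h1 : HasDerivAt (fun t : ℝ => x - t • (θ : (EuclideanSpace ℝ (Fin n)))) (-(θ : (EuclideanSpace ℝ (Fin n)))) t := by
      simpa using ((hasDerivAt_id t).smul_const (θ : (EuclideanSpace ℝ (Fin n)))).const_sub x
    have := ((hu.differentiable (by simp)) (x - t • (θ : (EuclideanSpace ℝ (Fin n))))).hasFDerivAt.comp_hasDerivAt t h1
    rw [map_neg] at this
    exact this
  have hcd : ContDiff ℝ 1 h := by fun_prop
  have hcs : HasCompactSupport h := by
    apply hc.comp_isClosedEmbedding (g := fun t : ℝ => x - t • (θ : (EuclideanSpace ℝ (Fin n))))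
    have h1 : Topology.IsClosedEmbedding (fun t : ℝ => t • (θ : (EuclideanSpace ℝ (Fin n)))) :=
      isClosedEmbedding_smul_left hθ0
    exact (Homeomorph.subLeft x).isClosedEmbedding.comp h1
  have key := HasCompactSupport.enorm_le_lintegral_Ici_deriv hcd hcs 0
  calc ‖u x‖ₑ = ‖h 0‖ₑ := by simp [hh]
    _ ≤ _ := key
    _ ≤ ∫⁻ y in Iic (0:ℝ), ‖fderiv ℝ u (x + (-y) • (θ : (EuclideanSpace ℝ (Fin n))))‖ₑ := by
      refine lintegral_mono fun y => ?_
      rw [(hd y).deriv, enorm_neg, neg_smul, ← sub_eq_add_neg]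
      have := (fderiv ℝ u (x - y • (θ : (EuclideanSpace ℝ (Fin n))))).le_opNorm θ
      rw [hθ, mul_one] at this
      exact enorm_le_iff_norm_le.2 this
    _ = _ := by
      rw [← lintegral_indicator measurableSet_Iic, ← lintegral_neg_eq_self,
        setLIntegral_congr Ioi_ae_eq_Ici, ← lintegral_indicator measurableSet_Ici]
      congr 1; ext y
      simp [indicator]

theorem moser_young (n : ℕ) (hn : 2 ≤ n) (f k : (EuclideanSpace ℝ (Fin n)) → ℝ≥0∞)
    (hf : Measurable f) (hk : Measurable k) :
    ∫⁻ x, (∫⁻ z, f (x + z) * k z) ^ n ≤ (∫⁻ z, k z) ^ n * ∫⁻ z, f z ^ n := by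
  have hn0 : (n : ℝ) ≠ 0 := by positivity
  have hn1 : (1:ℝ) ≤ n := by exact_mod_cast (by omega : 1 ≤ n)
  have h1 : 0 ≤ 1 / (n:ℝ) := by positivity
  have h2 : 0 ≤ 1 - 1 / (n:ℝ) := by
    rw [sub_nonneg, div_le_one (by positivity)]; exact hn1
  have hpt : ∀ x, (∫⁻ z, f (x + z) * k z) ^ n ≤ (∫⁻ z, f (x + z) ^ n * k z) *
      (∫⁻ z, k z) ^ (n - 1) := by
    intro x
    have hH := ENNReal.lintegral_mul_norm_pow_le (μ := volume)
      (f := fun z => f (x + z) ^ n * k z) (g := k) (by fun_prop) (by fun_prop) h1 h2 (by ring)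
    have e : ∀ z, (f (x + z) ^ n * k z) ^ (1 / (n:ℝ)) * k z ^ (1 - 1 / (n:ℝ)) =
        f (x + z) * k z := by
      intro z
      rw [ENNReal.mul_rpow_of_nonneg _ _ h1, mul_assoc, ← ENNReal.rpow_add_of_nonneg _ _ h1 h2,
        ← ENNReal.rpow_natCast, ← ENNReal.rpow_mul]
      simp [hn0]
    simp only [e] at hH
    calc _ ≤ ((∫⁻ z, f (x + z) ^ n * k z) ^ (1 / (n:ℝ)) * (∫⁻ z, k z) ^ (1 - 1 / (n:ℝ))) ^ n := by
          gcongr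
      _ = _ := by
        rw [mul_pow, ← ENNReal.rpow_natCast, ← ENNReal.rpow_mul, ← ENNReal.rpow_natCast,
          ← ENNReal.rpow_mul, ← ENNReal.rpow_natCast]
        congr 2
        · simp [hn0]
        · rw [Nat.cast_sub (by omega)]; field_simp; simp
  calc _ ≤ ∫⁻ x, (∫⁻ z, f (x + z) ^ n * k z) * (∫⁻ z, k z) ^ (n - 1) := lintegral_mono hpt
    _ = (∫⁻ x, ∫⁻ z, f (x + z) ^ n * k z) * (∫⁻ z, k z) ^ (n - 1) := by
      rw [lintegral_mul_const]
      exact Measurable.lintegral_prod_right' (f := fun p : (EuclideanSpace ℝ (Fin n)) × (EuclideanSpace ℝ (Fin n)) => f (p.1 + p.2) ^ n * k p.2) (by fun_prop)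
    _ = (∫⁻ z, ∫⁻ x, f (x + z) ^ n * k z) * (∫⁻ z, k z) ^ (n - 1) := by
      rw [lintegral_lintegral_swap]
      fun_prop
    _ = (∫⁻ z, (∫⁻ x, f x ^ n) * k z) * (∫⁻ z, k z) ^ (n - 1) := by
      congr 2
      ext z
      rw [lintegral_mul_const _ (by fun_prop), lintegral_add_right_eq_self (fun x => f x ^ n)]
    _ = _ := by
      rw [lintegral_const_mul _ hk, mul_assoc, ← pow_succ', Nat.sub_add_cancel (by omega), mul_comm]

theorem moser_near (n : ℕ) (hn : 2 ≤ n) (δ : ℝ) :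
    ∫⁻ z : (EuclideanSpace ℝ (Fin n)), (ball 0 δ).indicator
      (fun z => (ENNReal.ofReal ‖z‖ ^ (n-1))⁻¹) z =
    (volume : Measure (EuclideanSpace ℝ (Fin n))).toSphere univ * ENNReal.ofReal δ := by
  have := moser_radial n hn ((Iio δ).indicator fun r => (ENNReal.ofReal r ^ (n-1))⁻¹)
    (Measurable.indicator (by fun_prop) measurableSet_Iio)
  convert this using 2
  · ext z; simp [indicator]
  · have e : ∀ r ∈ Ioi (0:ℝ), ENNReal.ofReal r ^ (n - 1) *
      (Iio δ).indicator (fun r => (ENNReal.ofReal r ^ (n-1))⁻¹) r = (Iio δ).indicator 1 r := by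
      intro r hr
      by_cases h : r ∈ Iio δ
      · simp only [indicator_of_mem h]
        rw [ENNReal.mul_inv_cancel]
        · rfl
        · exact pow_ne_zero _ (by simpa using hr)
        · simp
      · simp [indicator_of_notMem h]
    rw [setLIntegral_congr_fun measurableSet_Ioi e, lintegral_indicator_one measurableSet_Iio,
      Measure.restrict_apply measurableSet_Iio, Iio_inter_Ioi]
    simp

theorem moser_mid (n : ℕ) (hn : 2 ≤ n) (k : ℕ) :
    ∫⁻ z : (EuclideanSpace ℝ (Fin n)), (Ico (Real.exp (-k)) 1).indicator
      (fun r => (ENNReal.ofReal r ^ n)⁻¹) ‖z‖ =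
    (volume : Measure (EuclideanSpace ℝ (Fin n))).toSphere univ * k := by
  rw [moser_radial n hn _ (Measurable.indicator (by fun_prop) measurableSet_Ico)]
  congr 1
  have hle : Real.exp (-k) ≤ 1 := by simp
  have hpos := Real.exp_pos (-(k:ℝ))
  have e : ∀ r ∈ Ioi (0:ℝ), ENNReal.ofReal r ^ (n - 1) *
      (Ico (Real.exp (-k)) 1).indicator (fun r => (ENNReal.ofReal r ^ n)⁻¹) r =
        (Ico (Real.exp (-k)) 1).indicator (fun r => ENNReal.ofReal r⁻¹) r := by
      intro r hr
      by_cases h : r ∈ Ico (Real.exp (-k)) 1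
      · simp only [indicator_of_mem h]
        have h0 : ENNReal.ofReal r ≠ 0 := by simpa using hr
        conv_lhs => rw [show n = (n - 1) + 1 by omega, pow_succ]
        rw [Nat.add_sub_cancel, ENNReal.mul_inv (by simp) (by simp), ← mul_assoc,
          ENNReal.mul_inv_cancel (pow_ne_zero _ h0) (by simp), one_mul,
          ENNReal.ofReal_inv_of_pos hr]
      · simp [indicator_of_notMem h]
  rw [setLIntegral_congr_fun measurableSet_Ioi e, lintegral_indicator measurableSet_Ico,
    Measure.restrict_restrict measurableSet_Ico, 
    inter_eq_left.2 (show Ico (Real.exp (-(k:ℝ))) 1 ⊆ Ioi 0 from fun r hr => hpos.trans_le hr.1), setLIntegral_congr Ico_ae_eq_Ioc,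
    ← ofReal_integral_eq_lintegral_ofReal, ← intervalIntegral.integral_of_le hle,
    integral_inv_of_pos hpos one_pos]
  · simp
  · apply IntegrableOn.integrable
    refine IntegrableOn.mono_set (ContinuousOn.integrableOn_Icc ?_) Ioc_subset_Icc_self
    exact continuousOn_inv₀.mono fun r hr => (hpos.trans_le hr.1).ne'
  · filter_upwards [ae_restrict_mem measurableSet_Ioc] with r hr
    exact (inv_pos.2 (hpos.trans hr.1)).le

theorem moser_far (n : ℕ) (hn : 2 ≤ n) (k : ℕ) (Ω : Set (EuclideanSpace ℝ (Fin n)))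
    (hΩ : MeasurableSet Ω) (f : (EuclideanSpace ℝ (Fin n)) → ℝ≥0∞)
    (hf : Measurable f) (hfΩ : ∀ x ∉ Ω, f x = 0) (hf1 : ∫⁻ z, f z ^ n ≤ 1)
    (x : EuclideanSpace ℝ (Fin n)) :
    ∫⁻ z, f (x + z) * (ball 0 (Real.exp (-k)))ᶜ.indicator
      (fun z => (ENNReal.ofReal ‖z‖ ^ (n-1))⁻¹) z ≤
    ((volume : Measure (EuclideanSpace ℝ (Fin n))).toSphere univ * k + volume Ω)
      ^ (((n:ℝ) - 1) / n) := by
  have hn0 : (0:ℝ) < n := by positivity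
  have hn1 : (0:ℝ) < (n:ℝ) - 1 := by
    have : (2:ℝ) ≤ n := by exact_mod_cast hn
    linarith
  have hpq : (n:ℝ).HolderConjugate ((n:ℝ) / ((n:ℝ) - 1)) :=
    Real.HolderConjugate.conjExponent (by linarith)
  set K : EuclideanSpace ℝ (Fin n) → ℝ≥0∞ := (ball 0 (Real.exp (-k)))ᶜ.indicator
      (fun z => (ENNReal.ofReal ‖z‖ ^ (n-1))⁻¹) with hK
  have hKm : Measurable K := Measurable.indicator (by fun_prop) measurableSet_ball.compl
  have hIm : Measurable (Ω.indicator (1 : EuclideanSpace ℝ (Fin n) → ℝ≥0∞)) :=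
    measurable_one.indicator hΩ
  have hH := ENNReal.lintegral_mul_le_Lp_mul_Lq volume hpq (f := fun z => f (x + z))
    (g := fun z => Ω.indicator 1 (x + z) * K z) (by fun_prop) (by fun_prop)
  have e1 : ∀ z, ((fun z => f (x + z)) * (fun z => Ω.indicator 1 (x + z) * K z)) z =
      f (x + z) * K z := by
    intro z
    by_cases h : x + z ∈ Ω
    · simp [h]
    · simp [h, hfΩ _ h]
  simp only [e1] at hH
  refine hH.trans ?_
  have e2 : (∫⁻ z, f (x + z) ^ (n:ℝ)) ^ (1 / (n:ℝ)) ≤ 1 := by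
    apply ENNReal.rpow_le_one _ (by positivity)
    simp only [ENNReal.rpow_natCast]
    rw [lintegral_add_left_eq_self (fun z => f z ^ n)]
    exact hf1
  have e3 : ∀ z, (Ω.indicator 1 (x + z) * K z) ^ ((n:ℝ) / ((n:ℝ) - 1)) ≤
      (Ico (Real.exp (-k)) 1).indicator (fun r => (ENNReal.ofReal r ^ n)⁻¹) ‖z‖ +
        Ω.indicator 1 (x + z) := by
    intro z
    have hq : 0 < (n:ℝ) / ((n:ℝ) - 1) := by positivity
    by_cases h : x + z ∈ Ω
    swap
    · simp [h, hq]
    by_cases hz : z ∈ ball 0 (Real.exp (-k))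
    · simp [hK, hz, hq]
    have hz' : z ∈ (ball (0:EuclideanSpace ℝ (Fin n)) (Real.exp (-k)))ᶜ := hz
    simp only [hK, indicator_of_mem h, indicator_of_mem hz', Pi.one_apply, one_mul]
    have e : ((ENNReal.ofReal ‖z‖ ^ (n-1))⁻¹) ^ ((n:ℝ) / ((n:ℝ) - 1)) =
        (ENNReal.ofReal ‖z‖ ^ n)⁻¹ := by
      rw [ENNReal.inv_rpow, ← ENNReal.rpow_natCast, ← ENNReal.rpow_mul, ← ENNReal.rpow_natCast]
      congr 2
      rw [Nat.cast_sub (by omega)]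
      push_cast
      field_simp
    rw [e]
    have hz2 : Real.exp (-k) ≤ ‖z‖ := by simpa using hz
    by_cases h1 : ‖z‖ < 1
    · rw [indicator_of_mem (show ‖z‖ ∈ Ico (Real.exp (-k)) 1 from ⟨hz2, h1⟩)]
      exact le_self_add
    · refine le_add_left ?_
      rw [ENNReal.inv_le_one]
      apply one_le_pow₀
      rw [← ENNReal.ofReal_one]
      exact ENNReal.ofReal_le_ofReal (not_lt.1 h1)
  have e4 : ∫⁻ z, (Ω.indicator 1 (x + z) * K z) ^ ((n:ℝ) / ((n:ℝ) - 1)) ≤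
      (volume : Measure (EuclideanSpace ℝ (Fin n))).toSphere univ * k + volume Ω := by
    refine (lintegral_mono e3).trans ?_
    rw [lintegral_add_right _ (by fun_prop), moser_mid n hn,
      lintegral_add_left_eq_self (fun z => Ω.indicator 1 z), lintegral_indicator_one hΩ]
  calc _ ≤ 1 * ((volume : Measure (EuclideanSpace ℝ (Fin n))).toSphere univ * k + volume Ω) ^
        (1 / ((n:ℝ) / ((n:ℝ) - 1))) := by gcongr
    _ = _ := by rw [one_mul, one_div_div]

/-- The levels used in the dyadic decomposition. -/
noncomputable def moserLevel (n : ℕ) (w V : ℝ) (k : ℕ) : ℝ :=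
  ((w * k + V) ^ (((n:ℝ) - 1) / n) + 1) / w

theorem moser_level (n : ℕ) (hn : 2 ≤ n) (k : ℕ) (Ω : Set (EuclideanSpace ℝ (Fin n)))
    (hΩ : MeasurableSet Ω) (hΩf : volume Ω ≠ ∞)
    (u : EuclideanSpace ℝ (Fin n) → ℝ) (hu : ContDiff ℝ 1 u) (hc : HasCompactSupport u)
    (hfΩ : ∀ x ∉ Ω, ‖fderiv ℝ u x‖ₑ = 0) (hf1 : ∫⁻ z, ‖fderiv ℝ u z‖ₑ ^ n ≤ 1)
    (w : ℝ) (hw : 0 < w)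
    (hwe : (volume : Measure (EuclideanSpace ℝ (Fin n))).toSphere univ = ENNReal.ofReal w) :
    volume {x | moserLevel n w (volume Ω).toReal k < |u x|} ≤
      ENNReal.ofReal (w ^ n * Real.exp (-k) ^ n) := by
  have hm : Measurable fun z => ‖fderiv ℝ u z‖ₑ := (hu.continuous_fderiv (by simp)).enorm.measurable
  have hn1 : (0:ℝ) ≤ (n:ℝ) - 1 := by
    have : (2:ℝ) ≤ n := by exact_mod_cast hn
    linarith
  set V := (volume Ω).toReal with hV
  have hV0 : 0 ≤ V := ENNReal.toReal_nonneg
  set κ : EuclideanSpace ℝ (Fin n) → ℝ≥0∞ := (ball 0 (Real.exp (-k))).indicator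
      (fun z => (ENNReal.ofReal ‖z‖ ^ (n-1))⁻¹) with hκ
  have hκm : Measurable κ := Measurable.indicator (by fun_prop) measurableSet_ball
  set N : EuclideanSpace ℝ (Fin n) → ℝ≥0∞ := fun x => ∫⁻ z, ‖fderiv ℝ u (x + z)‖ₑ * κ z with hN
  have hNm : Measurable N := Measurable.lintegral_prod_right'
    (f := fun p : (EuclideanSpace ℝ (Fin n)) × (EuclideanSpace ℝ (Fin n)) =>
      ‖fderiv ℝ u (p.1 + p.2)‖ₑ * κ p.2) (by fun_prop)
  have hsub : {x | moserLevel n w V k < |u x|} ⊆ {x | 1 ≤ N x ^ n} := by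
    intro x hx
    simp only [mem_ofPred_eq] at hx ⊢
    apply one_le_pow₀
    have h1 := moser_repr n hn u hu hc x
    have hsplit : ∫⁻ z, ‖fderiv ℝ u (x + z)‖ₑ * (ENNReal.ofReal ‖z‖ ^ (n-1))⁻¹ =
        N x + ∫⁻ z, ‖fderiv ℝ u (x + z)‖ₑ * (ball 0 (Real.exp (-k)))ᶜ.indicator
          (fun z => (ENNReal.ofReal ‖z‖ ^ (n-1))⁻¹) z := by
      rw [hN, ← lintegral_add_left (by fun_prop)]
      congr 1
      ext z
      rw [← mul_add, hκ, indicator_self_add_compl_apply]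
    have h2 := moser_far n hn k Ω hΩ _ hm hfΩ hf1 x
    rw [hsplit, hwe] at h1
    have hA : (ENNReal.ofReal w * k + volume Ω) ^ (((n:ℝ) - 1) / n) =
        ENNReal.ofReal ((w * k + V) ^ (((n:ℝ) - 1) / n)) := by
      rw [← ENNReal.ofReal_rpow_of_nonneg (by positivity) (by positivity),
        ENNReal.ofReal_add (by positivity) hV0, ENNReal.ofReal_mul hw.le, hV,
        ENNReal.ofReal_toReal hΩf, ENNReal.ofReal_natCast]
    rw [hwe, hA] at h2
    by_contra hlt
    rw [not_le] at hlt
    have h3 : ENNReal.ofReal w * ‖u x‖ₑ ≤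
        ENNReal.ofReal (1 + (w * k + V) ^ (((n:ℝ) - 1) / n)) := by
      rw [ENNReal.ofReal_add (by simp) (by positivity), ENNReal.ofReal_one]
      exact h1.trans (add_le_add hlt.le h2)
    rw [Real.enorm_eq_ofReal_abs, ← ENNReal.ofReal_mul hw.le,
      ENNReal.ofReal_le_ofReal_iff (by positivity)] at h3
    rw [moserLevel, div_lt_iff₀ hw] at hx
    linarith
  calc _ ≤ volume {x | 1 ≤ N x ^ n} := measure_mono hsub
    _ ≤ ∫⁻ x, N x ^ n := by
      simpa using mul_meas_ge_le_lintegral (μ := volume) (hNm.pow_const n) 1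
    _ ≤ _ := moser_young n hn _ κ hm hκm
    _ ≤ (∫⁻ z, κ z) ^ n * 1 := by gcongr
    _ = _ := by
      rw [moser_near n hn, hwe, mul_one, ← ENNReal.ofReal_mul hw.le,
        ← ENNReal.ofReal_pow (by positivity), mul_pow]

open Filter Topology in
theorem moser_summable (n : ℕ) (hn : 2 ≤ n) (β w V : ℝ) (hw : 0 < w) (hV : 0 ≤ V)
    (hβ : β < n * w ^ (1 / ((n:ℝ) - 1))) :
    Summable fun k : ℕ => Real.exp (β * moserLevel n w V (k+1) ^ ((n:ℝ) / ((n:ℝ) - 1))) *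
      (w ^ n * Real.exp (-k) ^ n) := by
  have hn0 : (0:ℝ) < n := by positivity
  have hn1 : (0:ℝ) < (n:ℝ) - 1 := by
    have : (2:ℝ) ≤ n := by exact_mod_cast hn
    linarith
  set s := ((n:ℝ) - 1) / n with hs
  set q := (n:ℝ) / ((n:ℝ) - 1) with hq
  have hs0 : 0 < s := by positivity
  have hq0 : 0 < q := by positivity
  have hsq : s * q = 1 := by rw [hs, hq]; field_simp
  have hinv : Tendsto (fun k : ℕ => 1 / (k:ℝ)) atTop (𝓝 0) := tendsto_one_div_atTop_nhds_zero_nat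
  have hlim : Tendsto (fun k : ℕ => moserLevel n w V (k+1) ^ q / k) atTop
      (𝓝 (((w ^ s + 0 ^ s) / w) ^ q)) := by
    have h1 : Tendsto (fun k : ℕ => (((w + (w + V) * (1 / (k:ℝ))) ^ s + (1 / (k:ℝ)) ^ s) / w) ^ q)
        atTop (𝓝 (((w ^ s + 0 ^ s) / w) ^ q)) := by
      have h2 : Tendsto (fun k : ℕ => w + (w + V) * (1 / (k:ℝ))) atTop (𝓝 w) := by
        simpa using (hinv.const_mul (w + V)).const_add w
      exact (((h2.rpow_const (Or.inr hs0.le)).add (hinv.rpow_const (Or.inr hs0.le))).div_const w).rpow_const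
        (Or.inr hq0.le)
    refine h1.congr' ?_
    filter_upwards [eventually_gt_atTop 0] with k hk
    have hk' : (0:ℝ) < k := by exact_mod_cast hk
    have e1 : w + (w + V) * (1 / (k:ℝ)) = (w * ((k + 1 : ℕ) : ℝ) + V) / k := by
      push_cast; field_simp; ring
    have e2 : ((k:ℝ) ^ s) ^ q = k := by rw [← Real.rpow_mul hk'.le, hsq, Real.rpow_one]
    rw [e1, Real.div_rpow (by positivity) hk'.le, Real.div_rpow (by positivity) hk'.le,
      Real.one_rpow, ← add_div, div_right_comm, Real.div_rpow (by positivity) (by positivity), e2]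
    rfl
  have hL : ((w ^ s + 0 ^ s) / w) ^ q = (w ^ (1 / ((n:ℝ) - 1)))⁻¹ := by
    rw [Real.zero_rpow hs0.ne', add_zero, ← Real.rpow_sub_one hw.ne', ← Real.rpow_mul hw.le,
      ← Real.rpow_neg hw.le]
    congr 1
    rw [hs, hq]; field_simp; ring
  rw [hL] at hlim
  have hlim2 := hlim.const_mul β
  have hlt : β * (w ^ (1 / ((n:ℝ) - 1)))⁻¹ < n := by
    rw [← div_eq_mul_inv, div_lt_iff₀ (by positivity)]; exact hβ
  obtain ⟨γ, hγ1, hγ2⟩ := exists_between hlt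
  have hgeo : Summable fun k : ℕ => w ^ n * Real.exp (-(n - γ)) ^ k := by
    apply Summable.mul_left
    apply summable_geometric_of_lt_one (Real.exp_pos _).le
    rw [Real.exp_lt_one_iff]; linarith
  refine summable_of_isBigO_nat hgeo (Asymptotics.IsBigO.of_bound 1 ?_)
  filter_upwards [hlim2.eventually_lt_const hγ1, eventually_gt_atTop 0] with k hk hk0
  have hk' : (0:ℝ) < k := by exact_mod_cast hk0
  rw [one_mul, Real.norm_of_nonneg (by positivity), Real.norm_of_nonneg (by positivity)]
  rw [← mul_div_assoc, div_lt_iff₀ hk'] at hk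
  calc _ ≤ Real.exp (γ * k) * (w ^ n * Real.exp (-k) ^ n) := by gcongr
    _ = _ := by
      rw [mul_left_comm, ← Real.exp_nat_mul, ← Real.exp_nat_mul, ← Real.exp_add]
      congr 2; ring

open Filter Topology in
theorem moserLevel_tendsto (n : ℕ) (hn : 2 ≤ n) (w V : ℝ) (hw : 0 < w) :
    Tendsto (moserLevel n w V) atTop atTop := by
  have hn1 : (0:ℝ) < (n:ℝ) - 1 := by
    have : (2:ℝ) ≤ n := by exact_mod_cast hn
    linarith
  have hs0 : 0 < ((n:ℝ) - 1) / n := by positivity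
  unfold moserLevel
  apply Tendsto.atTop_div_const hw
  apply tendsto_atTop_add_const_right
  apply (tendsto_rpow_atTop hs0).comp
  apply tendsto_atTop_add_const_right
  exact tendsto_natCast_atTop_atTop.const_mul_atTop hw

theorem weak_moser_inequality (n : ℕ) (hn : 2 ≤ n) (β : ℝ)
    (hβ : β < n * ((n : ℝ) *
        (volume (ball (0 : EuclideanSpace ℝ (Fin n)) 1)).toReal) ^
          (1 / ((n : ℝ) - 1))) :
    ∃ C : ℝ → ℝ, ∀ (Ω : Set (EuclideanSpace ℝ (Fin n))),
      IsOpen Ω → Bornology.IsBounded Ω →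
      ∀ u : EuclideanSpace ℝ (Fin n) → ℝ,
        ContDiff ℝ 1 u → HasCompactSupport u → tsupport u ⊆ Ω →
        (∫ x in Ω, ‖fderiv ℝ u x‖ ^ n) ≤ 1 →
        ∫ x in Ω, Real.exp (β * |u x| ^ ((n : ℝ) / ((n : ℝ) - 1))) ≤
          C ((volume Ω).toReal) := by
  have hn1 : (0:ℝ) < (n:ℝ) - 1 := by
    have : (2:ℝ) ≤ n := by exact_mod_cast hn
    linarith
  set w : ℝ := (n : ℝ) * (volume (ball (0 : EuclideanSpace ℝ (Fin n)) 1)).toReal with hwdef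
  have hw : 0 < w := by
    have : 0 < (volume (ball (0 : EuclideanSpace ℝ (Fin n)) 1)).toReal :=
      ENNReal.toReal_pos (measure_ball_pos _ _ one_pos).ne' measure_ball_lt_top.ne
    positivity
  set q := (n:ℝ) / ((n:ℝ) - 1) with hq
  have hq0 : 0 < q := by positivity
  set b := max β 0 with hb
  have hb0 : 0 ≤ b := le_max_right _ _
  have hb1 : b < n * w ^ (1 / ((n : ℝ) - 1)) := max_lt hβ (by positivity)
  refine ⟨fun V => Real.exp (b * moserLevel n w V 0 ^ q) * V +
    ∑' k : ℕ, Real.exp (b * moserLevel n w V (k+1) ^ q) * (w ^ n * Real.exp (-k) ^ n), ?_⟩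
  intro Ω hΩo hΩb u hu hc hsupp hint
  have hΩf : volume Ω ≠ ∞ := hΩb.measure_lt_top.ne
  have hfΩ : ∀ x ∉ Ω, fderiv ℝ u x = 0 := fun x hx =>
    fderiv_of_notMem_tsupport _ (fun h => hx (hsupp h))
  have hcf : Continuous fun x => ‖fderiv ℝ u x‖ ^ n :=
    ((hu.continuous_fderiv (by simp)).norm.pow n)
  have hf1 : ∫⁻ z, ‖fderiv ℝ u z‖ₑ ^ n ≤ 1 := by
    have h1 : Integrable (fun x => ‖fderiv ℝ u x‖ ^ n) volume := by
      apply hcf.integrable_of_hasCompactSupport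
      refine (hc.fderiv ℝ).mono ?_
      intro x hx h
      apply hx
      simp [h, show n ≠ 0 by omega]
    rw [setIntegral_eq_integral_of_forall_compl_eq_zero
      (fun x hx => by simp [hfΩ x hx, show n ≠ 0 by omega])] at hint
    have h2 := ofReal_integral_eq_lintegral_ofReal h1 (ae_of_all _ fun x => by positivity)
    calc _ = ∫⁻ x, ENNReal.ofReal (‖fderiv ℝ u x‖ ^ n) := by
          congr 1; ext x
          rw [ENNReal.ofReal_pow (norm_nonneg _), ofReal_norm]
      _ = _ := h2.symm
      _ ≤ 1 := by simpa using hint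
  set V := (volume Ω).toReal with hV
  have hV0 : 0 ≤ V := ENNReal.toReal_nonneg
  have hs := moser_summable n hn b w V hw hV0 hb1
  have hterm0 : ∀ k : ℕ, 0 ≤ Real.exp (b * moserLevel n w V (k+1) ^ q) *
    (w ^ n * Real.exp (-k) ^ n) := fun k => by positivity
  set T : ℕ → Set (EuclideanSpace ℝ (Fin n)) := fun k => {x | moserLevel n w V k < |u x|} with hT
  have hTm : ∀ k, MeasurableSet (T k) := fun k =>
    (isOpen_lt continuous_const hu.continuous.abs).measurableSet
  have hpt : ∀ x, ENNReal.ofReal (Real.exp (β * |u x| ^ q)) ≤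
      ENNReal.ofReal (Real.exp (b * moserLevel n w V 0 ^ q)) +
      ∑' k : ℕ, (T k).indicator
        (fun _ => ENNReal.ofReal (Real.exp (b * moserLevel n w V (k+1) ^ q))) x := by
    intro x
    have hex : ∃ k, |u x| ≤ moserLevel n w V k :=
      ((moserLevel_tendsto n hn w V hw).eventually_ge_atTop _).exists
    classical
    have hmono : ∀ k, |u x| ≤ moserLevel n w V k → ENNReal.ofReal (Real.exp (β * |u x| ^ q)) ≤
        ENNReal.ofReal (Real.exp (b * moserLevel n w V k ^ q)) := by
      intro k hk
      apply ENNReal.ofReal_le_ofReal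
      apply Real.exp_le_exp.2
      calc β * |u x| ^ q ≤ b * |u x| ^ q := by gcongr; exact le_max_left _ _
        _ ≤ _ := by gcongr
    have h1 := Nat.find_spec hex
    have h2 := fun m => Nat.find_min hex (m := m)
    rcases hk : Nat.find hex with _ | m
    · rw [hk] at h1
      exact (hmono 0 h1).trans le_self_add
    · rw [hk] at h1
      have h3 : x ∈ T m := not_le.1 (h2 m (by omega))
      refine (hmono _ h1).trans (le_add_left ?_)
      refine le_trans (le_of_eq ?_) (ENNReal.le_tsum m)
      rw [indicator_of_mem h3]
  have hmain : ∫⁻ x in Ω, ENNReal.ofReal (Real.exp (β * |u x| ^ q)) ≤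
      ENNReal.ofReal (Real.exp (b * moserLevel n w V 0 ^ q) * V +
    ∑' k : ℕ, Real.exp (b * moserLevel n w V (k+1) ^ q) * (w ^ n * Real.exp (-k) ^ n)) := by
    refine (lintegral_mono hpt).trans ?_
    rw [lintegral_add_left measurable_const, lintegral_tsum
      (fun k => (measurable_const.indicator (hTm k)).aemeasurable), lintegral_const,
      ENNReal.ofReal_add (by positivity) (tsum_nonneg hterm0),
      ENNReal.ofReal_tsum_of_nonneg hterm0 hs, ENNReal.ofReal_mul (Real.exp_pos _).le, hV,
      ENNReal.ofReal_toReal hΩf, Measure.restrict_apply_univ]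
    refine add_le_add le_rfl (ENNReal.tsum_le_tsum fun k => ?_)
    rw [lintegral_indicator_const (hTm k), ENNReal.ofReal_mul (Real.exp_pos _).le]
    gcongr
    refine (Measure.restrict_apply_le _ _).trans ?_
    exact moser_level n hn k Ω hΩo.measurableSet hΩf u hu hc (fun x hx => by rw [← ofReal_norm, hfΩ x hx, norm_zero, ENNReal.ofReal_zero]) hf1
      w hw (moser_omega_eq n)
  rw [integral_eq_lintegral_of_nonneg_ae (ae_of_all _ fun x => (Real.exp_pos _).le)]
  · refine ENNReal.toReal_le_of_le_ofReal ?_ hmain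
    exact add_nonneg (by positivity) (tsum_nonneg hterm0)
  · apply Continuous.aestronglyMeasurable
    exact Real.continuous_exp.comp (continuous_const.mul
      (hu.continuous.abs.rpow_const fun x => Or.inr hq0.le))
end

section
/- Let n > 1 be a real number and a > 0. Define the class D_aⁿ of functions u : [0,∞) → ℝ such that u(0) = 0, u is locally absolutely continuous with ∫₀^∞ |u'(r)|ⁿ dr < ∞, and ∫₀^∞ e^{n(u(r)−r)} dr = a. Then the infimum ξ = inf{∫₀^∞ |u'(r)|ⁿ dr : u ∈ D_aⁿ} is attained: there exists v ∈ D_aⁿ with ∫₀^∞ |v'(r)|ⁿ dr = ξ. -/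
open MeasureTheory Real Set

/-- The class `D_aⁿ`: locally absolutely continuous functions `u` on `[0,∞)`
(with a.e. derivative `u'`, so that `u r = ∫₀^r u'`), with `u 0 = 0`,
`∫₀^∞ |u'|ⁿ < ∞` and `∫₀^∞ e^{n(u-r)} dr = a`. -/
def MemDClass (n a : ℝ) (u u' : ℝ → ℝ) : Prop :=
  (∀ R : ℝ, IntervalIntegrable u' volume 0 R) ∧
  (∀ r ∈ Set.Ici (0 : ℝ), u r = ∫ t in (0 : ℝ)..r, u' t) ∧
  u 0 = 0 ∧
  IntegrableOn (fun r => |u' r| ^ n) (Set.Ioi 0) ∧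
  (∫ r in Set.Ioi (0 : ℝ), Real.exp (n * (u r - r))) = a

open Filter Topology

lemma young_aux {n s : ℝ} (hn : 1 < n) (hs : 0 < s) (x : ℝ) :
    |x| ≤ s + s ^ (1 - n) * |x| ^ n := by
  by_cases h : |x| ≤ s
  · have : 0 ≤ s ^ (1 - n) * |x| ^ n := by positivity
    linarith
  · push Not at h
    have hx : 0 < |x| := hs.trans h
    have h1 : |x| ^ (1 - n) ≤ s ^ (1 - n) :=
      Real.rpow_le_rpow_of_nonpos hs h.le (by linarith)
    have h2 : |x| = |x| ^ (1 - n) * |x| ^ n := by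
      rw [← Real.rpow_add hx]; simp
    have h3 : |x| ^ (1 - n) * |x| ^ n ≤ s ^ (1 - n) * |x| ^ n := by gcongr
    linarith

lemma intervalIntegrable_aux {n : ℝ} (hn : 1 < n) {g : ℝ → ℝ} (hg : Measurable g)
    (hi : Integrable (fun x => |g x| ^ n)) (a b : ℝ) : IntervalIntegrable g volume a b := by
  have h : IntervalIntegrable (fun x => 1 + |g x| ^ n) volume a b :=
    intervalIntegrable_const.add hi.intervalIntegrable
  refine h.mono_fun hg.aestronglyMeasurable ?_
  refine Eventually.of_forall fun x => ?_
  have := young_aux hn one_pos (g x)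
  have h0 : 0 ≤ |g x| ^ n := by positivity
  simp only [Real.one_rpow, one_mul] at this
  show ‖g x‖ ≤ ‖1 + |g x| ^ n‖
  rw [Real.norm_eq_abs, Real.norm_eq_abs, abs_of_nonneg (by linarith : 0 ≤ 1 + |g x| ^ n)]
  exact this

/-- increments are controlled -/
lemma incr_aux {n : ℝ} (hn : 1 < n) {g : ℝ → ℝ} (hg : Measurable g)
    (hi : Integrable (fun x => |g x| ^ n)) {s : ℝ} (hs : 0 < s) (x y : ℝ) :
    dist (∫ t in (0:ℝ)..x, g t) (∫ t in (0:ℝ)..y, g t) ≤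
      s * dist x y + s ^ (1 - n) * ∫ t in uIoc x y, |g t| ^ n := by
  have hI := intervalIntegrable_aux hn hg hi
  rw [dist_comm, Real.dist_eq, intervalIntegral.integral_interval_sub_left (hI _ _) (hI _ _)]
  rw [← Real.norm_eq_abs]
  refine intervalIntegral.norm_integral_le_integral_norm_uIoc.trans ?_
  have hfin : volume (uIoc x y) ≠ ⊤ := by simp [uIoc]
  have hc : IntegrableOn (fun _ : ℝ => s) (uIoc x y) := integrableOn_const hfin
  have h2 : IntegrableOn (fun t => s ^ (1 - n) * |g t| ^ n) (uIoc x y) :=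
    (hi.const_mul _).integrableOn
  have : ∫ t in uIoc x y, ‖g t‖ ≤ ∫ t in uIoc x y, (s + s ^ (1 - n) * |g t| ^ n) := by
    refine integral_mono (hI x y).def'.norm (hc.add h2) fun t => ?_
    exact young_aux hn hs (g t)
  refine this.trans (le_of_eq ?_)
  rw [integral_add hc h2, integral_const_mul]
  congr 1
  simp [Real.dist_eq, uIoc, max_sub_min_eq_abs', mul_comm, Measure.real]

lemma ac_aux {n : ℝ} (hn : 1 < n) {g : ℝ → ℝ} (hg : Measurable g)
    (hi : Integrable (fun x => |g x| ^ n)) {s M : ℝ} (hs : 0 < s)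
    (hM : ∫ x, |g x| ^ n ≤ M) (m : ℕ) (I : ℕ → ℝ × ℝ)
    (hd : Set.PairwiseDisjoint (Finset.range m) (fun i ↦ uIoc (I i).1 (I i).2)) :
    ∑ i ∈ Finset.range m, dist (∫ t in (0:ℝ)..(I i).1, g t) (∫ t in (0:ℝ)..(I i).2, g t) ≤
      s * (∑ i ∈ Finset.range m, dist (I i).1 (I i).2) + s ^ (1 - n) * M := by
  calc _ ≤ ∑ i ∈ Finset.range m, (s * dist (I i).1 (I i).2 +
        s ^ (1 - n) * ∫ t in uIoc (I i).1 (I i).2, |g t| ^ n) :=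
      Finset.sum_le_sum fun i _ => incr_aux hn hg hi hs _ _
    _ = s * (∑ i ∈ Finset.range m, dist (I i).1 (I i).2) +
        s ^ (1 - n) * ∫ t in ⋃ i ∈ Finset.range m, uIoc (I i).1 (I i).2, |g t| ^ n := by
      rw [Finset.sum_add_distrib, ← Finset.mul_sum, ← Finset.mul_sum,
        integral_biUnion_finset _ (fun i _ => measurableSet_uIoc) hd
          (fun i _ => hi.integrableOn)]
    _ ≤ _ := by
      have : ∫ t in ⋃ i ∈ Finset.range m, uIoc (I i).1 (I i).2, |g t| ^ n ≤ ∫ x, |g x| ^ n :=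
        setIntegral_le_integral hi (Eventually.of_forall fun x => by positivity)
      gcongr
      exact this.trans hM

lemma jensen_aux {n : ℝ} (hn : 1 < n) {g : ℝ → ℝ} (hg : Measurable g)
    (hi : Integrable (fun x => |g x| ^ n)) {h : ℝ} (hh : 0 < h) (x : ℝ) :
    |h⁻¹ * ((∫ t in (0:ℝ)..(x + h), g t) - (∫ t in (0:ℝ)..x, g t))| ^ n ≤
      h⁻¹ * ∫ t in (0:ℝ)..h, |g (x + t)| ^ n := by
  have hI := intervalIntegrable_aux hn hg hi
  rw [intervalIntegral.integral_interval_sub_left (hI _ _) (hI _ _)]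
  have e1 : ∫ t in x..(x+h), g t = ∫ t in (0:ℝ)..h, g (x + t) := by
    rw [intervalIntegral.integral_comp_add_left (fun t => g t)]; simp
  have hgx : Measurable fun t => g (x + t) := hg.comp (measurable_const_add x)
  have hix : Integrable (fun t => |g (x + t)| ^ n) := hi.comp_add_left x
  have hIx := intervalIntegrable_aux hn hgx hix
  rw [e1]
  have hv : volume.real (Ioc 0 h) = h := by simp [Measure.real, hh.le]
  have key := (convexOn_rpow hn.le).map_set_average_le (μ := volume) (t := Ioc 0 h)
    (f := fun t => |g (x + t)|) (Real.continuous_rpow_const (by linarith)).continuousOn isClosed_Ici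
    (by simp [hh]) (by simp) (Eventually.of_forall fun t => mem_Ici.2 (abs_nonneg _))
    ((intervalIntegrable_iff_integrableOn_Ioc_of_le hh.le).1 (hIx 0 h)).abs hix.integrableOn
  rw [setAverage_eq, setAverage_eq, hv, smul_eq_mul, smul_eq_mul] at key
  rw [intervalIntegral.integral_of_le hh.le, intervalIntegral.integral_of_le hh.le]
  refine le_trans ?_ key
  refine Real.rpow_le_rpow (abs_nonneg _) ?_ (by linarith)
  rw [abs_mul, abs_of_pos (inv_pos.2 hh)]
  gcongr
  exact norm_integral_le_integral_norm (μ := volume.restrict (Ioc 0 h)) (fun t => g (x + t))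

lemma quot_aux {n : ℝ} (hn : 1 < n) {g : ℝ → ℝ} (hg : Measurable g)
    (hi : Integrable (fun x => |g x| ^ n)) {h : ℝ} (hh : 0 < h) :
    ∫⁻ x, ENNReal.ofReal
      (|h⁻¹ * ((∫ t in (0:ℝ)..(x + h), g t) - (∫ t in (0:ℝ)..x, g t))| ^ n) ≤
      ENNReal.ofReal (∫ x, |g x| ^ n) := by
  have hm : Measurable fun x => ENNReal.ofReal (|g x| ^ n) := by fun_prop
  calc _ ≤ ∫⁻ x, ENNReal.ofReal h⁻¹ * ∫⁻ t in Ioc 0 h, ENNReal.ofReal (|g (x + t)| ^ n) := by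
        refine lintegral_mono fun x => ?_
        refine (ENNReal.ofReal_le_ofReal (jensen_aux hn hg hi hh x)).trans ?_
        rw [ENNReal.ofReal_mul (inv_pos.2 hh).le, intervalIntegral.integral_of_le hh.le,
          ofReal_integral_eq_lintegral_ofReal (hi.comp_add_left x).integrableOn
            (Eventually.of_forall fun t => by positivity)]
    _ = ENNReal.ofReal h⁻¹ * ∫⁻ t in Ioc 0 h, ∫⁻ x, ENNReal.ofReal (|g (x + t)| ^ n) := by
        rw [lintegral_const_mul' _ _ ENNReal.ofReal_ne_top, lintegral_lintegral_swap]
        exact (hm.comp measurable_add).aemeasurable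
    _ = ENNReal.ofReal h⁻¹ * ∫⁻ t in Ioc 0 h, ∫⁻ x, ENNReal.ofReal (|g x| ^ n) := by
        congr 1
        refine lintegral_congr fun t => ?_
        exact lintegral_add_right_eq_self (fun x => ENNReal.ofReal (|g x| ^ n)) t
    _ = _ := by
        rw [← ofReal_integral_eq_lintegral_ofReal hi (Eventually.of_forall fun t => by positivity)]
        simp only [lintegral_const, Measure.restrict_apply_univ, Real.volume_Ioc, sub_zero]
        rw [mul_left_comm, ← ENNReal.ofReal_mul (inv_pos.2 hh).le, inv_mul_cancel₀ hh.ne']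
        simp

lemma compact_aux (w : ℕ → ℝ → ℝ) (C : ℝ → ℝ) (hC : ∀ k x, |w k x| ≤ C x)
    (he : ∀ ε > 0, ∃ δ > 0, ∀ k x y, dist x y < δ → dist (w k x) (w k y) < ε) :
    ∃ φ : ℕ → ℕ, StrictMono φ ∧ ∃ v : ℝ → ℝ, ∀ x,
      Tendsto (fun k => w (φ k) x) atTop (𝓝 (v x)) := by
  have hc : IsCompact (Set.univ.pi fun q : ℚ => Icc (-C q) (C q)) :=
    isCompact_univ_pi fun q => isCompact_Icc
  obtain ⟨l, -, φ, hφ, hl⟩ := hc.tendsto_subseq (x := fun k (q : ℚ) => w k q)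
    (fun k q _ => abs_le.1 (hC k q))
  refine ⟨φ, hφ, ?_⟩
  rw [tendsto_pi_nhds] at hl
  have : ∀ x, ∃ y, Tendsto (fun k => w (φ k) x) atTop (𝓝 y) := by
    intro x
    apply cauchySeq_tendsto_of_complete
    rw [Metric.cauchySeq_iff]
    intro ε hε
    obtain ⟨δ, hδ, h⟩ := he (ε / 3) (by positivity)
    obtain ⟨q, hq1, hq2⟩ := exists_rat_btwn (show x - δ < x by linarith)
    have hd : dist x q < δ := by rw [Real.dist_eq, abs_lt]; constructor <;> linarith
    obtain ⟨N, hN⟩ := Metric.cauchySeq_iff.1 (hl q).cauchySeq (ε / 3) (by positivity)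
    refine ⟨N, fun i hi j hj => ?_⟩
    have h1 := h (φ i) x q hd
    have h2 := h (φ j) x q hd
    have h3 := hN i hi j hj
    simp only [Function.comp] at h3
    rw [dist_comm] at h2
    have h4 := dist_triangle4 (w (φ i) x) (w (φ i) q) (w (φ j) q) (w (φ j) x)
    linarith
  choose v hv using this
  exact ⟨v, hv⟩

lemma normalize_aux {n a : ℝ} (hn : 1 < n) {u u' : ℝ → ℝ} (h : MemDClass n a u u') :
    ∃ g : ℝ → ℝ, Measurable g ∧ (∀ x ≤ 0, g x = 0) ∧ Integrable (fun x => |g x| ^ n) ∧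
      (∀ r, 0 ≤ r → u r = ∫ t in (0:ℝ)..r, g t) ∧
      (∫ x, |g x| ^ n = ∫ r in Set.Ioi (0 : ℝ), |u' r| ^ n) := by
  obtain ⟨h1, h2, h3, h4, h5⟩ := h
  have hm : AEMeasurable u' (volume.restrict (Ioi 0)) :=
    aemeasurable_Ioi_of_forall_Ioc fun t ht =>
      ((intervalIntegrable_iff_integrableOn_Ioc_of_le ht.le).1 (h1 t)).1.aemeasurable
  have hpow : (fun x => |(Ioi (0:ℝ)).indicator (hm.mk u') x| ^ n) =
      (Ioi (0:ℝ)).indicator fun x => |hm.mk u' x| ^ n := by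
    funext x
    by_cases hx : x ∈ Ioi (0:ℝ)
    · simp [hx]
    · simp only [hx, not_false_eq_true, indicator_of_notMem, abs_zero]
      exact Real.zero_rpow (by linarith)
  have hae : (fun x => |u' x| ^ n) =ᵐ[volume.restrict (Ioi 0)] fun x => |hm.mk u' x| ^ n := by
    filter_upwards [hm.ae_eq_mk] with x hx
    rw [hx]
  refine ⟨(Ioi (0:ℝ)).indicator (hm.mk u'), hm.measurable_mk.indicator measurableSet_Ioi,
    fun x hx => by simp [hx], ?_, ?_, ?_⟩
  · rw [hpow, integrable_indicator_iff measurableSet_Ioi]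
    exact h4.congr hae
  · intro r hr
    rw [h2 r hr]
    refine intervalIntegral.integral_congr_ae ?_
    have := (ae_restrict_iff' measurableSet_Ioi).1 hm.ae_eq_mk
    filter_upwards [this] with x hx hx2
    rw [uIoc_of_le hr] at hx2
    have h0 : x ∈ Ioi (0:ℝ) := hx2.1
    rw [indicator_of_mem h0]
    exact hx h0
  · rw [hpow, integral_indicator measurableSet_Ioi]
    exact (integral_congr_ae hae).symm

lemma member_aux {n : ℝ} (hn : 1 < n) (t : ℝ) :
    MemDClass n (∫ r in Set.Ioi (0 : ℝ), Real.exp (n * (t * min r 1 - r)))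
      (fun r => t * min r 1) ((Ioc (0:ℝ) 1).indicator fun _ => t) := by
  have hI : Integrable ((Ioc (0:ℝ) 1).indicator fun _ => t) := by
    rw [integrable_indicator_iff measurableSet_Ioc]
    exact integrableOn_const (by simp)
  refine ⟨fun R => hI.intervalIntegrable, ?_, by simp, ?_, rfl⟩
  · intro r hr
    have hr : 0 ≤ r := hr
    rw [intervalIntegral.integral_of_le hr, setIntegral_indicator measurableSet_Ioc,
      Ioc_inter_Ioc, setIntegral_const]
    have h0 : 0 ≤ min r 1 := le_min hr zero_le_one
    have hv : volume.real (Ioc (max (0:ℝ) 0) (min r 1)) = min r 1 := by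
      rw [max_self, Measure.real, Real.volume_Ioc, sub_zero, ENNReal.toReal_ofReal h0]
    rw [hv, smul_eq_mul, mul_comm]
  · have hpow : (fun x => |(Ioc (0:ℝ) 1).indicator (fun _ => t) x| ^ n) =
        (Ioc (0:ℝ) 1).indicator fun x => |t| ^ n := by
      funext x
      by_cases hx : x ∈ Ioc (0:ℝ) 1
      · simp only [hx, indicator_of_mem]
      · simp only [hx, not_false_eq_true, indicator_of_notMem, abs_zero]
        exact Real.zero_rpow (by linarith)
    rw [hpow]
    refine Integrable.integrableOn ?_
    rw [integrable_indicator_iff measurableSet_Ioc]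
    exact integrableOn_const (by simp)

lemma nonempty_aux {n a : ℝ} (hn : 1 < n) (ha : 0 < a) :
    ∃ u u' : ℝ → ℝ, MemDClass n a u u' := by
  set F : ℝ → ℝ := fun t => ∫ r in Set.Ioi (0 : ℝ), Real.exp (n * (t * min r 1 - r)) with hF
  have hmeas : ∀ t : ℝ, AEStronglyMeasurable (fun r : ℝ => Real.exp (n * (t * min r 1 - r)))
      (volume.restrict (Ioi 0)) := fun t =>
    (by fun_prop : Continuous (fun r : ℝ => Real.exp (n * (t * min r 1 - r)))).aestronglyMeasurable
  have hexp : IntegrableOn (fun r : ℝ => Real.exp (-n * r)) (Ioi 0) :=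
    integrableOn_exp_mul_Ioi (by linarith) 0
  have hbd : ∀ T t : ℝ, 0 ≤ T → t ≤ T → ∀ᵐ r ∂(volume.restrict (Ioi (0:ℝ))),
      ‖Real.exp (n * (t * min r 1 - r))‖ ≤ Real.exp (n * T) * Real.exp (-n * r) := by
    intro T t hT ht
    filter_upwards [ae_restrict_mem measurableSet_Ioi] with r hr
    have hr : 0 < r := hr
    rw [Real.norm_eq_abs, abs_of_pos (Real.exp_pos _), ← Real.exp_add]
    apply Real.exp_le_exp.2
    have h0 : 0 ≤ min r 1 := le_min hr.le zero_le_one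
    have h1 : min r 1 ≤ 1 := min_le_right _ _
    have h2 : t * min r 1 ≤ T := by nlinarith
    nlinarith
  have hint : ∀ t, IntegrableOn (fun r : ℝ => Real.exp (n * (t * min r 1 - r))) (Ioi 0) := by
    intro t
    exact (hexp.const_mul _).mono' (hmeas t) (hbd |t| t (abs_nonneg t) (le_abs_self t))
  have hcont : Continuous F := by
    rw [continuous_iff_continuousAt]
    intro t
    refine tendsto_integral_filter_of_dominated_convergence
      (fun r => Real.exp (n * (|t| + 1)) * Real.exp (-n * r))
      (Eventually.of_forall hmeas) ?_ (hexp.const_mul _) ?_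
    · have : ∀ᶠ s in 𝓝 t, s < |t| + 1 :=
        eventually_lt_nhds (by linarith [le_abs_self t])
      filter_upwards [this] with s hs
      exact hbd _ _ (by positivity) hs.le
    · refine Eventually.of_forall fun r => ?_
      exact (by fun_prop : Continuous fun s : ℝ => Real.exp (n * (s * min r 1 - r))).tendsto t
  have hbot : Tendsto F atBot (𝓝 0) := by
    have : Tendsto F atBot (𝓝 (∫ r in Set.Ioi (0 : ℝ), (0:ℝ))) := by
      refine tendsto_integral_filter_of_dominated_convergence
        (fun r => Real.exp (n * 0) * Real.exp (-n * r))
        (Eventually.of_forall hmeas) ?_ (hexp.const_mul _) ?_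
      · filter_upwards [eventually_le_atBot 0] with s hs
        exact hbd _ _ le_rfl hs
      · filter_upwards [ae_restrict_mem measurableSet_Ioi] with r hr
        have hr : 0 < r := hr
        refine Real.tendsto_exp_atBot.comp ?_
        refine Tendsto.const_mul_atBot (by linarith) ?_
        refine tendsto_atBot_add_const_right _ _ ?_
        exact tendsto_id.atBot_mul_const (lt_min hr one_pos)
    simpa using this
  have hlow : ∀ t, Real.exp (n * t) * (∫ r in Ioi (1:ℝ), Real.exp (-n * r)) ≤ F t := by
    intro t
    have h1 : ∫ r in Ioi (1:ℝ), Real.exp (n * (t * min r 1 - r)) ≤ F t :=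
      setIntegral_mono_set (hint t) (Eventually.of_forall fun r => (Real.exp_pos _).le)
        (Ioi_subset_Ioi zero_le_one).eventuallyLE
    refine le_trans (le_of_eq ?_) h1
    rw [← integral_const_mul]
    refine setIntegral_congr_fun measurableSet_Ioi fun r hr => ?_
    have hr : 1 < r := hr
    rw [min_eq_right hr.le, ← Real.exp_add]
    congr 1; ring
  have hpos : 0 < ∫ r in Ioi (1:ℝ), Real.exp (-n * r) := by
    rw [integral_exp_mul_Ioi (by linarith)]
    have := Real.exp_pos (-n * 1)
    rw [neg_div_neg_eq]
    positivity
  have htop : Tendsto F atTop atTop := by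
    refine tendsto_atTop_mono hlow ?_
    refine Tendsto.atTop_mul_const hpos ?_
    exact Real.tendsto_exp_atTop.comp (Tendsto.const_mul_atTop (by linarith) tendsto_id)
  obtain ⟨t, ht⟩ := mem_range_of_exists_le_of_exists_ge hcont
    ((hbot.eventually (gt_mem_nhds ha)).exists.imp fun _ h => h.le)
    ((htop.eventually_ge_atTop a).exists)
  have := member_aux hn t
  change MemDClass n (F t) _ _ at this
  rw [ht] at this
  exact ⟨_, _, this⟩

lemma limit_aux {n M ξ : ℝ} (hn : 1 < n) (g : ℕ → ℝ → ℝ) (hg : ∀ k, Measurable (g k))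
    (hi : ∀ k, Integrable (fun x => |g k x| ^ n)) (hM : ∀ k, ∫ x, |g k x| ^ n ≤ M)
    (hξ : Tendsto (fun k => ∫ x, |g k x| ^ n) atTop (𝓝 ξ)) :
    ∃ φ : ℕ → ℕ, StrictMono φ ∧ ∃ v : ℝ → ℝ,
      (∀ x, Tendsto (fun k => ∫ t in (0:ℝ)..x, g (φ k) t) atTop (𝓝 (v x))) ∧
      (∀ a b, IntervalIntegrable (deriv v) volume a b) ∧
      (∀ r, v r = ∫ t in (0:ℝ)..r, deriv v t) ∧
      Integrable (fun x => |deriv v x| ^ n) ∧ ∫ x, |deriv v x| ^ n ≤ ξ := by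
  have hM0 : 0 ≤ M := (integral_nonneg fun x => by positivity).trans (hM 0)
  have hξ0 : 0 ≤ ξ := ge_of_tendsto' hξ fun k => integral_nonneg fun x => by positivity
  have hac := fun k s (hs : 0 < s) m I hd => ac_aux hn (hg k) (hi k) (s := s) hs (hM k) m I hd
  -- choice of the parameter
  have hs : ∀ ε > 0, ∃ s > 0, ∃ δ > 0, ∀ L < δ, s * L + s ^ (1 - n) * M < ε := by
    intro ε hε
    have ht : Tendsto (fun s : ℝ => s ^ (1 - n) * M) atTop (𝓝 0) := by
      have := (tendsto_rpow_neg_atTop (show 0 < n - 1 by linarith)).mul_const M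
      simpa using this
    obtain ⟨s, hs1, hs2⟩ := ((ht.eventually (gt_mem_nhds (half_pos hε))).and
      (eventually_gt_atTop 0)).exists
    refine ⟨s, hs2, ε / 2 / s, by positivity, fun L hL => ?_⟩
    have := (lt_div_iff₀' hs2).1 hL
    linarith
  have hinc : ∀ k s, 0 < s → ∀ x y,
      dist (∫ t in (0:ℝ)..x, g k t) (∫ t in (0:ℝ)..y, g k t) ≤ s * dist x y + s ^ (1 - n) * M := by
    intro k s hs x y
    have := hac k s hs 1 (fun _ => (x, y)) (by simp)
    simpa using this
  obtain ⟨φ, hφ, v, hv⟩ := compact_aux (fun k x => ∫ t in (0:ℝ)..x, g k t)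
    (fun x => |x| + M) (by
      intro k x
      have := hinc k 1 one_pos x 0
      simpa using this) (by
      intro ε hε
      obtain ⟨s, hs0, δ, hδ, h⟩ := hs ε hε
      refine ⟨δ, hδ, fun k x y hxy => (hinc k s hs0 x y).trans_lt (h _ hxy)⟩)
  have hvac : ∀ a b, AbsolutelyContinuousOnInterval v a b := by
    intro a b
    rw [absolutelyContinuousOnInterval_iff]
    intro ε hε
    obtain ⟨s, hs0, δ, hδ, h⟩ := hs ε hε
    refine ⟨δ, hδ, fun E hE hL => lt_of_le_of_lt ?_ (h _ hL)⟩
    refine le_of_tendsto' (tendsto_finsetSum _ fun i _ => (hv (E.2 i).1).dist (hv (E.2 i).2))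
      fun k => hac (φ k) s hs0 E.1 E.2 hE.2
  have hv0 : v 0 = 0 := by
    refine tendsto_nhds_unique (hv 0) ?_
    simp
  have hdiff : ∀ᵐ x : ℝ, DifferentiableAt ℝ v x := by
    have : ∀ᵐ x : ℝ, ∀ N : ℕ, x ∈ uIcc (-(N:ℝ)) N → DifferentiableAt ℝ v x :=
      ae_all_iff.2 fun N => (hvac _ _).ae_differentiableAt
    filter_upwards [this] with x hx
    obtain ⟨N, hN⟩ := exists_nat_ge |x|
    refine hx N ?_
    rw [uIcc_of_le (by linarith [abs_nonneg x])]
    exact abs_le.1 hN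
  have hvc : Continuous v := by
    rw [continuous_iff_continuousAt]
    intro x
    refine (hvac (x - 1) (x + 1)).continuousOn.continuousAt ?_
    rw [uIcc_of_le (by linarith)]
    exact Icc_mem_nhds (by linarith) (by linarith)
  -- difference quotients
  have hq : ∀ h : ℝ, 0 < h →
      ∫⁻ x, ENNReal.ofReal (|h⁻¹ * (v (x + h) - v x)| ^ n) ≤ ENNReal.ofReal ξ := by
    intro h hh
    have hlim : ∀ x, Tendsto (fun k => ENNReal.ofReal (|h⁻¹ * ((∫ t in (0:ℝ)..(x + h), g (φ k) t) -
        (∫ t in (0:ℝ)..x, g (φ k) t))| ^ n)) atTop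
        (𝓝 (ENNReal.ofReal (|h⁻¹ * (v (x + h) - v x)| ^ n))) := by
      intro x
      refine ENNReal.tendsto_ofReal ?_
      refine Tendsto.rpow_const ?_ (Or.inr (by linarith))
      exact (((hv (x + h)).sub (hv x)).const_mul _).abs
    have hme : ∀ k, Measurable fun x => ENNReal.ofReal
        (|h⁻¹ * ((∫ t in (0:ℝ)..(x + h), g (φ k) t) - (∫ t in (0:ℝ)..x, g (φ k) t))| ^ n) := by
      intro k
      have hc : Continuous fun x => ∫ t in (0:ℝ)..x, g (φ k) t :=
        intervalIntegral.continuous_primitive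
          (fun a b => intervalIntegrable_aux hn (hg (φ k)) (hi (φ k)) a b) 0
      have hc2 : Continuous fun x => ∫ t in (0:ℝ)..(x + h), g (φ k) t :=
        hc.comp (continuous_add_const h)
      have := hc.measurable
      have := hc2.measurable
      fun_prop
    have hξ' : Tendsto (fun k => ENNReal.ofReal (∫ x, |g (φ k) x| ^ n)) atTop
        (𝓝 (ENNReal.ofReal ξ)) :=
      ENNReal.tendsto_ofReal (hξ.comp hφ.tendsto_atTop)
    calc _ = ∫⁻ x, liminf (fun k => ENNReal.ofReal (|h⁻¹ * ((∫ t in (0:ℝ)..(x + h), g (φ k) t) -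
        (∫ t in (0:ℝ)..x, g (φ k) t))| ^ n)) atTop :=
          lintegral_congr fun x => (hlim x).liminf_eq.symm
      _ ≤ _ := lintegral_liminf_le hme
      _ ≤ liminf (fun k => ENNReal.ofReal (∫ x, |g (φ k) x| ^ n)) atTop :=
          liminf_le_liminf (Eventually.of_forall fun k => quot_aux hn (hg _) (hi _) hh)
      _ = _ := hξ'.liminf_eq
  have hE : ∫⁻ x, ENNReal.ofReal (|deriv v x| ^ n) ≤ ENNReal.ofReal ξ := by
    let hh : ℕ → ℝ := fun m => 1 / ((m:ℝ) + 1)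
    have hpos : ∀ m, 0 < hh m := fun m => Nat.one_div_pos_of_nat
    have htend : Tendsto hh atTop (𝓝[>] 0) :=
      tendsto_nhdsWithin_iff.2 ⟨tendsto_one_div_add_atTop_nhds_zero_nat,
        Eventually.of_forall hpos⟩
    calc _ = ∫⁻ x, liminf (fun m => ENNReal.ofReal
          (|(hh m)⁻¹ * (v (x + hh m) - v x)| ^ n)) atTop := by
          refine lintegral_congr_ae ?_
          filter_upwards [hdiff] with x hx
          have h1 := hx.hasDerivAt.tendsto_slope_zero_right.comp htend
          refine (Tendsto.liminf_eq ?_).symm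
          refine ENNReal.tendsto_ofReal ?_
          refine Tendsto.rpow_const ?_ (Or.inr (by linarith))
          exact h1.abs
      _ ≤ _ := lintegral_liminf_le fun m => by
          have := hvc.measurable
          fun_prop
      _ ≤ liminf (fun m : ℕ => ENNReal.ofReal ξ) atTop :=
          liminf_le_liminf (Eventually.of_forall fun m => hq _ (hpos m))
      _ = _ := by simp
  have hmd : AEStronglyMeasurable (fun x => |deriv v x| ^ n) volume := by
    have := measurable_deriv v
    exact (by fun_prop : Measurable fun x => |deriv v x| ^ n).aestronglyMeasurable
  have hnn : 0 ≤ᵐ[volume] fun x => |deriv v x| ^ n :=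
    Eventually.of_forall fun x => by positivity
  refine ⟨φ, hφ, v, hv, fun a b => (hvac a b).intervalIntegrable_deriv, fun r => ?_, ?_, ?_⟩
  · rw [(hvac 0 r).integral_deriv_eq_sub, hv0, sub_zero]
  · refine ⟨hmd, ?_⟩
    rw [hasFiniteIntegral_iff_ofReal hnn]
    exact hE.trans_lt ENNReal.ofReal_lt_top
  · rw [integral_eq_lintegral_of_nonneg_ae hnn hmd]
    exact ENNReal.toReal_le_of_le_ofReal hξ0 hE

/-- **Existence of a minimizer** (Li–Zhu, Lemma 2).
For real `n > 1` and `a > 0`, the infimum `ξ = inf {∫₀^∞ |u'|ⁿ dr : u ∈ D_aⁿ}`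
is attained by some `v ∈ D_aⁿ`. -/
theorem minimizer_exists (n a : ℝ) (hn : 1 < n) (ha : 0 < a) :
    ∃ v v' : ℝ → ℝ, MemDClass n a v v' ∧
      ∀ u u' : ℝ → ℝ, MemDClass n a u u' →
        (∫ r in Set.Ioi (0 : ℝ), |v' r| ^ n) ≤ ∫ r in Set.Ioi (0 : ℝ), |u' r| ^ n := by
  let S : Set ℝ := {e | ∃ u u' : ℝ → ℝ, MemDClass n a u u' ∧
    e = ∫ r in Set.Ioi (0 : ℝ), |u' r| ^ n}
  have hS : S.Nonempty := by
    obtain ⟨u, u', h⟩ := nonempty_aux hn ha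
    exact ⟨_, u, u', h, rfl⟩
  have hSb : BddBelow S := by
    refine ⟨0, ?_⟩
    rintro _ ⟨u, u', -, rfl⟩
    exact integral_nonneg fun x => by positivity
  obtain ⟨e, hanti, hlim, he⟩ := exists_seq_tendsto_sInf hS hSb
  choose u u' hu heq using he
  choose g hg hz hi hug hgu using fun k => normalize_aux hn (hu k)
  have hge : ∀ k, ∫ x, |g k x| ^ n = e k := fun k => (hgu k).trans (heq k).symm
  have hM : ∀ k, ∫ x, |g k x| ^ n ≤ e 0 := fun k => (hge k).trans_le (hanti (Nat.zero_le k))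
  obtain ⟨φ, hφ, v, hv, hvi, hvr, hvn, hvle⟩ := limit_aux (ξ := sInf S) hn g hg hi hM
    (by simpa only [hge] using hlim)
  refine ⟨v, deriv v, ⟨fun R => hvi 0 R, fun r _ => hvr r, ?_, hvn.integrableOn, ?_⟩, ?_⟩
  · rw [hvr 0]; simp
  · -- dominated convergence
    have hexp : IntegrableOn (fun r : ℝ => Real.exp (-(n / 2) * r)) (Ioi 0) :=
      integrableOn_exp_mul_Ioi (by linarith) 0
    let K : ℝ := (1 / 2 : ℝ) ^ (1 - n) * e 0
    have ht : Tendsto (fun k => ∫ r in Ioi (0:ℝ),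
        Real.exp (n * ((∫ t in (0:ℝ)..r, g (φ k) t) - r))) atTop
        (𝓝 (∫ r in Ioi (0:ℝ), Real.exp (n * (v r - r)))) := by
      refine tendsto_integral_of_dominated_convergence
        (fun r => Real.exp (n * K) * Real.exp (-(n / 2) * r)) ?_ (hexp.const_mul _) ?_ ?_
      · intro k
        have hc : Continuous fun x => ∫ t in (0:ℝ)..x, g (φ k) t :=
          intervalIntegral.continuous_primitive
            (fun a b => intervalIntegrable_aux hn (hg (φ k)) (hi (φ k)) a b) 0
        exact (by fun_prop : Continuous fun r =>
          Real.exp (n * ((∫ t in (0:ℝ)..r, g (φ k) t) - r))).aestronglyMeasurable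
      · intro k
        filter_upwards [ae_restrict_mem measurableSet_Ioi] with r hr
        have hr : 0 < r := hr
        have h1 := ac_aux hn (hg (φ k)) (hi (φ k)) (s := 1 / 2) (by norm_num) (hM (φ k)) 1
          (fun _ => (r, 0)) (by simp)
        simp only [Finset.range_one, Finset.sum_singleton, intervalIntegral.integral_same,
          dist_zero_right, Real.norm_eq_abs, abs_of_pos hr] at h1
        have h2 : (∫ t in (0:ℝ)..r, g (φ k) t) ≤ 1 / 2 * r + K := (le_abs_self _).trans h1
        rw [Real.norm_eq_abs, abs_of_pos (Real.exp_pos _), ← Real.exp_add]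
        apply Real.exp_le_exp.2
        nlinarith
      · refine Eventually.of_forall fun r => ?_
        exact (Real.continuous_exp.tendsto _).comp (((hv r).sub_const r).const_mul n)
    refine tendsto_nhds_unique ht ?_
    refine tendsto_const_nhds.congr fun k => ?_
    rw [← (hu (φ k)).2.2.2.2]
    refine setIntegral_congr_fun measurableSet_Ioi fun r hr => ?_
    have hr : 0 < r := hr
    rw [hug (φ k) r hr.le]
  · intro w w' hw
    have h1 : ∫ r in Ioi (0:ℝ), |deriv v r| ^ n ≤ ∫ r, |deriv v r| ^ n :=
      setIntegral_le_integral hvn (Eventually.of_forall fun x => by positivity)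
    exact (h1.trans hvle).trans (csInf_le hSb ⟨w, w', hw, rfl⟩)
end

section
/- Let n > 1 be a real number, let λ₀ > 0, and define v(r) = ln((λ₀+1)/(λ₀ + e^{−nr/(n−1)})) for r ∈ [0,∞). Then v(0) = 0, v is nonnegative and increasing, and ∫₀^∞ e^{n(v(r)−r)} dr = (λ₀+1)/(n·λ₀). Equivalently, if a := ∫₀^∞ e^{n(v−r)} dr then λ₀ = 1/(na − 1). -/
open MeasureTheory Real Set

/-- **Properties of the extremal profile** (Li–Zhu, proof of Theorem 1, (3.3)–(3.4)).
For real `n > 1` and `λ₀ > 0`, the function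
`v r = ln ((λ₀+1)/(λ₀ + e^{-nr/(n-1)}))` satisfies `v 0 = 0`, is nonnegative and
increasing on `[0,∞)`, and `∫₀^∞ e^{n(v-r)} dr = (λ₀+1)/(n λ₀)`. -/
theorem extremal_profile_constraint (n lam : ℝ) (hn : 1 < n) (hlam : 0 < lam) :
    (fun r : ℝ => Real.log ((lam + 1) / (lam + Real.exp (-n * r / (n - 1))))) 0 = 0 ∧
    (∀ r ∈ Set.Ici (0 : ℝ),
      0 ≤ Real.log ((lam + 1) / (lam + Real.exp (-n * r / (n - 1))))) ∧
    StrictMonoOn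
      (fun r : ℝ => Real.log ((lam + 1) / (lam + Real.exp (-n * r / (n - 1)))))
      (Set.Ici 0) ∧
    (∫ r in Set.Ioi (0 : ℝ),
        Real.exp (n * (Real.log ((lam + 1) / (lam + Real.exp (-n * r / (n - 1)))) - r)))
      = (lam + 1) / (n * lam) := by
  have hn1 : 0 < n - 1 := by linarith
  have hn0 : 0 < n := by linarith
  have hpos : ∀ r : ℝ, 0 < lam + Real.exp (-n * r / (n - 1)) := fun r => by positivity
  have hmono : StrictMonoOn
      (fun r : ℝ => Real.log ((lam + 1) / (lam + Real.exp (-n * r / (n - 1)))))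
      (Set.Ici 0) := by
    intro a _ b _ hab
    apply Real.log_lt_log (div_pos (by linarith) (hpos a))
    apply div_lt_div_of_pos_left (by linarith) (hpos b)
    have : Real.exp (-n * b / (n - 1)) < Real.exp (-n * a / (n - 1)) := by
      apply Real.exp_lt_exp.mpr
      apply div_lt_div_of_pos_right _ hn1
      nlinarith
    linarith
  have h0 : (fun r : ℝ => Real.log ((lam + 1) / (lam + Real.exp (-n * r / (n - 1))))) 0 = 0 := by
    have : lam + 1 ≠ 0 := by linarith
    simp [this]
  refine ⟨h0, ?_, hmono, ?_⟩
  · intro r hr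
    have := hmono.monotoneOn (Set.self_mem_Ici) hr hr
    exact h0.symm.le.trans this
  have hderiv : ∀ r ∈ Set.Ici (0 : ℝ), HasDerivAt
      (fun r : ℝ => -((lam + 1) / (n * lam)) * Real.exp ((n - 1) *
        Real.log ((lam + 1) / (lam + Real.exp (-n * r / (n - 1)))) - n * r))
      (Real.exp (n * (Real.log ((lam + 1) / (lam + Real.exp (-n * r / (n - 1)))) - r))) r := by
    intro r _
    have hp := hpos r
    have hl : 0 < lam + 1 := by linarith
    have hq : 0 < (lam + 1) / (lam + Real.exp (-n * r / (n - 1))) := div_pos hl hp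
    have d1 : HasDerivAt (fun r : ℝ => -n * r / (n - 1)) (-n / (n - 1)) r := by
      simpa using ((hasDerivAt_id r).const_mul (-n)).div_const (n - 1)
    have d2 := (d1.exp.const_add lam)
    have d3 := ((hasDerivAt_const r (lam + 1)).div d2 hp.ne').log hq.ne'
    have d4 := (((d3.const_mul (n - 1)).sub ((hasDerivAt_id r).const_mul n)).exp).const_mul
      (-((lam + 1) / (n * lam)))
    refine d4.congr_deriv ?_
    have e : Real.exp (n * (Real.log ((lam + 1) / (lam + Real.exp (-n * r / (n - 1)))) - r))
        = Real.exp ((n - 1) * Real.log ((lam + 1) / (lam + Real.exp (-n * r / (n - 1)))) - n * r)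
          * ((lam + 1) / (lam + Real.exp (-n * r / (n - 1)))) := by
      conv_rhs => rw [← Real.exp_log hq]
      rw [Real.log_exp, ← Real.exp_add]
      congr 1
      ring
    rw [e]
    simp only [Pi.div_apply, Pi.sub_apply, id]
    generalize Real.exp ((n - 1) * Real.log ((lam + 1) / (lam + Real.exp (-n * r / (n - 1)))) - n * r) = E
    generalize Real.exp (-n * r / (n - 1)) = w at *
    field_simp
    ring
  have hlim : Filter.Tendsto
      (fun r : ℝ => -((lam + 1) / (n * lam)) * Real.exp ((n - 1) *
        Real.log ((lam + 1) / (lam + Real.exp (-n * r / (n - 1)))) - n * r))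
      Filter.atTop (nhds 0) := by
    have t1 : Filter.Tendsto (fun r : ℝ => n * r) Filter.atTop Filter.atTop :=
      Filter.tendsto_id.const_mul_atTop hn0
    have t2 : Filter.Tendsto (fun r : ℝ => Real.exp (-n * r / (n - 1))) Filter.atTop (nhds 0) := by
      apply Real.tendsto_exp_atBot.comp
      have := Filter.tendsto_neg_atTop_atBot.comp (t1.atTop_div_const hn1)
      refine this.congr fun r => ?_
      simp only [Function.comp]
      ring
    have t3 : Filter.Tendsto (fun r : ℝ => (n - 1) *
        Real.log ((lam + 1) / (lam + Real.exp (-n * r / (n - 1))))) Filter.atTop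
        (nhds ((n - 1) * Real.log ((lam + 1) / (lam + 0)))) := by
      have hl : 0 < lam + 1 := by linarith
      refine (Filter.Tendsto.log (tendsto_const_nhds.div (t2.const_add lam) ?_) ?_).const_mul _
      · simpa using hlam.ne'
      · simp [hl.ne', hlam.ne']
    have t4 := Real.tendsto_exp_atBot.comp
      (t3.add_atBot (Filter.tendsto_neg_atTop_atBot.comp t1))
    have t5 := t4.const_mul (-((lam + 1) / (n * lam)))
    rw [mul_zero] at t5
    refine t5.congr fun r => ?_
    simp only [Function.comp, sub_eq_add_neg]
  rw [integral_Ioi_of_hasDerivAt_of_nonneg' hderiv (fun r _ => (Real.exp_pos _).le) hlim]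
  have : Real.log ((lam + 1) / (lam + Real.exp (-n * 0 / (n - 1)))) = 0 := h0
  rw [this]
  simp
end

section
/- Let α > 1/2 and let v : [0,∞) → ℝ be locally absolutely continuous with v(0) = 0, ∫₀^∞ |v'(r)|² dr < ∞, and ∫₀^∞ e^{2(v(r)−r)} dr = α. Then ∫₀^∞ |v'(r)|² dr ≥ 2·( ln(2α) + 1/(2α) − 1 ). -/
open MeasureTheory Real Set

open Filter Topology in
/-- Composition of an absolutely continuous function with a `C¹` function. -/
lemma ac_comp {f φ : ℝ → ℝ} {a b c d : ℝ} (hf : AbsolutelyContinuousOnInterval f a b)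
    (hφ : ContDiffOn ℝ 1 φ (Icc c d)) (hm : ∀ x ∈ uIcc a b, f x ∈ Icc c d) :
    AbsolutelyContinuousOnInterval (fun x => φ (f x)) a b := by
  obtain ⟨K, hK⟩ := hφ.exists_lipschitzOnWith (by decide) (convex_Icc _ _) isCompact_Icc
  unfold AbsolutelyContinuousOnInterval at hf ⊢
  have h2 := hf.const_mul (K : ℝ)
  rw [mul_zero] at h2
  refine squeeze_zero' (Eventually.of_forall fun E => Finset.sum_nonneg fun i _ => dist_nonneg)
    ?_ h2
  have : ∀ᶠ E in (AbsolutelyContinuousOnInterval.totalLengthFilter ⊓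
      𝓟 (AbsolutelyContinuousOnInterval.disjWithin a b)),
      E ∈ AbsolutelyContinuousOnInterval.disjWithin a b :=
    mem_inf_of_right (mem_principal_self _)
  filter_upwards [this] with E hE
  rw [Finset.mul_sum]
  refine Finset.sum_le_sum fun i hi => ?_
  have := hE.1 i hi
  exact hK.dist_le_mul _ (hm _ this.1) _ (hm _ this.2)

/-- The tail estimate. -/
lemma tail_est (v' : ℝ → ℝ) (hi : ∀ a b : ℝ, IntervalIntegrable v' volume a b)
    (hint : IntegrableOn (fun r => |v' r| ^ 2) (Ioi 0)) (δ R t : ℝ) (hδ : 0 < δ) (hR : 0 ≤ R)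
    (hT : ∫ r in Ioi R, |v' r| ^ 2 ≤ 2 * δ ^ 2) (ht : R ≤ t) :
    |∫ s in R..t, v' s| ≤ δ * (t - R) + δ / 2 := by
  have hiR : IntegrableOn (fun r => |v' r| ^ 2) (Ioi R) := hint.mono_set (Ioi_subset_Ioi hR)
  have hii : IntervalIntegrable (fun r => |v' r| ^ 2) volume R t :=
    (intervalIntegrable_iff_integrableOn_Ioc_of_le ht).2 (hiR.mono_set Ioc_subset_Ioi_self)
  have h1 : |∫ s in R..t, v' s| ≤ ∫ s in R..t, |v' s| :=
    intervalIntegral.abs_integral_le_integral_abs ht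
  have h2 : ∫ s in R..t, |v' s| ≤ ∫ s in R..t, (δ + (1 / (4 * δ)) * |v' s| ^ 2) := by
    refine intervalIntegral.integral_mono_on ht (hi R t).abs
      (intervalIntegrable_const.add (hii.const_mul _)) fun s _ => ?_
    have : δ + (1 / (4 * δ)) * |v' s| ^ 2 - |v' s| = (2 * δ - |v' s|) ^ 2 / (4 * δ) := by
      field_simp; ring
    have h3 : 0 ≤ (2 * δ - |v' s|) ^ 2 / (4 * δ) := by positivity
    linarith
  rw [intervalIntegral.integral_add intervalIntegrable_const (hii.const_mul _),
    intervalIntegral.integral_const, intervalIntegral.integral_const_mul] at h2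
  have h4 : ∫ s in R..t, |v' s| ^ 2 ≤ ∫ r in Ioi R, |v' r| ^ 2 := by
    rw [intervalIntegral.integral_of_le ht]
    exact setIntegral_mono_set hiR (Filter.Eventually.of_forall fun s => by positivity)
      (Ioc_subset_Ioi_self.eventuallyLE)
  have h5 : (1 / (4 * δ)) * ∫ s in R..t, |v' s| ^ 2 ≤ (1 / (4 * δ)) * (2 * δ ^ 2) :=
    mul_le_mul_of_nonneg_left (h4.trans hT) (by positivity)
  have h6 : (1 / (4 * δ)) * (2 * δ ^ 2) = δ / 2 := by field_simp; ring
  rw [smul_eq_mul] at h2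
  linarith

/-- Lower and upper bound for the tail mass. -/
lemma mass_est (v : ℝ → ℝ) (δ R : ℝ) (hδ : 0 < δ) (hδ1 : δ ≤ 1 / 2)
    (hE : IntegrableOn (fun r => Real.exp (2 * (v r - r))) (Ioi R))
    (hv : ∀ t, R ≤ t → |v t - v R| ≤ δ * (t - R) + δ / 2) :
    |Real.log (2 * ∫ r in Ioi R, Real.exp (2 * (v r - r))) + 2 * R - 2 * v R| ≤ 3 * δ := by
  have key : ∀ c k : ℝ, c < 0 → (∫ r in Ioi R, Real.exp (k - c * R) * Real.exp (c * r)) =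
      Real.exp k / (-c) := by
    intro c k hc
    rw [integral_const_mul, integral_exp_mul_Ioi hc, Real.exp_sub]
    have := Real.exp_pos (c * R)
    field_simp
  have hint : ∀ c k : ℝ, c < 0 →
      IntegrableOn (fun r => Real.exp (k - c * R) * Real.exp (c * r)) (Ioi R) :=
    fun c k hc => (integrableOn_exp_mul_Ioi hc R).const_mul _
  have hc1 : -(2 * (1 - δ)) < 0 := by linarith
  have hc2 : -(2 * (1 + δ)) < 0 := by linarith
  have up : (∫ r in Ioi R, Real.exp (2 * (v r - r))) ≤
      Real.exp (2 * (v R - R) + δ) / (2 * (1 - δ)) := by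
    have := key _ (2 * (v R - R) + δ) hc1
    rw [neg_neg] at this
    rw [← this]
    refine setIntegral_mono_on hE (hint _ _ hc1) measurableSet_Ioi fun r hr => ?_
    rw [← Real.exp_add, Real.exp_le_exp]
    have := abs_le.1 (hv r (le_of_lt hr))
    nlinarith [this.1, this.2]
  have lo : Real.exp (2 * (v R - R) - δ) / (2 * (1 + δ)) ≤
      (∫ r in Ioi R, Real.exp (2 * (v r - r))) := by
    have := key _ (2 * (v R - R) - δ) hc2
    rw [neg_neg] at this
    rw [← this]
    refine setIntegral_mono_on (hint _ _ hc2) hE measurableSet_Ioi fun r hr => ?_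
    rw [← Real.exp_add, Real.exp_le_exp]
    have := abs_le.1 (hv r (le_of_lt hr))
    nlinarith [this.1, this.2]
  set M := ∫ r in Ioi R, Real.exp (2 * (v r - r))
  have hp : 0 < 1 - δ := by linarith
  have hp2 : 0 < 1 + δ := by linarith
  have hM : 0 < M := lt_of_lt_of_le (by positivity) lo
  have lup : Real.log (2 * M) ≤ 2 * (v R - R) + δ - Real.log (1 - δ) := by
    rw [← Real.log_exp (2 * (v R - R) + δ), ← Real.log_div (Real.exp_pos _).ne' hp.ne']
    refine Real.log_le_log (by positivity) ?_
    calc 2 * M ≤ 2 * (Real.exp (2 * (v R - R) + δ) / (2 * (1 - δ))) := by linarith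
      _ = _ := by field_simp
  have llo : 2 * (v R - R) - δ - Real.log (1 + δ) ≤ Real.log (2 * M) := by
    rw [← Real.log_exp (2 * (v R - R) - δ), ← Real.log_div (Real.exp_pos _).ne' hp2.ne']
    refine Real.log_le_log (by positivity) ?_
    calc _ = 2 * (Real.exp (2 * (v R - R) - δ) / (2 * (1 + δ))) := by field_simp
      _ ≤ _ := by linarith
  have l1 : Real.log (1 + δ) ≤ δ := by
    have := Real.log_le_sub_one_of_pos hp2; linarith
  have l2 : - Real.log (1 - δ) ≤ 2 * δ := by
    have := Real.one_sub_inv_le_log_of_pos hp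
    have h : (1 - δ)⁻¹ ≤ 1 + 2 * δ := by
      rw [inv_le_iff_one_le_mul₀ hp]; nlinarith
    linarith
  rw [abs_le]; constructor <;> linarith

open Filter Topology in
/-- Core version for the primitive. -/
lemma core (α : ℝ) (v v' : ℝ → ℝ) (hloc : ∀ R : ℝ, IntervalIntegrable v' volume 0 R)
    (hv : v = fun r => ∫ t in (0 : ℝ)..r, v' t)
    (hint : IntegrableOn (fun r => |v' r| ^ 2) (Set.Ioi 0))
    (hE : IntegrableOn (fun r => Real.exp (2 * (v r - r))) (Ioi 0))
    (hα : (∫ r in Set.Ioi (0 : ℝ), Real.exp (2 * (v r - r))) = α) (hα0 : 0 < α) :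
    2 * (Real.log (2 * α) + 1 / (2 * α) - 1) ≤
      ∫ r in Set.Ioi (0 : ℝ), |v' r| ^ 2 := by
  have hi : ∀ a b : ℝ, IntervalIntegrable v' volume a b := fun a b => (hloc a).symm.trans (hloc b)
  have hvc : Continuous v := by
    rw [hv]; exact intervalIntegral.continuous_primitive hi 0
  have hEc : Continuous (fun r => Real.exp (2 * (v r - r))) := by fun_prop
  set E : ℝ → ℝ := fun r => Real.exp (2 * (v r - r)) with hEdef
  let m : ℝ → ℝ := fun r => α - ∫ t in (0 : ℝ)..r, E t
  have hmd : ∀ r, HasDerivAt m (-E r) r := fun r => by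
    have := (intervalIntegral.integral_hasDerivAt_right (hEc.intervalIntegrable 0 r)
      hEc.stronglyMeasurable.stronglyMeasurableAtFilter hEc.continuousAt)
    simpa using this.const_sub α
  have hEp : ∀ r, 0 < E r := fun r => Real.exp_pos _
  have hmR : ∀ R, 0 ≤ R → m R = ∫ r in Ioi R, E r := fun R hR => by
    have := intervalIntegral.integral_Ioi_sub_Ioi hE hR
    simp only [m]; linarith
  have hanti : Antitone m := antitone_of_hasDerivAt_nonpos (fun r => hmd r)
    (fun r => by have := (hEp r).le; simp; linarith)
  have hmpos : ∀ R, 0 ≤ R → 0 < m R := fun R hR => by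
    rw [hmR R hR]
    rw [setIntegral_pos_iff_support_of_nonneg_ae (Eventually.of_forall fun r => (hEp r).le)
      (hE.mono_set (Ioi_subset_Ioi hR))]
    have : Function.support E = univ := by
      ext r; simp [(hEp r).ne']
    simp [this]
  let g : ℝ → ℝ := fun r => Real.log (2 * m r) + 2 * r - 2 * v r
  let φ : ℝ → ℝ := fun x => 2 * (x + Real.exp (-x) - 1)
  have hφc : ContDiff ℝ 1 φ := by fun_prop
  -- limit of `g`
  have hg0 : Tendsto g atTop (𝓝 0) := by
    rw [Metric.tendsto_atTop']
    intro ε hε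
    set δ := min (1 / 2) (ε / 6) with hδ
    have hδ0 : 0 < δ := by positivity
    have hδ1 : δ ≤ 1 / 2 := min_le_left _ _
    have hδ2 : δ ≤ ε / 6 := min_le_right _ _
    have hT : Tendsto (fun R : ℝ => ∫ r in Ioi R, |v' r| ^ 2) atTop (𝓝 0) :=
      tendsto_integral_Ioi_zero tendsto_id
    have hev := (hT.eventually (gt_mem_nhds (show (0 : ℝ) < 2 * δ ^ 2 by positivity))).and
      (eventually_ge_atTop 0)
    obtain ⟨N, hN⟩ := eventually_atTop.1 hev
    refine ⟨N, fun R hR => ?_⟩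
    obtain ⟨h1, h2⟩ := hN R hR.le
    have := mass_est v δ R hδ0 hδ1 (hE.mono_set (Ioi_subset_Ioi h2)) (fun t ht => by
      have h3 := tail_est v' hi hint δ R t hδ0 h2 h1.le ht
      rwa [← intervalIntegral.integral_interval_sub_left (hloc t) (hloc R),
        ← congrFun hv t, ← congrFun hv R] at h3)
    rw [← hmR R h2] at this
    rw [Real.dist_eq, sub_zero]
    change |g R| ≤ 3 * δ at this
    linarith
  have hlim : Tendsto (fun R => φ (g R) + ∫ r in Ioi (0 : ℝ), |v' r| ^ 2) atTop
      (𝓝 (φ 0 + ∫ r in Ioi (0 : ℝ), |v' r| ^ 2)) :=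
    ((hφc.continuous.tendsto 0).comp hg0).add_const _
  have hφ0 : φ 0 = 0 := by simp [φ]
  rw [hφ0, zero_add] at hlim
  refine ge_of_tendsto hlim ?_
  filter_upwards [eventually_ge_atTop 0] with R hR
  -- value at zero
  have hm0 : m 0 = α := by simp [m]
  have hv0 : v 0 = 0 := by simp [hv]
  have hV0 : φ (g 0) = 2 * (Real.log (2 * α) + 1 / (2 * α) - 1) := by
    simp only [φ, g, hm0, hv0, mul_zero, add_zero, sub_zero]
    rw [Real.exp_neg, Real.exp_log (by positivity), one_div]
  rw [← hV0]
  -- absolute continuity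
  have acv : AbsolutelyContinuousOnInterval v 0 R := by
    rw [hv]
    exact (hloc R).absolutelyContinuousOnInterval_intervalIntegral (by simp)
  have acm : AbsolutelyContinuousOnInterval m 0 R := by
    refine ContDiffOn.absolutelyContinuousOnInterval (ContDiff.contDiffOn ?_)
    rw [contDiff_one_iff_deriv]
    refine ⟨fun r => (hmd r).differentiableAt, ?_⟩
    have : deriv m = fun r => -E r := funext fun r => (hmd r).deriv
    rw [this]; exact hEc.neg
  have acl : AbsolutelyContinuousOnInterval (fun r => Real.log (2 * m r)) 0 R := by
    refine ac_comp (φ := fun y => Real.log (2 * y)) (c := m R) (d := m 0) acm ?_ ?_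
    · refine ContDiffOn.log (by fun_prop) fun y hy => ?_
      have h1 := hmpos R hR
      have h2 := hy.1
      have h3 : 0 < y := lt_of_lt_of_le h1 h2
      positivity
    · intro x hx
      rw [uIcc_of_le hR] at hx
      exact ⟨hanti hx.2, hanti hx.1⟩
  have acid : AbsolutelyContinuousOnInterval (fun r : ℝ => 2 * r) 0 R :=
    ContDiffOn.absolutelyContinuousOnInterval (by fun_prop)
  have acg : AbsolutelyContinuousOnInterval g 0 R :=
    (acl.fun_add acid).fun_sub (acv.const_mul 2)
  obtain ⟨C, hC⟩ := acg.exists_bound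
  have acV : AbsolutelyContinuousOnInterval (fun r => φ (g r)) 0 R :=
    ac_comp acg (c := -C) (d := C) hφc.contDiffOn (fun x hx => abs_le.1 (hC x hx))
  have hFTC := acV.integral_deriv_eq_sub
  have hii : IntervalIntegrable (fun r => |v' r| ^ 2) volume 0 R :=
    (intervalIntegrable_iff_integrableOn_Ioc_of_le hR).2 (hint.mono_set Ioc_subset_Ioi_self)
  have hder : ∀ᵐ x, x ∈ Icc 0 R → -|v' x| ^ 2 ≤ deriv (fun r => φ (g r)) x := by
    filter_upwards [(hloc R).ae_hasDerivAt_integral] with x hx hxR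
    have hdv : HasDerivAt v (v' x) x := by
      rw [hv]
      exact hx (by rwa [uIcc_of_le hR]) 0 (by simp)
    have hmx := hmpos x hxR.1
    have hdg : HasDerivAt g ((2 * (-E x)) / (2 * m x) + 2 * 1 - 2 * v' x) x :=
      ((((hmd x).const_mul 2).log (by positivity)).add ((hasDerivAt_id x).const_mul 2)).sub
        (hdv.const_mul 2)
    have hdV : HasDerivAt (fun r => φ (g r)) (2 * (((2 * (-E x)) / (2 * m x) + 2 * 1 - 2 * v' x)
        + Real.exp (-g x) * (-((2 * (-E x)) / (2 * m x) + 2 * 1 - 2 * v' x)))) x :=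
      (((hdg.add hdg.neg.exp).sub_const 1).const_mul 2)
    rw [hdV.deriv, sq_abs]
    have he : Real.exp (-g x) = E x / (2 * m x) := by
      have : -g x = 2 * (v x - x) - Real.log (2 * m x) := by simp only [g]; ring
      rw [this, Real.exp_sub, Real.exp_log (by positivity)]
    have he2 : (2 * (-E x)) / (2 * m x) = - 2 * Real.exp (-g x) := by
      rw [he]; field_simp
    rw [he2]
    nlinarith [sq_nonneg (2 * (1 - Real.exp (-g x)) - v' x)]
  have hmono : ∫ x in (0 : ℝ)..R, -|v' x| ^ 2 ≤ ∫ x in (0 : ℝ)..R, deriv (fun r => φ (g r)) x := by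
    refine intervalIntegral.integral_mono_ae_restrict hR hii.neg acV.intervalIntegrable_deriv ?_
    exact (ae_restrict_iff' measurableSet_Icc).2 hder
  rw [hFTC, intervalIntegral.integral_neg] at hmono
  have h4 : ∫ s in (0 : ℝ)..R, |v' s| ^ 2 ≤ ∫ r in Ioi (0 : ℝ), |v' r| ^ 2 := by
    rw [intervalIntegral.integral_of_le hR]
    exact setIntegral_mono_set hint (Eventually.of_forall fun s => by positivity)
      (Ioc_subset_Ioi_self.eventuallyLE)
  linarith

/-- **Sharp lower bound for `n = 2`** (Li–Zhu, inequality (4.1)).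
Let `α > 1/2` and let `v` be locally absolutely continuous on `[0,∞)` (with a.e.
derivative `v'`, so that `v r = ∫₀^r v'`), with `v 0 = 0`, `∫₀^∞ |v'|² < ∞` and
`∫₀^∞ e^{2(v-r)} dr = α`. Then `∫₀^∞ |v'|² dr ≥ 2 (ln (2α) + 1/(2α) - 1)`. -/
theorem sharp_lower_bound_dim_two (α : ℝ) (hα : 1 / 2 < α) (v v' : ℝ → ℝ)
    (hloc : ∀ R : ℝ, IntervalIntegrable v' volume 0 R)
    (hrep : ∀ r ∈ Set.Ici (0 : ℝ), v r = ∫ t in (0 : ℝ)..r, v' t)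
    (hv0 : v 0 = 0)
    (hint : IntegrableOn (fun r => |v' r| ^ 2) (Set.Ioi 0))
    (hconstraint : (∫ r in Set.Ioi (0 : ℝ), Real.exp (2 * (v r - r))) = α) :
    2 * (Real.log (2 * α) + 1 / (2 * α) - 1) ≤
      ∫ r in Set.Ioi (0 : ℝ), |v' r| ^ 2 := by
  have hα0 : 0 < α := by linarith
  have hc : (∫ r in Set.Ioi (0 : ℝ), Real.exp (2 * ((∫ t in (0 : ℝ)..r, v' t) - r))) = α := by
    rw [← hconstraint]
    refine setIntegral_congr_fun measurableSet_Ioi fun r hr => ?_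
    rw [hrep r (mem_Ici.2 (le_of_lt (mem_Ioi.1 hr)))]
  refine core α _ v' hloc rfl hint ?_ hc hα0
  by_contra h
  rw [integral_undef h] at hc
  linarith
end

section
/- Let r > 0, b ∈ ℝ, and let B_r(0) ⊂ ℝ² be the open disk of radius r centered at the origin. Let w be a C¹ function on the closed disk with w = b on the boundary circle ∂B_r(0), and suppose ∫_{B_r(0)} e^{2w(y)} dy = a with a > π r² e^{2b}. Then ∫_{B_r(0)} |∇w(y)|² dy ≥ 4π · ( ln( a e^{−2b}/(π r²) ) + (π r² e^{2b})/a − 1 ). -/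
open MeasureTheory Real Set Metric

/-- Inverse of a primitive of a positive density. -/
lemma aux_inverse (c d : ℝ) (hcd : c < d) (q : ℝ → ℝ) (hq : Continuous q)
    (qp : ∀ x ∈ Ioo c d, 0 < q x) (m : ℝ) (hm : ∫ z in c..d, q z = m) :
    0 < m ∧ ∃ R : ℝ → ℝ, Continuous R ∧ (∀ x, R x ∈ Icc c d) ∧ R 0 = c ∧ R m = d ∧
      (∀ y ∈ Ioo 0 m, R y ∈ Ioo c d ∧ HasDerivAt R (q (R y))⁻¹ y) := by
  have hm0 : 0 < m := by
    rw [← hm]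
    exact intervalIntegral.intervalIntegral_pos_of_pos_on (hq.intervalIntegrable _ _) qp hcd
  refine ⟨hm0, ?_⟩
  set Q : ℝ → ℝ := fun x => ∫ z in c..x, q z with hQ
  have hQd : ∀ x, HasDerivAt Q (q x) x := fun x =>
    intervalIntegral.integral_hasDerivAt_right (hq.intervalIntegrable _ _)
      (hq.stronglyMeasurableAtFilter _ _) hq.continuousAt
  have hQc : Continuous Q := continuous_iff_continuousAt.2 fun x => (hQd x).continuousAt
  have hQm : StrictMonoOn Q (Icc c d) := by
    apply strictMonoOn_of_deriv_pos (convex_Icc c d) hQc.continuousOn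
    intro x hx
    rw [interior_Icc] at hx
    rw [(hQd x).deriv]; exact qp x hx
  have hQcv : Q c = 0 := by simp [hQ]
  have hQdv : Q d = m := hm
  have hex : ∀ y : Icc (0:ℝ) m, ∃ z : Icc c d, Q z = y := by
    intro y
    have := intermediate_value_Icc hcd.le hQc.continuousOn
    rw [hQcv, hQdv] at this
    obtain ⟨z, hz, h⟩ := this y.2
    exact ⟨⟨z, hz⟩, h⟩
  choose R' hR' using hex
  have hcm : c ∈ Icc c d := ⟨le_rfl, hcd.le⟩
  have hdm : d ∈ Icc c d := ⟨hcd.le, le_rfl⟩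
  have hmono : Monotone R' := by
    intro x y hxy
    have : Q (R' x) ≤ Q (R' y) := by rw [hR', hR']; exact hxy
    exact (hQm.le_iff_le (R' x).2 (R' y).2).1 this
  have hsurj : Function.Surjective R' := by
    intro z
    have hz : Q z ∈ Icc 0 m := by
      rw [← hQcv, ← hQdv]
      exact ⟨hQm.monotoneOn hcm z.2 z.2.1, hQm.monotoneOn z.2 hdm z.2.2⟩
    refine ⟨⟨Q z, hz⟩, ?_⟩
    apply Subtype.ext
    exact hQm.injOn (R' _).2 z.2 (hR' _)
  have hcont : Continuous R' := hmono.continuous_of_surjective hsurj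
  refine ⟨fun x => R' (projIcc 0 m hm0.le x), by fun_prop, fun x => (R' _).2, ?_, ?_, ?_⟩
  · apply hQm.injOn (R' _).2 hcm
    rw [hR', hQcv]; simp
  · apply hQm.injOn (R' _).2 hdm
    rw [hR', hQdv]; simp
  · intro y hy
    have hval : ∀ y ∈ Ioo 0 m, Q (R' (projIcc 0 m hm0.le y)) = y := by
      intro y hy
      rw [hR', projIcc_of_mem hm0.le ⟨hy.1.le, hy.2.le⟩]
    have hin : (R' (projIcc 0 m hm0.le y) : ℝ) ∈ Ioo c d := by
      refine ⟨lt_of_le_of_ne (R' _).2.1 ?_, lt_of_le_of_ne (R' _).2.2 ?_⟩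
      · intro h
        have := hval y hy
        rw [← h, hQcv] at this
        exact hy.1.ne this
      · intro h
        have := hval y hy
        rw [h, hQdv] at this
        exact hy.2.ne this.symm
    refine ⟨hin, ?_⟩
    apply HasDerivAt.of_local_left_inverse (f := Q) _ (hQd _) (qp _ hin).ne'
    · filter_upwards [Ioo_mem_nhds hy.1 hy.2] with z hz using hval z hz
    · exact Continuous.continuousAt (by fun_prop)

/-- One dimensional transport map. -/
lemma aux_transport (a b c d : ℝ) (hab : a < b) (hcd : c < d) (p q : ℝ → ℝ)
    (hp : Continuous p) (hq : Continuous q)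
    (pp : ∀ x ∈ Ioo a b, 0 < p x) (qp : ∀ x ∈ Ioo c d, 0 < q x)
    (h : ∫ x in a..b, p x = ∫ z in c..d, q z) :
    ∃ T : ℝ → ℝ, Continuous T ∧ (∀ x, T x ∈ Icc c d) ∧ T a = c ∧ T b = d ∧
      (∀ x ∈ Ioo a b, T x ∈ Ioo c d) ∧
      (∀ x ∈ Ioo a b, HasDerivAt T (p x / q (T x)) x) := by
  obtain ⟨hm0, R, hRc, hRm, hR0, hR1, hRd⟩ := aux_inverse c d hcd q hq qp _ h.symm
  set m := ∫ x in a..b, p x with hm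
  set P : ℝ → ℝ := fun x => ∫ z in a..x, p z with hP
  have hPd : ∀ x, HasDerivAt P (p x) x := fun x =>
    intervalIntegral.integral_hasDerivAt_right (hp.intervalIntegrable _ _)
      (hp.stronglyMeasurableAtFilter _ _) hp.continuousAt
  have hPc : Continuous P := continuous_iff_continuousAt.2 fun x => (hPd x).continuousAt
  have hPa : P a = 0 := by simp [hP]
  have hPm : StrictMonoOn P (Icc a b) := by
    apply strictMonoOn_of_deriv_pos (convex_Icc a b) hPc.continuousOn
    intro x hx
    rw [interior_Icc] at hx
    rw [(hPd x).deriv]; exact pp x hx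
  have hPin : ∀ x ∈ Ioo a b, P x ∈ Ioo 0 m := by
    intro x hx
    rw [← hPa]
    exact ⟨hPm ⟨le_rfl, hab.le⟩ ⟨hx.1.le, hx.2.le⟩ hx.1,
      hPm ⟨hx.1.le, hx.2.le⟩ ⟨hab.le, le_rfl⟩ hx.2⟩
  refine ⟨fun x => R (P x), hRc.comp hPc, fun x => hRm _, (congrArg R hPa).trans hR0, hR1,
    fun x hx => (hRd _ (hPin x hx)).1, fun x hx => ?_⟩
  have := (hRd _ (hPin x hx)).2.comp x (hPd x)
  rw [div_eq_inv_mul]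
  exact this

/-- Derivative of a monotone map is integrable. -/
lemma aux_deriv_integrable (a b : ℝ) (hab : a ≤ b) (T T' : ℝ → ℝ) (hT : Continuous T)
    (hd : ∀ x ∈ Ioo a b, HasDerivAt T (T' x) x) (h0 : ∀ x ∈ Ioo a b, 0 ≤ T' x) :
    IntervalIntegrable T' volume a b := by
  rw [intervalIntegrable_iff_integrableOn_Ioc_of_le hab]
  exact intervalIntegral.integrableOn_deriv_of_nonneg hT.continuousOn hd h0

/-- Substitution. -/
lemma aux_subst (a b : ℝ) (hab : a ≤ b) (T T' φ : ℝ → ℝ) (hT : Continuous T)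
    (hd : ∀ x ∈ Ioo a b, HasDerivAt T (T' x) x) (h0 : ∀ x ∈ Ioo a b, 0 ≤ T' x)
    (hφ : Continuous φ) :
    IntervalIntegrable (fun x => T' x * φ (T x)) volume a b ∧
    ∫ x in a..b, T' x * φ (T x) = ∫ z in T a..T b, φ z := by
  have hi : IntervalIntegrable (fun x => T' x * φ (T x)) volume a b :=
    (aux_deriv_integrable a b hab T T' hT hd h0).mul_continuousOn
      (hφ.comp hT).continuousOn
  refine ⟨hi, ?_⟩
  have hQd : ∀ x, HasDerivAt (fun x => ∫ z in T a..x, φ z) (φ x) x := fun x =>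
    intervalIntegral.integral_hasDerivAt_right (hφ.intervalIntegrable _ _)
      (hφ.stronglyMeasurableAtFilter _ _) hφ.continuousAt
  have hQc : Continuous (fun x => ∫ z in T a..x, φ z) :=
    continuous_iff_continuousAt.2 fun x => (hQd x).continuousAt
  have := intervalIntegral.integral_eq_sub_of_hasDerivAt_of_le hab
    (f := fun x => ∫ z in T a..T x, φ z) (f' := fun x => T' x * φ (T x))
    (hQc.comp hT).continuousOn (fun x hx => by
      rw [mul_comm]
      exact (hQd (T x)).comp x (hd x hx)) hi
  rw [this]; simp

/-- Integration by parts plus Young's inequality. -/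
lemma aux_ibp (s l C : ℝ) (hs : 0 ≤ s) (hl : 0 < l) (v v' T T' : ℝ → ℝ) (hv : Continuous v)
    (hvs : v s = 0) (hvs' : v (-s) = 0) (hvd : ∀ y ∈ Ioo (-s) s, HasDerivAt v (v' y) y)
    (hv'm : Measurable v') (hv'b : ∀ y, |v' y| ≤ C)
    (hT : Continuous T) (hd : ∀ x ∈ Ioo (-s) s, HasDerivAt T (T' x) x)
    (h0 : ∀ x ∈ Ioo (-s) s, 0 ≤ T' x) :
    ∫ y in (-s)..s, exp (v y) * T' y ≤ T s - T (-s) + (1 / (2 * l)) * (∫ y in (-s)..s, v' y ^ 2)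
      + l / 2 * ∫ y in (-s)..s, exp (2 * v y) * T y ^ 2 := by
  have hss : -s ≤ s := by linarith
  have hTi := aux_deriv_integrable (-s) s hss T T' hT hd h0
  have hv'i : IntervalIntegrable v' volume (-s) s := by
    rw [intervalIntegrable_iff_integrableOn_Ioc_of_le hss]
    exact Measure.integrableOn_of_bounded (M := C) (by simp) hv'm.aestronglyMeasurable
      (Filter.Eventually.of_forall hv'b)
  have hv2i : IntervalIntegrable (fun y => v' y ^ 2) volume (-s) s := by
    rw [intervalIntegrable_iff_integrableOn_Ioc_of_le hss]
    exact Measure.integrableOn_of_bounded (M := C ^ 2) (by simp)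
      (hv'm.pow_const 2).aestronglyMeasurable
      (Filter.Eventually.of_forall fun y => by
        rw [norm_pow, Real.norm_eq_abs]
        exact pow_le_pow_left₀ (abs_nonneg _) (hv'b y) 2)
  have h1 : IntervalIntegrable (fun y => exp (v y) * T' y) volume (-s) s :=
    hTi.continuousOn_mul (by fun_prop)
  have h2 : IntervalIntegrable (fun y => (exp (v y) * T y) * v' y) volume (-s) s :=
    hv'i.continuousOn_mul (by fun_prop)
  have h3 : IntervalIntegrable (fun y => exp (2 * v y) * T y ^ 2) volume (-s) s :=
    Continuous.intervalIntegrable (by fun_prop) _ _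
  have key := intervalIntegral.integral_eq_sub_of_hasDerivAt_of_le hss
    (f := fun y => exp (v y) * T y) (f' := fun y => exp (v y) * T' y + (exp (v y) * T y) * v' y)
    (by fun_prop) (fun x hx => by
      have hh := (hvd x hx).exp.mul (hd x hx)
      have e : exp (v x) * T' x + (exp (v x) * T x) * v' x =
        exp (v x) * v' x * T x + exp (v x) * T' x := by ring
      rw [e]; exact hh) (h1.add h2)
  rw [intervalIntegral.integral_add h1 h2] at key
  simp only [hvs, hvs', exp_zero, one_mul] at key
  have h4 : -(∫ y in (-s)..s, (exp (v y) * T y) * v' y) ≤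
      ∫ y in (-s)..s, ((1 / (2 * l)) * v' y ^ 2 + l / 2 * (exp (2 * v y) * T y ^ 2)) := by
    rw [← intervalIntegral.integral_neg]
    apply intervalIntegral.integral_mono hss h2.neg ((hv2i.const_mul _).add (h3.const_mul _))
    intro y
    have e : exp (2 * v y) = exp (v y) ^ 2 := by rw [← exp_nat_mul]; norm_num
    have : 1 / (2 * l) * v' y ^ 2 + l / 2 * (exp (2 * v y) * T y ^ 2) + exp (v y) * T y * v' y
        = 1 / (2 * l) * (v' y + l * (exp (v y) * T y)) ^ 2 := by
      rw [e]; field_simp; ring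
    have h5 : 0 ≤ 1 / (2 * l) * (v' y + l * (exp (v y) * T y)) ^ 2 := by positivity
    simp only [Pi.neg_apply]
    linarith
  rw [intervalIntegral.integral_add (hv2i.const_mul _) (h3.const_mul _),
    intervalIntegral.integral_const_mul, intervalIntegral.integral_const_mul] at h4
  linarith

/-- The slice inequality. -/
lemma aux_slice (s S k l C : ℝ) (hs : 0 < s) (hS : 0 < S) (hk : 0 < k) (hl : 0 < l)
    (v v' G : ℝ → ℝ) (hv : Continuous v)
    (hvs : v s = 0) (hvs' : v (-s) = 0) (hvd : ∀ y ∈ Ioo (-s) s, HasDerivAt v (v' y) y)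
    (hv'm : Measurable v') (hv'b : ∀ y, |v' y| ≤ C)
    (hG : Continuous G) (hGp : ∀ z, 0 < G z)
    (hmass : ∫ y in (-s)..s, exp (2 * v y) = k * ∫ z in (-S)..S, G z ^ 2) :
    k * ∫ z in (-S)..S, G z ≤ k / 2 * (∫ y in (-s)..s, exp (v y)) + S
      + 1 / (4 * l) * (∫ y in (-s)..s, v' y ^ 2)
      + l / 4 * (k * ∫ z in (-S)..S, G z ^ 2 * z ^ 2) := by
  have hss : -s ≤ s := by linarith
  obtain ⟨T, hT, hTm, hTa, hTb, hTin, hTd⟩ := aux_transport (-s) s (-S) S (by linarith)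
    (by linarith) (fun y => exp (2 * v y)) (fun z => k * G z ^ 2) (by fun_prop) (by fun_prop)
    (fun x _ => exp_pos _) (fun x _ => by have := hGp x; positivity)
    (by rw [intervalIntegral.integral_const_mul]; exact hmass)
  set T' : ℝ → ℝ := fun x => exp (2 * v x) / (k * G (T x) ^ 2) with hT'
  have h0 : ∀ x, 0 ≤ T' x := fun x => by have := hGp (T x); positivity
  have hGne : ∀ z, G z ≠ 0 := fun z => (hGp z).ne'
  have ibp := aux_ibp s l C hs.le hl v v' T T' hv hvs hvs' hvd hv'm hv'b hT hTd (fun x _ => h0 x)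
  have hT'c : Continuous T' := by
    apply Continuous.div (by fun_prop) (by fun_prop)
    intro x; have := hGp (T x); positivity
  have s1 := (aux_subst (-s) s hss T T' (fun z => k * G z) hT hTd (fun x _ => h0 x)
    (by fun_prop)).2
  have s2 := (aux_subst (-s) s hss T T' (fun z => k * (G z ^ 2 * z ^ 2)) hT hTd (fun x _ => h0 x)
    (by fun_prop)).2
  rw [hTa, hTb, intervalIntegral.integral_const_mul] at s1 s2
  rw [hTa, hTb] at ibp
  have e2 : ∀ y, T' y * (k * (G (T y) ^ 2 * T y ^ 2)) = exp (2 * v y) * T y ^ 2 := by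
    intro y
    have := hGne (T y)
    simp only [hT']; field_simp
  have e1 : ∀ y, T' y * (k * G (T y)) ≤ 1 / 2 * (k * exp (v y) + exp (v y) * T' y) := by
    intro y
    have e : exp (2 * v y) = exp (v y) ^ 2 := by rw [← exp_nat_mul]; norm_num
    have hg := hGp (T y)
    have he := exp_pos (v y)
    have : 1 / 2 * (k * exp (v y) + exp (v y) * T' y) - T' y * (k * G (T y))
        = exp (v y) / (2 * k * G (T y) ^ 2) * (k * G (T y) - exp (v y)) ^ 2 := by
      simp only [hT']; rw [e]; field_simp; ring
    have h5 : 0 ≤ exp (v y) / (2 * k * G (T y) ^ 2) * (k * G (T y) - exp (v y)) ^ 2 := by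
      positivity
    linarith
  simp_rw [e2] at s2
  rw [s2] at ibp
  have m1 : ∫ y in (-s)..s, T' y * (k * G (T y)) ≤
      ∫ y in (-s)..s, 1 / 2 * (k * exp (v y) + exp (v y) * T' y) := by
    apply intervalIntegral.integral_mono hss _ _ e1
    · exact Continuous.intervalIntegrable (by fun_prop) _ _
    · exact Continuous.intervalIntegrable (by fun_prop) _ _
  rw [s1, intervalIntegral.integral_const_mul, intervalIntegral.integral_add
    (Continuous.intervalIntegrable (by fun_prop) _ _)
    (Continuous.intervalIntegrable (by fun_prop) _ _), intervalIntegral.integral_const_mul] at m1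
  have e3 : 1 / (4 * l) = 1 / 2 * (1 / (2 * l)) := by field_simp; norm_num
  rw [e3]
  linarith

/-- Quarter-circle boundary estimate. -/
lemma aux_quarter (τ : ℝ → ℝ) (hτ : Continuous τ) (hb : ∀ x, τ x ∈ Icc (-1) 1) :
    (∫ y in (0:ℝ)..1, τ √(1 - y ^ 2)) + ∫ x in (0:ℝ)..1, √(1 - τ x ^ 2) ≤ π / 2 := by
  have h1 : ∫ y in (0:ℝ)..1, τ √(1 - y ^ 2) = ∫ θ in (0:ℝ)..(π/2), τ (cos θ) * cos θ := by
    have := intervalIntegral.integral_comp_mul_deriv (a := 0) (b := π / 2) (f := sin) (f' := cos)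
      (g := fun y => τ √(1 - y ^ 2)) (fun x _ => hasDerivAt_sin x) (by fun_prop) (by fun_prop)
    rw [sin_zero, sin_pi_div_two] at this
    rw [← this]
    apply intervalIntegral.integral_congr
    intro θ hθ
    rw [uIcc_of_le (by positivity)] at hθ
    simp only [Function.comp]
    rw [← Real.cos_eq_sqrt_one_sub_sin_sq (by linarith [hθ.1, pi_pos]) hθ.2]
  have h2 : ∫ x in (0:ℝ)..1, √(1 - τ x ^ 2) =
      ∫ θ in (0:ℝ)..(π/2), √(1 - τ (cos θ) ^ 2) * sin θ := by
    have := intervalIntegral.integral_comp_mul_deriv (a := 0) (b := π / 2) (f := cos)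
      (f' := fun x => - sin x)
      (g := fun y => √(1 - τ y ^ 2)) (fun x _ => hasDerivAt_cos x) (by fun_prop) (by fun_prop)
    rw [cos_zero, cos_pi_div_two, intervalIntegral.integral_symm 0 1] at this
    simp only [mul_neg, intervalIntegral.integral_neg, Function.comp] at this
    linarith
  rw [h1, h2, ← intervalIntegral.integral_add (Continuous.intervalIntegrable (by fun_prop) _ _)
    (Continuous.intervalIntegrable (by fun_prop) _ _)]
  have : ∫ θ in (0:ℝ)..(π/2), (1:ℝ) = π / 2 := by simp
  refine le_trans ?_ this.le
  apply intervalIntegral.integral_mono (by positivity)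
    (Continuous.intervalIntegrable (by fun_prop) _ _) (by simp)
  intro θ
  have hh := hb (cos θ)
  have h3 : √(1 - τ (cos θ) ^ 2) ^ 2 = 1 - τ (cos θ) ^ 2 := sq_sqrt (by nlinarith [hh.1, hh.2])
  have := sin_sq_add_cos_sq θ
  simp only
  nlinarith [sq_nonneg (τ (cos θ) - cos θ), sq_nonneg (√(1 - τ (cos θ) ^ 2) - sin θ)]

/-- Boundary estimate. -/
lemma aux_boundary (T : ℝ → ℝ) (hT : Continuous T) (hb : ∀ x, T x ∈ Icc (-1) 1) :
    1 / 2 * (∫ y in (-1:ℝ)..1, (T √(1 - y ^ 2) - T (-√(1 - y ^ 2)))) +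
      ∫ x in (-1:ℝ)..1, √(1 - T x ^ 2) ≤ π := by
  have q1 := aux_quarter T hT hb
  have q2 := aux_quarter (fun x => - T (-x)) (by fun_prop)
    (fun x => by have := hb (-x); constructor <;> linarith [this.1, this.2])
  have split : ∀ f : ℝ → ℝ, Continuous f → ∫ y in (-1:ℝ)..1, f y =
      (∫ y in (0:ℝ)..1, f y) + ∫ y in (0:ℝ)..1, f (-y) := by
    intro f hf
    rw [← intervalIntegral.integral_add_adjacent_intervals (b := 0)
      (hf.intervalIntegrable _ _) (hf.intervalIntegrable _ _),
      intervalIntegral.integral_comp_neg, add_comm, neg_zero]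
  rw [split _ (by fun_prop), split _ (by fun_prop), intervalIntegral.integral_sub
    (Continuous.intervalIntegrable (by fun_prop) _ _)
    (Continuous.intervalIntegrable (by fun_prop) _ _)]
  simp only [neg_sq, intervalIntegral.integral_neg] at q2 ⊢
  rw [intervalIntegral.integral_sub
    (Continuous.intervalIntegrable (by fun_prop) _ _)
    (Continuous.intervalIntegrable (by fun_prop) _ _)]
  linarith

/-- The open unit disk in `ℝ × ℝ`. -/
def auxD : Set (ℝ × ℝ) := {p | p.1 ^ 2 + p.2 ^ 2 < 1}

lemma auxD_meas : MeasurableSet auxD :=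
  measurableSet_lt (by fun_prop) (by fun_prop)

lemma auxD_sub : auxD ⊆ Icc (-1) 1 ×ˢ Icc (-1) 1 := by
  rintro ⟨x, y⟩ h
  simp only [auxD, mem_ofPred_eq] at h
  refine ⟨⟨?_, ?_⟩, ⟨?_, ?_⟩⟩ <;> simp only <;> nlinarith [sq_nonneg x, sq_nonneg y]

lemma aux_mem_Ioo (x y : ℝ) (hx : x ∈ Ioo (-1 : ℝ) 1) :
    y ∈ Ioo (-√(1 - x ^ 2)) √(1 - x ^ 2) ↔ (x, y) ∈ auxD := by
  have h0 : 0 ≤ 1 - x ^ 2 := by nlinarith [hx.1, hx.2]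
  simp only [auxD, mem_ofPred_eq, mem_Ioo]
  rw [← abs_lt, ← Real.sqrt_sq_eq_abs, Real.sqrt_lt_sqrt_iff (sq_nonneg y)]
  constructor <;> intro h <;> linarith

lemma aux_notmem (x y : ℝ) (hx : x ∉ Ioo (-1 : ℝ) 1) : (x, y) ∉ auxD := by
  intro h
  apply hx
  simp only [auxD, mem_ofPred_eq] at h
  constructor <;> nlinarith [sq_nonneg y]

lemma aux_sqrt_pos (x : ℝ) (hx : x ∈ Ioo (-1 : ℝ) 1) : 0 < √(1 - x ^ 2) :=
  Real.sqrt_pos.2 (by nlinarith [hx.1, hx.2])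

lemma aux_fubini (F : ℝ × ℝ → ℝ) (hF : IntegrableOn F auxD) :
    IntervalIntegrable (fun x => ∫ y in (-√(1 - x ^ 2))..√(1 - x ^ 2), F (x, y)) volume (-1) 1 ∧
    ∫ p in auxD, F p = ∫ x in (-1 : ℝ)..1, ∫ y in (-√(1 - x ^ 2))..√(1 - x ^ 2), F (x, y) := by
  have hi : Integrable (auxD.indicator F) ((volume : Measure ℝ).prod volume) :=
    (integrable_indicator_iff auxD_meas).2 hF
  have e : (fun x => ∫ y, auxD.indicator F (x, y)) =
      (Ioo (-1 : ℝ) 1).indicator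
        (fun x => ∫ y in (-√(1 - x ^ 2))..√(1 - x ^ 2), F (x, y)) := by
    funext x
    by_cases hx : x ∈ Ioo (-1 : ℝ) 1
    · rw [indicator_of_mem hx, intervalIntegral.integral_of_le
        (by linarith [Real.sqrt_nonneg (1 - x ^ 2)]), integral_Ioc_eq_integral_Ioo,
        ← integral_indicator measurableSet_Ioo]
      congr 1
      funext y
      by_cases hy : y ∈ Ioo (-√(1 - x ^ 2)) √(1 - x ^ 2)
      · rw [indicator_of_mem hy, indicator_of_mem ((aux_mem_Ioo x y hx).1 hy)]
      · rw [indicator_of_notMem hy, indicator_of_notMem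
          (fun h => hy ((aux_mem_Ioo x y hx).2 h))]
    · rw [indicator_of_notMem hx]
      have : ∀ y, auxD.indicator F (x, y) = 0 := fun y =>
        indicator_of_notMem (aux_notmem x y hx) _
      simp [this]
  have h1 := hi.integral_prod_left
  rw [e, integrable_indicator_iff measurableSet_Ioo] at h1
  refine ⟨?_, ?_⟩
  · rw [intervalIntegrable_iff_integrableOn_Ioo_of_le (by norm_num)]
    exact h1
  · rw [← integral_indicator auxD_meas, Measure.volume_eq_prod, integral_prod _ hi, e,
      integral_indicator measurableSet_Ioo, intervalIntegral.integral_of_le (by norm_num),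
      integral_Ioc_eq_integral_Ioo]

lemma aux_swap_pre : Prod.swap ⁻¹' auxD = auxD := by
  ext ⟨x, y⟩
  simp only [auxD, mem_preimage, mem_ofPred_eq, Prod.swap]
  rw [add_comm]

lemma aux_fubini_swap (F : ℝ × ℝ → ℝ) (hF : IntegrableOn F auxD) :
    IntervalIntegrable (fun y => ∫ x in (-√(1 - y ^ 2))..√(1 - y ^ 2), F (x, y)) volume (-1) 1 ∧
    ∫ p in auxD, F p = ∫ y in (-1 : ℝ)..1, ∫ x in (-√(1 - y ^ 2))..√(1 - y ^ 2), F (x, y) := by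
  have mp : MeasurePreserving (Prod.swap : ℝ × ℝ → ℝ × ℝ) volume volume :=
    Measure.measurePreserving_swap
  have me : MeasurableEmbedding (Prod.swap : ℝ × ℝ → ℝ × ℝ) :=
    MeasurableEquiv.prodComm.measurableEmbedding
  have h1 : IntegrableOn (F ∘ Prod.swap) auxD := by
    have := (mp.integrableOn_comp_preimage me (f := F) (s := auxD)).2 hF
    rwa [aux_swap_pre] at this
  have h2 := mp.setIntegral_preimage_emb me F auxD
  rw [aux_swap_pre] at h2
  rw [← h2]
  exact aux_fubini _ h1

lemma aux_cont_int (F : ℝ × ℝ → ℝ) (hF : Continuous F) : IntegrableOn F auxD :=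
  (hF.continuousOn.integrableOn_compact (isCompact_Icc.prod isCompact_Icc)).mono_set auxD_sub

lemma aux_vol : volume auxD < ⊤ :=
  (measure_mono auxD_sub).trans_lt (isCompact_Icc.prod isCompact_Icc).measure_lt_top

lemma aux_bdd_int (F : ℝ × ℝ → ℝ) (hF : Measurable F) (C : ℝ) (hC : ∀ p, |F p| ≤ C) :
    IntegrableOn (fun p => F p ^ 2) auxD := by
  refine Measure.integrableOn_of_bounded (M := C ^ 2) aux_vol.ne
    (hF.pow_const 2).aestronglyMeasurable (Filter.Eventually.of_forall fun y => ?_)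
  rw [norm_pow, Real.norm_eq_abs]
  exact pow_le_pow_left₀ (abs_nonneg _) (hC y) 2

lemma aux_fst_int (h : ℝ → ℝ) (hh : IntervalIntegrable h volume (-1) 1) (F : ℝ × ℝ → ℝ)
    (hF : Continuous F) : IntegrableOn (fun p => h p.1 * F p) auxD := by
  have h1 : IntegrableOn h (Icc (-1) 1) := by
    rwa [← intervalIntegrable_iff_integrableOn_Icc_of_le (by norm_num)]
  have h2 : IntegrableOn (fun _ : ℝ => (1:ℝ)) (Icc (-1) 1) := by simp
  have h3 : IntegrableOn (fun p : ℝ × ℝ => h p.1 * 1) (Icc (-1) 1 ×ˢ Icc (-1) 1) := by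
    have := Integrable.mul_prod h1 h2
    rw [Measure.prod_restrict] at this
    exact this
  have h4 : IntegrableOn (fun p : ℝ × ℝ => h p.1 * 1 * F p) (Icc (-1) 1 ×ˢ Icc (-1) 1) :=
    h3.mul_continuousOn hF.continuousOn (isCompact_Icc.prod isCompact_Icc)
  simp only [mul_one] at h4
  exact h4.mono_set auxD_sub

lemma aux_radial (φ : ℝ → ℝ) (hφ : ContinuousOn φ (Icc 0 1)) :
    ∫ p in auxD, φ (p.1 ^ 2 + p.2 ^ 2) = π * ∫ σ in (0:ℝ)..1, φ σ := by
  rw [← integral_indicator auxD_meas, ← integral_comp_polarCoord_symm]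
  have e : ∀ p ∈ polarCoord.target, p.1 • (auxD.indicator (fun p => φ (p.1 ^ 2 + p.2 ^ 2)))
      (polarCoord.symm p) = (Ioo (0:ℝ) 1).indicator (fun r => r * φ (r ^ 2)) p.1 * 1 := by
    rintro ⟨ρ, θ⟩ hp
    simp only [polarCoord_target, mem_prod, mem_Ioi] at hp
    have h1 : (ρ * cos θ) ^ 2 + (ρ * sin θ) ^ 2 = ρ ^ 2 := by
      rw [mul_pow, mul_pow, ← mul_add, cos_sq_add_sin_sq, mul_one]
    simp only [polarCoord_symm_apply, smul_eq_mul, mul_one]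
    by_cases hr : ρ ∈ Ioo (0:ℝ) 1
    · rw [indicator_of_mem hr, indicator_of_mem]
      · simp only [h1]
      · simp only [auxD, mem_ofPred_eq, h1]; nlinarith [hr.1, hr.2]
    · rw [indicator_of_notMem hr, indicator_of_notMem, mul_zero]
      simp only [auxD, mem_ofPred_eq, h1]
      intro h
      exact hr ⟨hp.1, by nlinarith [hp.1]⟩
  rw [setIntegral_congr_fun polarCoord.open_target.measurableSet e, polarCoord_target,
    Measure.volume_eq_prod, setIntegral_prod_mul (fun r : ℝ => (Ioo (0:ℝ) 1).indicator
      (fun r => r * φ (r ^ 2)) r) (fun _ : ℝ => (1:ℝ)),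
    setIntegral_indicator measurableSet_Ioo]
  have h2 : Ioi (0:ℝ) ∩ Ioo 0 1 = Ioo 0 1 := by
    ext x; simp only [mem_inter_iff, mem_Ioi, mem_Ioo]; tauto
  rw [h2, ← integral_Ioc_eq_integral_Ioo, ← intervalIntegral.integral_of_le (by norm_num)]
  have h3 := intervalIntegral.integral_comp_mul_deriv' (a := 0) (b := 1)
    (f := fun r : ℝ => r ^ 2) (f' := fun r => 2 * r) (g := φ)
    (fun x _ => by simpa using hasDerivAt_pow 2 x) (by fun_prop)
    (by
      apply hφ.mono
      rintro _ ⟨x, hx, rfl⟩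
      rw [uIcc_of_le (by norm_num)] at hx
      exact ⟨by positivity, by simp only; nlinarith [hx.1, hx.2]⟩)
  have h4 : ∫ x in (0:ℝ)..1, (φ ∘ fun r => r ^ 2) x * (2 * x) =
      2 * ∫ x in (0:ℝ)..1, x * φ (x ^ 2) := by
    rw [← intervalIntegral.integral_const_mul]
    congr 1; funext x; simp only [Function.comp]; ring
  rw [h4] at h3
  simp only [one_pow, ne_eq, OfNat.ofNat_ne_zero, not_false_eq_true, zero_pow] at h3
  rw [← h3]
  have : ∫ y in Ioo (-π) π, (1:ℝ) = 2 * π := by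
    simp [pi_pos.le]; ring
  rw [this]; ring

lemma aux_int_one (t : ℝ) (ht : 0 < t) :
    ∫ σ in (0:ℝ)..1, ((1 + t) / (1 + t * σ)) ^ 2 = 1 + t := by
  have hp : ∀ x ∈ uIcc (0:ℝ) 1, 0 < 1 + t * x := by
    intro x hx
    rw [uIcc_of_le (by norm_num)] at hx
    have := hx.1
    positivity
  rw [intervalIntegral.integral_eq_sub_of_hasDerivAt
    (f := fun x => (1 + t) ^ 2 * (x / (1 + t * x)))]
  · simp; field_simp
  · intro x hx
    have h := hp x hx
    have h1 : HasDerivAt (fun x => 1 + t * x) t x := by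
      simpa using ((hasDerivAt_id x).const_mul t).const_add 1
    have := ((hasDerivAt_id x).div h1 h.ne').const_mul ((1 + t) ^ 2)
    refine this.congr_deriv ?_
    simp only [id]; field_simp; ring
  · apply ContinuousOn.intervalIntegrable
    apply ContinuousOn.pow
    apply ContinuousOn.div (by fun_prop) (by fun_prop)
    intro x hx; exact (hp x hx).ne'

lemma aux_int_two (t : ℝ) (ht : 0 < t) :
    ∫ σ in (0:ℝ)..1, ((1 + t) / (1 + t * σ) -
      (2 * t / (1 + t)) / 4 * (((1 + t) / (1 + t * σ)) ^ 2 * σ)) =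
      (1 + t) / (2 * t) * (log (1 + t) + 1 - 1 / (1 + t)) := by
  have hp : ∀ x ∈ uIcc (0:ℝ) 1, 0 < 1 + t * x := by
    intro x hx
    rw [uIcc_of_le (by norm_num)] at hx
    have := hx.1
    positivity
  rw [intervalIntegral.integral_eq_sub_of_hasDerivAt
    (f := fun x => (1 + t) / (2 * t) * (log (1 + t * x) - 1 / (1 + t * x)))]
  · simp; ring
  · intro x hx
    have h := hp x hx
    have h1 : HasDerivAt (fun x => 1 + t * x) t x := by
      simpa using ((hasDerivAt_id x).const_mul t).const_add 1
    have := ((h1.log h.ne').sub ((hasDerivAt_const x (1:ℝ)).div h1 h.ne')).const_mul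
      ((1 + t) / (2 * t))
    refine this.congr_deriv ?_
    field_simp; ring
  · apply ContinuousOn.intervalIntegrable
    have : ContinuousOn (fun σ => (1 + t) / (1 + t * σ)) (uIcc 0 1) := by
      apply ContinuousOn.div (by fun_prop) (by fun_prop)
      intro x hx; exact (hp x hx).ne'
    fun_prop

lemma aux_param_cont (F : ℝ × ℝ → ℝ) (hF : Continuous F) :
    Continuous (fun x => ∫ y in (-√(1 - x ^ 2))..√(1 - x ^ 2), F (x, y)) := by
  have e : (fun x => ∫ y in (-√(1 - x ^ 2))..√(1 - x ^ 2), F (x, y)) =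
      fun x => (∫ y in (0:ℝ)..√(1 - x ^ 2), F (x, y)) - ∫ y in (0:ℝ)..(-√(1 - x ^ 2)), F (x, y) := by
    funext x
    rw [intervalIntegral.integral_interval_sub_left]
    · exact Continuous.intervalIntegrable (by fun_prop) _ _
    · exact Continuous.intervalIntegrable (by fun_prop) _ _
  rw [e]
  have h1 : Continuous (Function.uncurry fun x y => F (x, y)) := hF
  exact (intervalIntegral.continuous_parametric_intervalIntegral_of_continuous h1
    (by fun_prop)).sub
    (intervalIntegral.continuous_parametric_intervalIntegral_of_continuous h1 (by fun_prop))

lemma aux_core (u ux uy : ℝ × ℝ → ℝ) (C t : ℝ) (ht : 0 < t) (hu : Continuous u)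
    (hxm : Measurable ux) (hym : Measurable uy) (hxb : ∀ p, |ux p| ≤ C) (hyb : ∀ p, |uy p| ≤ C)
    (hxd : ∀ x y, (x, y) ∈ auxD → HasDerivAt (fun x => u (x, y)) (ux (x, y)) x)
    (hyd : ∀ x y, (x, y) ∈ auxD → HasDerivAt (fun y => u (x, y)) (uy (x, y)) y)
    (hu0 : ∀ x y, x ^ 2 + y ^ 2 = 1 → u (x, y) = 0)
    (hmass : ∫ p in auxD, exp (2 * u p) = π * (1 + t)) :
    4 * π * (log (1 + t) + 1 / (1 + t) - 1) ≤ (∫ p in auxD, ux p ^ 2) + ∫ p in auxD, uy p ^ 2 := by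
  set l : ℝ := 2 * t / (1 + t) with hl
  have hl0 : 0 < l := by positivity
  set s : ℝ → ℝ := fun x => √(1 - x ^ 2) with hs
  have hsc : Continuous s := by fun_prop
  have hs1 : ∀ x, s x ≤ 1 := fun x => by
    rw [hs]; exact Real.sqrt_le_one.2 (by nlinarith [sq_nonneg x])
  have hs0 : ∀ x, 0 ≤ s x := fun x => Real.sqrt_nonneg _
  have hsq : ∀ x ∈ Ioo (-1:ℝ) 1, s x ^ 2 = 1 - x ^ 2 := fun x hx =>
    Real.sq_sqrt (by nlinarith [hx.1, hx.2])
  set G : ℝ × ℝ → ℝ := fun p => (1 + t) / (1 + t * (p.1 ^ 2 + p.2 ^ 2)) with hG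
  have hGp : ∀ p, 0 < G p := fun p => by positivity
  have hGc : Continuous G := by
    apply Continuous.div (by fun_prop) (by fun_prop)
    intro p; positivity
  set m : ℝ → ℝ := fun x => ∫ y in (-s x)..s x, exp (2 * u (x, y)) with hm
  set M : ℝ → ℝ := fun x => ∫ y in (-s x)..s x, G (x, y) ^ 2 with hM
  have hmc : Continuous m := aux_param_cont (fun p => exp (2 * u p)) (by fun_prop)
  have hMc : Continuous M := aux_param_cont (fun p => G p ^ 2) (by fun_prop)
  have hmp : ∀ x ∈ Ioo (-1:ℝ) 1, 0 < m x := fun x hx => by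
    have := aux_sqrt_pos x hx
    apply intervalIntegral.intervalIntegral_pos_of_pos_on
      (Continuous.intervalIntegrable (by fun_prop) _ _) (fun y _ => exp_pos _)
    change -√(1 - x ^ 2) < √(1 - x ^ 2)
    linarith
  have hMp : ∀ x ∈ Ioo (-1:ℝ) 1, 0 < M x := fun x hx => by
    have := aux_sqrt_pos x hx
    apply intervalIntegral.intervalIntegral_pos_of_pos_on
      (Continuous.intervalIntegrable (by fun_prop) _ _) (fun y _ => by have := hGp (x, y); positivity)
    change -√(1 - x ^ 2) < √(1 - x ^ 2)
    linarith
  have hcφ : ContinuousOn (fun σ => (1 + t) / (1 + t * σ)) (Icc 0 1) := by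
    apply ContinuousOn.div (by fun_prop) (by fun_prop)
    intro x hx; have := hx.1; positivity
  have hmM : ∫ x in (-1:ℝ)..1, m x = ∫ x in (-1:ℝ)..1, M x := by
    have h1 := (aux_fubini (fun p => exp (2 * u p)) (aux_cont_int _ (by fun_prop))).2
    have h2 := (aux_fubini (fun p => G p ^ 2) (aux_cont_int _ (by fun_prop))).2
    have h3 := aux_radial (fun σ => ((1 + t) / (1 + t * σ)) ^ 2) (hcφ.pow 2)
    rw [aux_int_one t ht] at h3
    rw [hmass] at h1
    exact h1.symm.trans (h3.symm.trans h2)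
  obtain ⟨T, hT, hTm, hTa, hTb, hTin, hTd⟩ := aux_transport (-1) 1 (-1) 1 (by norm_num)
    (by norm_num) m M hmc hMc hmp hMp hmM
  set T' : ℝ → ℝ := fun x => m x / M (T x) with hT'
  have hT'0 : ∀ x ∈ Ioo (-1:ℝ) 1, 0 < T' x := fun x hx =>
    div_pos (hmp x hx) (hMp _ (hTin x hx))
  have h11 : (-1:ℝ) ≤ 1 := by norm_num
  have hT'i := aux_deriv_integrable (-1) 1 h11 T T' hT hTd (fun x hx => (hT'0 x hx).le)
  have sub := fun φ hφ => aux_subst (-1) 1 h11 T T' φ hT hTd (fun x hx => (hT'0 x hx).le) hφ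
  rw [hTa, hTb] at sub
  -- slices
  set H1 : ℝ → ℝ := fun x => ∫ z in (-s x)..s x, G (x, z) with hH1
  set H2 : ℝ → ℝ := fun x => ∫ z in (-s x)..s x, G (x, z) ^ 2 * z ^ 2 with hH2
  have hH1c : Continuous H1 := aux_param_cont G hGc
  have hH2c : Continuous H2 := aux_param_cont (fun p => G p ^ 2 * p.2 ^ 2) (by fun_prop)
  set E1 : ℝ → ℝ := fun x => ∫ y in (-s x)..s x, exp (u (x, y)) with hE1
  have hE1c : Continuous E1 := aux_param_cont (fun p => exp (u p)) (by fun_prop)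
  set Q : ℝ → ℝ := fun x => ∫ y in (-s x)..s x, uy (x, y) ^ 2 with hQ
  have fQ : IntervalIntegrable Q volume (-1) 1 ∧ ∫ p in auxD, uy p ^ 2 = ∫ x in (-1:ℝ)..1, Q x :=
    aux_fubini (fun p => uy p ^ 2) (aux_bdd_int uy hym C hyb)
  have slice : ∀ x ∈ Ioo (-1:ℝ) 1, T' x * H1 (T x) ≤ 1 / 2 * (T' x * E1 x) + s (T x)
      + 1 / (4 * l) * Q x + l / 4 * (T' x * H2 (T x)) := by
    intro x hx
    have := aux_slice (s x) (s (T x)) (T' x) l C (aux_sqrt_pos x hx)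
      (aux_sqrt_pos _ (hTin x hx)) (hT'0 x hx) hl0 (fun y => u (x, y)) (fun y => uy (x, y))
      (fun z => G (T x, z)) (by fun_prop)
      (hu0 _ _ (by rw [hsq x hx]; ring)) (hu0 _ _ (by rw [neg_sq, hsq x hx]; ring))
      (fun y hy => hyd x y ((aux_mem_Ioo x y hx).1 hy)) (by fun_prop) (fun y => hyb _)
      (by fun_prop) (fun z => hGp _)
      (by
        have h1 := hMp _ (hTin x hx)
        change m x = T' x * M (T x)
        simp only [hT']; field_simp)
    change T' x * H1 (T x) ≤ T' x / 2 * E1 x + s (T x)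
      + 1 / (4 * l) * Q x + l / 4 * (T' x * H2 (T x)) at this
    linarith
  have i2 : IntervalIntegrable (fun x => T' x * E1 x) volume (-1) 1 :=
    hT'i.mul_continuousOn hE1c.continuousOn
  have i3 : IntervalIntegrable (fun x => s (T x)) volume (-1) 1 :=
    Continuous.intervalIntegrable (by fun_prop) _ _
  have i5 := (sub H2 hH2c).1
  have int1 := intervalIntegral.integral_mono_on_of_le_Ioo h11 (sub H1 hH1c).1
    ((((i2.const_mul (1/2)).add i3).add (fQ.1.const_mul (1 / (4 * l)))).add
      (i5.const_mul (l / 4))) slice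
  rw [intervalIntegral.integral_add (((i2.const_mul (1/2)).add i3).add
      (fQ.1.const_mul (1 / (4 * l)))) (i5.const_mul (l / 4)),
    intervalIntegral.integral_add ((i2.const_mul (1/2)).add i3) (fQ.1.const_mul (1 / (4 * l))),
    intervalIntegral.integral_add (i2.const_mul (1/2)) i3,
    intervalIntegral.integral_const_mul, intervalIntegral.integral_const_mul,
    intervalIntegral.integral_const_mul, (sub H1 hH1c).2, (sub H2 hH2c).2, ← fQ.2] at int1
  -- horizontal
  have iTE : IntegrableOn (fun p => T' p.1 * exp (u p)) auxD :=
    aux_fst_int T' hT'i (fun p => exp (u p)) (by fun_prop)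
  have f1 := aux_fubini _ iTE
  have f2 := aux_fubini_swap _ iTE
  have hTE : ∫ x in (-1:ℝ)..1, T' x * E1 x =
      ∫ y in (-1:ℝ)..1, ∫ x in (-s y)..s y, T' x * exp (u (x, y)) := by
    refine Eq.trans ?_ (f1.2.symm.trans f2.2)
    congr 1; funext x
    exact (intervalIntegral.integral_const_mul _ _).symm
  set P : ℝ → ℝ := fun y => ∫ x in (-s y)..s y, ux (x, y) ^ 2 with hP
  have fP : IntervalIntegrable P volume (-1) 1 ∧ ∫ p in auxD, ux p ^ 2 = ∫ x in (-1:ℝ)..1, P x :=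
    aux_fubini_swap (fun p => ux p ^ 2) (aux_bdd_int ux hxm C hxb)
  set V : ℝ → ℝ := fun y => ∫ x in (-s y)..s y, exp (2 * u (x, y)) * T x ^ 2 with hV
  have iV : IntegrableOn (fun p : ℝ × ℝ => exp (2 * u p) * T p.1 ^ 2) auxD :=
    aux_cont_int _ (by fun_prop)
  have fV : IntervalIntegrable V volume (-1) 1 ∧
    ∫ p in auxD, exp (2 * u p) * T p.1 ^ 2 = ∫ x in (-1:ℝ)..1, V x := aux_fubini_swap _ iV
  have hslice : ∀ y ∈ Ioo (-1:ℝ) 1, (∫ x in (-s y)..s y, T' x * exp (u (x, y))) ≤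
      (T (s y) - T (-s y)) + 1 / (2 * l) * P y + l / 2 * V y := by
    intro y hy
    have hsub : ∀ x ∈ Ioo (-s y) (s y), x ∈ Ioo (-1:ℝ) 1 := fun x hx =>
      ⟨by linarith [hx.1, hs1 y], by linarith [hx.2, hs1 y]⟩
    have := aux_ibp (s y) l C (hs0 y) hl0 (fun x => u (x, y)) (fun x => ux (x, y)) T T'
      (by fun_prop) (hu0 _ _ (by rw [hsq y hy]; ring)) (hu0 _ _ (by rw [neg_sq, hsq y hy]; ring))
      (fun x hx => hxd x y (by
        have := (aux_mem_Ioo y x hy).1 hx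
        simp only [auxD, mem_ofPred_eq] at this ⊢
        linarith)) (by fun_prop) (fun x => hxb _) hT (fun x hx => hTd x (hsub x hx))
      (fun x hx => (hT'0 x (hsub x hx)).le)
    refine le_trans (le_of_eq ?_) this
    congr 1; funext x; ring
  have iB : IntervalIntegrable (fun y => T (s y) - T (-s y)) volume (-1) 1 :=
    Continuous.intervalIntegrable (by fun_prop) _ _
  have int2 := intervalIntegral.integral_mono_on_of_le_Ioo h11 f2.1
    ((iB.add (fP.1.const_mul (1 / (2 * l)))).add (fV.1.const_mul (l / 2))) hslice
  rw [intervalIntegral.integral_add (iB.add (fP.1.const_mul (1 / (2 * l))))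
      (fV.1.const_mul (l / 2)), intervalIntegral.integral_add iB (fP.1.const_mul (1 / (2 * l))),
    intervalIntegral.integral_const_mul, intervalIntegral.integral_const_mul, ← fP.2, ← fV.2]
    at int2
  have hVM : ∫ p in auxD, exp (2 * u p) * T p.1 ^ 2 = ∫ x in (-1:ℝ)..1, M x * x ^ 2 := by
    rw [(aux_fubini _ iV).2, ← (sub (fun x => M x * x ^ 2) (by fun_prop)).2]
    apply intervalIntegral.integral_congr_Ioo_of_le h11
    intro x hx
    have h1 := hMp _ (hTin x hx)
    simp only [intervalIntegral.integral_mul_const]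
    change m x * T x ^ 2 = _
    simp only [hT']; field_simp
  have bd := aux_boundary T hT hTm
  change 1 / 2 * (∫ y in (-1:ℝ)..1, (T (s y) - T (-s y))) + ∫ x in (-1:ℝ)..1, s (T x) ≤ π at bd
  -- explicit constants
  have g1 : ∫ p in auxD, G p = ∫ x in (-1:ℝ)..1, H1 x := (aux_fubini G (aux_cont_int _ hGc)).2
  have g2 : ∫ p in auxD, G p ^ 2 * p.2 ^ 2 = ∫ x in (-1:ℝ)..1, H2 x :=
    (aux_fubini (fun p => G p ^ 2 * p.2 ^ 2) (aux_cont_int _ (by fun_prop))).2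
  have g3 : ∫ p in auxD, G p ^ 2 * p.1 ^ 2 = ∫ x in (-1:ℝ)..1, M x * x ^ 2 := by
    rw [(aux_fubini (fun p => G p ^ 2 * p.1 ^ 2) (aux_cont_int _ (by fun_prop))).2]
    congr 1; funext x
    simp only [intervalIntegral.integral_mul_const]
    rfl
  have g4 : (∫ p in auxD, G p) - l / 4 * ((∫ p in auxD, G p ^ 2 * p.2 ^ 2) +
      ∫ p in auxD, G p ^ 2 * p.1 ^ 2) =
      π * ((1 + t) / (2 * t) * (log (1 + t) + 1 - 1 / (1 + t))) := by
    rw [← aux_int_two t ht, ← aux_radial _ (by fun_prop), ← integral_add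
      (aux_cont_int _ (by fun_prop)) (aux_cont_int _ (by fun_prop)), ← integral_const_mul,
      ← integral_sub (aux_cont_int _ hGc) (aux_cont_int _ (by fun_prop))]
    congr 1; funext p
    simp only [hG, hl]; ring
  have fin : π * ((1 + t) / (2 * t) * (log (1 + t) + 1 - 1 / (1 + t))) - π ≤
      1 / (4 * l) * ((∫ p in auxD, ux p ^ 2) + ∫ p in auxD, uy p ^ 2) := by
    have e3 : 1 / (4 * l) = 1 / 2 * (1 / (2 * l)) := by field_simp; norm_num
    rw [← g4, g1, g2, g3]
    rw [hTE] at int1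
    rw [hVM] at int2
    rw [e3] at int1 ⊢
    linarith
  have fin2 := mul_le_mul_of_nonneg_left fin (by positivity : 0 ≤ 4 * l)
  have e4 : 4 * l * (1 / (4 * l) * ((∫ p in auxD, ux p ^ 2) + ∫ p in auxD, uy p ^ 2)) =
    (∫ p in auxD, ux p ^ 2) + ∫ p in auxD, uy p ^ 2 := by field_simp
  have e5 : 4 * l * (π * ((1 + t) / (2 * t) * (log (1 + t) + 1 - 1 / (1 + t))) - π) =
      4 * π * (log (1 + t) + 1 / (1 + t) - 1) := by
    simp only [hl]; field_simp; ring
  linarith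

/-- Identification of `ℝ × ℝ` with the Euclidean plane. -/
noncomputable def auxE (p : ℝ × ℝ) : EuclideanSpace ℝ (Fin 2) := !₂[p.1, p.2]

lemma auxE_cont : Continuous auxE := by
  unfold auxE
  apply (PiLp.continuous_toLp 2 _).comp
  refine continuous_pi fun i => ?_
  fin_cases i
  · exact continuous_fst
  · exact continuous_snd

lemma auxE_norm (p : ℝ × ℝ) : ‖auxE p‖ = √(p.1 ^ 2 + p.2 ^ 2) := by
  rw [EuclideanSpace.norm_eq]
  simp [auxE, Fin.sum_univ_two]

lemma auxE_mp : MeasurePreserving auxE volume volume := by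
  have h1 := (volume_preserving_finTwoArrow ℝ).symm
  have h2 := (PiLp.volume_preserving_toLp (Fin 2)).comp h1
  exact h2

lemma auxE_me : MeasurableEmbedding auxE := by
  have h1 := (MeasurableEquiv.finTwoArrow (α := ℝ)).symm.measurableEmbedding
  have h2 := (MeasurableEquiv.toLp 2 (Fin 2 → ℝ)).measurableEmbedding.comp h1
  exact h2

lemma auxE_mem (p : ℝ × ℝ) : auxE p ∈ ball (0 : EuclideanSpace ℝ (Fin 2)) 1 ↔ p ∈ auxD := by
  rw [mem_ball_zero_iff, auxE_norm, Real.sqrt_lt' one_pos, one_pow]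
  rfl

lemma aux_change (r : ℝ) (hr : 0 < r) (F : EuclideanSpace ℝ (Fin 2) → ℝ) :
    ∫ y in ball (0 : EuclideanSpace ℝ (Fin 2)) r, F y = r ^ 2 * ∫ p in auxD, F (r • auxE p) := by
  have h1 := auxE_mp.setIntegral_preimage_emb auxE_me (fun y => F (r • y)) (ball 0 1)
  have h2 : auxE ⁻¹' (ball 0 1) = auxD := by ext p; exact auxE_mem p
  rw [h2] at h1
  rw [h1, Measure.setIntegral_comp_smul_of_pos _ _ _ hr, smul_unitBall_of_pos hr]
  simp
  field_simp

lemma aux_opnorm (L : EuclideanSpace ℝ (Fin 2) →L[ℝ] ℝ) :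
    ‖L‖ ^ 2 = L (auxE (1, 0)) ^ 2 + L (auxE (0, 1)) ^ 2 := by
  obtain ⟨v, rfl⟩ := (InnerProductSpace.toDual ℝ (EuclideanSpace ℝ (Fin 2))).surjective L
  rw [LinearIsometryEquiv.norm_map, EuclideanSpace.norm_sq_eq]
  simp [auxE, Fin.sum_univ_two, PiLp.inner_apply]

theorem local_sharp_inequality_disk (r b a : ℝ) (hr : 0 < r)
    (ha : π * r ^ 2 * Real.exp (2 * b) < a)
    (w : EuclideanSpace ℝ (Fin 2) → ℝ)
    (hw : ContDiffOn ℝ 1 w (closedBall 0 r))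
    (hbdry : ∀ y ∈ sphere (0 : EuclideanSpace ℝ (Fin 2)) r, w y = b)
    (hconstraint : (∫ y in ball (0 : EuclideanSpace ℝ (Fin 2)) r,
      Real.exp (2 * w y)) = a) :
    4 * π * (Real.log (a * Real.exp (-(2 * b)) / (π * r ^ 2)) +
        π * r ^ 2 * Real.exp (2 * b) / a - 1) ≤
      ∫ y in ball (0 : EuclideanSpace ℝ (Fin 2)) r, ‖fderiv ℝ w y‖ ^ 2 := by
  have hpr : 0 < π * r ^ 2 := by positivity
  have ha0 : 0 < a := lt_trans (by positivity) ha
  set c : ℝ := a * Real.exp (-(2 * b)) / (π * r ^ 2) with hc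
  have hee : exp (2 * b) * exp (-(2 * b)) = 1 := by rw [← exp_add]; simp
  have hc1 : 1 < c := by
    rw [hc, one_lt_div hpr]
    calc π * r ^ 2 = π * r ^ 2 * exp (2 * b) * exp (-(2 * b)) := by
          rw [mul_assoc, hee, mul_one]
      _ < _ := mul_lt_mul_of_pos_right ha (exp_pos _)
  -- retraction
  set u : ℝ × ℝ → ℝ := fun p => w ((r / max 1 ‖auxE p‖) • auxE p) - b with hu
  have hin : ∀ p, (r / max 1 ‖auxE p‖) • auxE p ∈ closedBall (0 : EuclideanSpace ℝ (Fin 2)) r := by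
    intro p
    have h1 : 0 < max 1 ‖auxE p‖ := lt_of_lt_of_le one_pos (le_max_left _ _)
    rw [mem_closedBall_zero_iff, norm_smul, Real.norm_eq_abs, abs_of_pos (by positivity),
      div_mul_eq_mul_div, div_le_iff₀ h1]
    exact mul_le_mul_of_nonneg_left (le_max_right _ _) hr.le
  have huc : Continuous u := by
    have hE := auxE_cont
    refine Continuous.sub (hw.continuousOn.comp_continuous ?_ hin) continuous_const
    have hmx : Continuous fun p => max 1 ‖auxE p‖ := continuous_const.max hE.norm
    refine Continuous.smul (Continuous.div continuous_const hmx ?_) hE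
    intro p
    exact (lt_of_lt_of_le one_pos (le_max_left _ _)).ne'
  have huD : ∀ p ∈ auxD, u p = w (r • auxE p) - b := by
    intro p hp
    have h1 := (auxE_mem p).2 hp
    rw [mem_ball_zero_iff] at h1
    simp only [hu]
    rw [max_eq_left h1.le, div_one]
  have hDopen : IsOpen auxD := isOpen_lt (by fun_prop) (by fun_prop)
  have hball : ∀ p ∈ auxD, r • auxE p ∈ ball (0 : EuclideanSpace ℝ (Fin 2)) r := by
    intro p hp
    have h1 := (auxE_mem p).2 hp
    rw [mem_ball_zero_iff] at h1 ⊢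
    rw [norm_smul, Real.norm_eq_abs, abs_of_pos hr]
    nlinarith
  have hnhds : ∀ y ∈ ball (0 : EuclideanSpace ℝ (Fin 2)) r, closedBall 0 r ∈ nhds y := fun y hy =>
    Filter.mem_of_superset (isOpen_ball.mem_nhds hy) ball_subset_closedBall
  have hwd : ∀ y ∈ ball (0 : EuclideanSpace ℝ (Fin 2)) r, HasFDerivAt w (fderiv ℝ w y) y := by
    intro y hy
    exact ((hw.differentiableOn one_ne_zero).differentiableAt (hnhds y hy)).hasFDerivAt
  obtain ⟨C, hC⟩ : ∃ C, ∀ y ∈ ball (0 : EuclideanSpace ℝ (Fin 2)) r, ‖fderiv ℝ w y‖ ≤ C := by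
    have huq : UniqueDiffOn ℝ (closedBall (0 : EuclideanSpace ℝ (Fin 2)) r) := by
      apply uniqueDiffOn_convex (convex_closedBall _ _)
      rw [interior_closedBall _ hr.ne']
      exact ⟨0, mem_ball_self hr⟩
    obtain ⟨C, hC⟩ := (isCompact_closedBall (0 : EuclideanSpace ℝ (Fin 2)) r).exists_bound_of_continuousOn
      (hw.continuousOn_fderivWithin huq le_rfl)
    refine ⟨C, fun y hy => ?_⟩
    have := hC y (ball_subset_closedBall hy)
    rwa [fderivWithin_of_mem_nhds (hnhds y hy)] at this
  have hC0 : 0 ≤ C := (norm_nonneg _).trans (hC 0 (mem_ball_self hr))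
  set pd : ℝ × ℝ → ℝ × ℝ → ℝ := fun v => auxD.indicator
    (fun p => r * fderiv ℝ w (r • auxE p) (auxE v)) with hpd
  have pdm : ∀ v, Measurable (pd v) := by
    intro v
    apply Measurable.indicator _ auxD_meas
    apply Measurable.const_mul
    have h1 : Measurable (fun p => r • auxE p) := (auxE_cont.const_smul r).measurable
    exact (measurable_fderiv_apply_const ℝ w (auxE v)).comp h1
  have pdb : ∀ v, ‖auxE v‖ = 1 → ∀ p, |pd v p| ≤ r * C := by
    intro v hv p
    by_cases hp : p ∈ auxD
    · simp only [hpd]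
      rw [indicator_of_mem hp, abs_mul, abs_of_pos hr]
      apply mul_le_mul_of_nonneg_left _ hr.le
      have h1 := (fderiv ℝ w (r • auxE p)).le_opNorm (auxE v)
      rw [hv, mul_one, Real.norm_eq_abs] at h1
      exact h1.trans (hC _ (hball p hp))
    · simp only [hpd]
      rw [indicator_of_notMem hp, abs_zero]; positivity
  have n1 : ‖auxE (1, 0)‖ = 1 := by rw [auxE_norm]; simp
  have n2 : ‖auxE (0, 1)‖ = 1 := by rw [auxE_norm]; simp
  have lin : ∀ x y : ℝ, auxE (x, y) = x • auxE (1, 0) + y • auxE (0, 1) := by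
    intro x y
    ext i; fin_cases i <;> simp [auxE]
  have hxd : ∀ x y, (x, y) ∈ auxD → HasDerivAt (fun x => u (x, y)) (pd (1, 0) (x, y)) x := by
    intro x y hp
    have hev : (fun x => u (x, y)) =ᶠ[nhds x] fun x => w (r • auxE (x, y)) - b := by
      have : (fun x : ℝ => (x, y)) ⁻¹' auxD ∈ nhds x :=
        (hDopen.preimage (by fun_prop)).mem_nhds hp
      filter_upwards [this] with z hz using huD _ hz
    refine HasDerivAt.congr_of_eventuallyEq ?_ hev
    have hcurve : HasDerivAt (fun x => r • auxE (x, y)) (r • auxE (1, 0)) x := by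
      simp only [lin _ y]
      have := ((((hasDerivAt_id x).smul_const (auxE (1, 0))).add_const
        (y • auxE (0, 1))).const_smul r)
      rw [one_smul] at this
      exact this
    have h := ((hwd _ (hball _ hp)).comp_hasDerivAt x hcurve).sub_const b
    refine h.congr_deriv ?_
    simp only [hpd]
    rw [indicator_of_mem hp]; simp
  have hyd : ∀ x y, (x, y) ∈ auxD → HasDerivAt (fun y => u (x, y)) (pd (0, 1) (x, y)) y := by
    intro x y hp
    have hev : (fun y => u (x, y)) =ᶠ[nhds y] fun y => w (r • auxE (x, y)) - b := by
      have : (fun y : ℝ => (x, y)) ⁻¹' auxD ∈ nhds y :=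
        (hDopen.preimage (by fun_prop)).mem_nhds hp
      filter_upwards [this] with z hz using huD _ hz
    refine HasDerivAt.congr_of_eventuallyEq ?_ hev
    have hcurve : HasDerivAt (fun y => r • auxE (x, y)) (r • auxE (0, 1)) y := by
      simp only [lin x _]
      have := ((((hasDerivAt_id y).smul_const (auxE (0, 1))).const_add
        (x • auxE (1, 0))).const_smul r)
      rw [one_smul] at this
      exact this
    have h := ((hwd _ (hball _ hp)).comp_hasDerivAt y hcurve).sub_const b
    refine h.congr_deriv ?_
    simp only [hpd]
    rw [indicator_of_mem hp]; simp
  have hu0 : ∀ x y, x ^ 2 + y ^ 2 = 1 → u (x, y) = 0 := by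
    intro x y h
    have h1 : ‖auxE (x, y)‖ = 1 := by rw [auxE_norm]; simp [h]
    simp only [hu]
    rw [h1, max_self, div_one, hbdry, sub_self]
    rw [mem_sphere_zero_iff_norm, norm_smul, h1, Real.norm_eq_abs, abs_of_pos hr, mul_one]
  have hmass : ∫ p in auxD, exp (2 * u p) = π * (1 + (c - 1)) := by
    rw [aux_change r hr] at hconstraint
    have h1 : ∫ p in auxD, exp (2 * u p) =
        ∫ p in auxD, exp (-(2 * b)) * exp (2 * w (r • auxE p)) := by
      apply setIntegral_congr_fun auxD_meas
      intro p hp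
      simp only
      rw [huD p hp, ← exp_add]; congr 1; ring
    rw [h1, integral_const_mul, hc, ← hconstraint]
    field_simp
    ring
  have core := aux_core u (pd (1, 0)) (pd (0, 1)) (r * C) (c - 1) (by linarith) huc (pdm _) (pdm _)
    (pdb _ n1) (pdb _ n2) hxd hyd hu0 hmass
  rw [aux_change r hr, ← integral_const_mul]
  rw [← integral_add (aux_bdd_int _ (pdm _) _ (pdb _ n1)) (aux_bdd_int _ (pdm _) _ (pdb _ n2))]
    at core
  have e1 : ∫ p in auxD, r ^ 2 * ‖fderiv ℝ w (r • auxE p)‖ ^ 2 =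
      ∫ p in auxD, (pd (1, 0) p ^ 2 + pd (0, 1) p ^ 2) := by
    apply setIntegral_congr_fun auxD_meas
    intro p hp
    simp only [hpd]
    rw [indicator_of_mem hp, indicator_of_mem hp, aux_opnorm]; ring
  rw [e1]
  have e2 : π * r ^ 2 * exp (2 * b) / a = 1 / c := by
    rw [hc, exp_neg]; field_simp
  rw [e2]
  have e3 : 1 + (c - 1) = c := by ring
  rwa [e3] at core
end

section
/- Let r > 0, b ∈ ℝ, and B_r(0) ⊂ ℝ² the open disk of radius r centered at the origin. For every a > π r² e^{2b} and every ε > 0 there exists a C¹ function w on the closed disk with w = b on ∂B_r(0) and ∫_{B_r(0)} e^{2w(y)} dy = a, such that ∫_{B_r(0)} |∇w(y)|² dy < 4π · ( ln( a e^{−2b}/(π r²) ) + (π r² e^{2b})/a − 1 ) + ε. Hence the constant 4π·( ln(a e^{−2b}/(π r²)) + π r² e^{2b}/a − 1 ) is exactly the infimum of the Dirichlet energy over this class. -/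
open MeasureTheory Real Set Metric

lemma radial_integral (r : ℝ) (hr : 0 < r) (f : ℝ → ℝ) :
    (∫ y in ball (0 : EuclideanSpace ℝ (Fin 2)) r, f ‖y‖) = 2 * π * ∫ t in (0:ℝ)..r, t * f t := by
  have h1 : (∫ y in ball (0 : EuclideanSpace ℝ (Fin 2)) r, f ‖y‖)
      = ∫ y : EuclideanSpace ℝ (Fin 2), (Iio r).indicator f ‖y‖ := by
    rw [← integral_indicator measurableSet_ball]
    congr 1
    ext y
    simp [indicator]
  rw [h1, integral_fun_norm_addHaar (volume : Measure (EuclideanSpace ℝ (Fin 2)))]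
  have h2 : (volume : Measure (EuclideanSpace ℝ (Fin 2))).real (ball 0 1) = π := by
    rw [Measure.real, EuclideanSpace.volume_ball_fin_two]
    simp [Real.pi_pos.le]
  rw [h2, intervalIntegral.integral_of_le hr.le, integral_Ioc_eq_integral_Ioo]
  have h3 : (∫ t in Ioi (0:ℝ), t ^ (Module.finrank ℝ (EuclideanSpace ℝ (Fin 2)) - 1) • (Iio r).indicator f t)
      = ∫ t in Ioo 0 r, t * f t := by
    rw [← integral_indicator measurableSet_Ioi, ← integral_indicator measurableSet_Ioo]
    congr 1
    ext t
    by_cases h : 0 < t <;> by_cases h' : t < r <;> simp [indicator, h, h']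
  rw [h3]
  simp
  ring

lemma grad_norm (c K : ℝ) (hc : 0 < c) (y : EuclideanSpace ℝ (Fin 2)) :
    ‖fderiv ℝ (fun y : EuclideanSpace ℝ (Fin 2) => K - Real.log (c + ‖y‖ ^ 2)) y‖ ^ 2
      = 4 * ‖y‖ ^ 2 / (c + ‖y‖ ^ 2) ^ 2 := by
  have hp : 0 < c + ‖y‖ ^ 2 := by positivity
  have h := ((((hasStrictFDerivAt_norm_sq y).hasFDerivAt.const_add c).log hp.ne').const_sub K).fderiv
  rw [h, norm_neg, norm_smul, ← Nat.cast_smul_eq_nsmul ℝ, norm_smul, innerSL_apply_norm]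
  rw [Real.norm_of_nonneg (inv_nonneg.2 hp.le)]
  simp
  field_simp
  norm_num

theorem local_sharp_inequality_disk_sharp (r b a : ℝ) (hr : 0 < r)
    (ha : π * r ^ 2 * Real.exp (2 * b) < a) (ε : ℝ) (hε : 0 < ε) :
    ∃ w : EuclideanSpace ℝ (Fin 2) → ℝ,
      ContDiffOn ℝ 1 w (closedBall 0 r) ∧
      (∀ y ∈ sphere (0 : EuclideanSpace ℝ (Fin 2)) r, w y = b) ∧
      (∫ y in ball (0 : EuclideanSpace ℝ (Fin 2)) r, Real.exp (2 * w y)) = a ∧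
      (∫ y in ball (0 : EuclideanSpace ℝ (Fin 2)) r, ‖fderiv ℝ w y‖ ^ 2) <
        4 * π * (Real.log (a * Real.exp (-(2 * b)) / (π * r ^ 2)) +
          π * r ^ 2 * Real.exp (2 * b) / a - 1) + ε := by
  obtain ⟨E, hE⟩ : ∃ E, E = Real.exp (2 * b) := ⟨_, rfl⟩
  have hEpos : 0 < E := hE ▸ Real.exp_pos _
  have hπ := Real.pi_pos
  rw [← hE] at ha
  have hD : 0 < a - π * r ^ 2 * E := by linarith
  have hapos : 0 < a := lt_trans (by positivity) ha
  obtain ⟨c, hcdef⟩ : ∃ c, c = π * r ^ 4 * E / (a - π * r ^ 2 * E) := ⟨_, rfl⟩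
  have hc : 0 < c := by rw [hcdef]; positivity
  have hrel : c * a = π * r ^ 2 * E * (c + r ^ 2) := by
    have : c * (a - π * r ^ 2 * E) = π * r ^ 4 * E := by
      rw [hcdef]; field_simp
    linarith
  have hpos : ∀ t : ℝ, 0 < c + t ^ 2 := fun t => by positivity
  have hC := hpos r
  have hder : ∀ t : ℝ, HasDerivAt (fun t : ℝ => c + t ^ 2) (2 * t) t := fun t => by
    simpa using (hasDerivAt_pow 2 t).const_add c
  refine ⟨fun y => (b + Real.log (c + r ^ 2)) - Real.log (c + ‖y‖ ^ 2), ?_, ?_, ?_, ?_⟩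
  · apply ContDiff.contDiffOn
    exact contDiff_const.sub ((contDiff_const.add (contDiff_norm_sq ℝ)).log
      (fun y => (hpos ‖y‖).ne'))
  · intro y hy
    have : ‖y‖ = r := by simpa using hy
    simp [this]
  · have h1 : ∀ y : EuclideanSpace ℝ (Fin 2),
        Real.exp (2 * ((b + Real.log (c + r ^ 2)) - Real.log (c + ‖y‖ ^ 2)))
        = (fun t : ℝ => E * (c + r ^ 2) ^ 2 / (c + t ^ 2) ^ 2) ‖y‖ := by
      intro y
      have e : 2 * ((b + Real.log (c + r ^ 2)) - Real.log (c + ‖y‖ ^ 2))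
        = 2 * b + (Real.log (c + r ^ 2) + Real.log (c + r ^ 2))
          - (Real.log (c + ‖y‖ ^ 2) + Real.log (c + ‖y‖ ^ 2)) := by ring
      rw [e, Real.exp_sub, Real.exp_add, Real.exp_add, Real.exp_add, Real.exp_log hC,
        Real.exp_log (hpos _), ← hE]
      ring
    simp_rw [h1]
    rw [radial_integral r hr (fun t : ℝ => E * (c + r ^ 2) ^ 2 / (c + t ^ 2) ^ 2)]
    have h2 : (∫ t in (0:ℝ)..r, t * (E * (c + r ^ 2) ^ 2 / (c + t ^ 2) ^ 2))
        = -(E * (c + r ^ 2) ^ 2 / 2) * (c + r ^ 2)⁻¹ - -(E * (c + r ^ 2) ^ 2 / 2) * (c + 0 ^ 2)⁻¹ := by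
      refine intervalIntegral.integral_eq_sub_of_hasDerivAt
        (f := fun t : ℝ => -(E * (c + r ^ 2) ^ 2 / 2) * (c + t ^ 2)⁻¹) ?_ ?_
      · intro t _
        refine (((hder t).fun_inv (hpos t).ne').const_mul _).congr_deriv ?_
        ring
      · apply Continuous.intervalIntegrable
        refine continuous_id.mul (continuous_const.div (by fun_prop) ?_)
        intro t
        exact pow_ne_zero _ (hpos t).ne'
    rw [h2]
    have h3 : 2 * π * (-(E * (c + r ^ 2) ^ 2 / 2) * (c + r ^ 2)⁻¹ - -(E * (c + r ^ 2) ^ 2 / 2) * (c + 0 ^ 2)⁻¹)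
        = π * r ^ 2 * E * (c + r ^ 2) / c := by
      field_simp
      ring
    rw [h3, ← hrel]
    field_simp
  · simp_rw [grad_norm c _ hc]
    have h1 := radial_integral r hr (fun t : ℝ => 4 * t ^ 2 / (c + t ^ 2) ^ 2)
    have h2 : (∫ t in (0:ℝ)..r, t * (4 * t ^ 2 / (c + t ^ 2) ^ 2))
        = (2 * Real.log (c + r ^ 2) + 2 * c * (c + r ^ 2)⁻¹)
          - (2 * Real.log (c + 0 ^ 2) + 2 * c * (c + 0 ^ 2)⁻¹) := by
      refine intervalIntegral.integral_eq_sub_of_hasDerivAt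
        (f := fun t : ℝ => 2 * Real.log (c + t ^ 2) + 2 * c * (c + t ^ 2)⁻¹) ?_ ?_
      · intro t _
        refine ((((hder t).log (hpos t).ne').const_mul 2).add
          (((hder t).fun_inv (hpos t).ne').const_mul (2 * c))).congr_deriv ?_
        have := (hpos t).ne'
        field_simp
        ring
      · apply Continuous.intervalIntegrable
        refine continuous_id.mul (Continuous.div (by fun_prop) (by fun_prop) ?_)
        intro t
        exact pow_ne_zero _ (hpos t).ne'
    rw [h1, h2, Real.exp_neg, ← hE]
    have h3 : a * E⁻¹ / (π * r ^ 2) = (c + r ^ 2) / c := by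
      field_simp
      linarith
    have h4 : π * r ^ 2 * E / a = c * (c + r ^ 2)⁻¹ := by
      field_simp
      linarith
    rw [h3, h4, Real.log_div hC.ne' hc.ne']
    have h5 : 2 * c * (c + 0 ^ 2)⁻¹ = 2 := by
      field_simp
      simp
    rw [h5]
    simp only [ne_eq, OfNat.ofNat_ne_zero, not_false_eq_true, zero_pow, add_zero]
    linarith
end
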